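/- arXiv:2305.12615 — 2 statements merged into one kernel-verified Lean document; each statement's English description precedes it below -/
import Mathlib

section
/- Under the hypotheses (H1)–(H3) on the pressure P, with k(ρ) = ∫₀^ρ √(P'(y))/y dy and e(ρ) = ∫₀^ρ P(s)/s² ds, set θ(ρ) = (γ₁−1)/2 and γ(ρ) = γ₁ for ρ ≤ ρ_*, and θ(ρ) = (γ₂−1)/2 and γ(ρ) = γ₂ for ρ > ρ_*. Then there exists a function η̂ : (0,∞)×ℝ → ℝ of class C² such that: (a) η̂(ρ,u) = ½ρu² + ρe(ρ) whenever u ≥ k(ρ), and η̂(ρ,u) = −½ρu² − ρe(ρ) whenever u ≤ −k(ρ); (b) ∂²η̂/∂ρ²(ρ,u) = k'(ρ)² ∂²η̂/∂u²(ρ,u) for all (ρ,u) with |u| ≤ k(ρ); (c) there is a constant C > 0 with |η̂(ρ,u)| ≤ C(ρu² + ρ^{γ(ρ)}), |∂η̂/∂ρ(ρ,u)| ≤ C(u² + ρ^{2θ(ρ)}), and |∂η̂/∂u(ρ,u)| ≤ C(ρ|u| + ρ^{θ(ρ)+1}) for all (ρ,u) ∈ (0,∞)×ℝ. Moreover η̂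 is the unique C² function satisfying (a) and (b) together with the derivative bounds in (c). -/
open Set MeasureTheory Filter

/-- The conditions (a), (b), (c) of the special entropy constructed by solving the
Goursat problem for the entropy equation. -/
def IsSpecialEntropy (ρstar γ₁ γ₂ : ℝ) (k e : ℝ → ℝ) (η : ℝ × ℝ → ℝ) : Prop :=
  ContDiffOn ℝ 2 η (Ioi 0 ×ˢ (univ : Set ℝ)) ∧
  (∀ ρ : ℝ, 0 < ρ → ∀ u : ℝ,
    (k ρ ≤ u → η (ρ, u) = 1/2 * ρ * u ^ 2 + ρ * e ρ) ∧
    (u ≤ -k ρ → η (ρ, u) = -(1/2 * ρ * u ^ 2 + ρ * e ρ))) ∧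
  (∀ ρ : ℝ, 0 < ρ → ∀ u : ℝ, |u| ≤ k ρ →
    deriv (deriv (fun r => η (r, u))) ρ
      = deriv k ρ ^ 2 * deriv (deriv (fun v => η (ρ, v))) u) ∧
  (∃ C : ℝ, 0 < C ∧ ∀ ρ : ℝ, 0 < ρ → ∀ u : ℝ,
    |η (ρ, u)| ≤ C * (ρ * u ^ 2 + ρ ^ (if ρ ≤ ρstar then γ₁ else γ₂)) ∧
    |deriv (fun r => η (r, u)) ρ|
      ≤ C * (u ^ 2 + ρ ^ (2 * (if ρ ≤ ρstar then (γ₁ - 1)/2 else (γ₂ - 1)/2))) ∧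
    |deriv (fun v => η (ρ, v)) u|
      ≤ C * (ρ * |u| + ρ ^ ((if ρ ≤ ρstar then (γ₁ - 1)/2 else (γ₂ - 1)/2) + 1)))

/-- Abstract data extracted from the pressure law: `k` with its derivatives `k1, k2`,
the integrating factor `μ = k1 ^ (-1/2)` and a weight `φ`, comparable to `k`. -/
structure KData (k k1 k2 μ μ1 φ φ1 : ℝ → ℝ) (q M : ℝ) : Prop where
  k0 : k 0 = 0
  kcont : ContinuousOn k (Ici 0)
  kd : ∀ ρ, 0 < ρ → HasDerivAt k (k1 ρ) ρ
  k1d : ∀ ρ, 0 < ρ → HasDerivAt k1 (k2 ρ) ρ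
  k1pos : ∀ ρ, 0 < ρ → 0 < k1 ρ
  μ0 : μ 0 = 0
  μcont : ContinuousOn μ (Ici 0)
  μpos : ∀ ρ, 0 < ρ → 0 < μ ρ
  μd : ∀ ρ, 0 < ρ → HasDerivAt μ (μ1 ρ) ρ
  mu1cont : ContinuousOn μ1 (Ioi 0)
  mu1int : ∀ ρ, 0 < ρ → IntervalIntegrable μ1 volume 0 ρ
  rel : ∀ ρ, 0 < ρ → μ ρ ^ 2 * k1 ρ = 1
  rel2 : ∀ ρ, 0 < ρ → 2 * μ1 ρ * k1 ρ + μ ρ * k2 ρ = 0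
  φ0 : φ 0 = 0
  φcont : ContinuousOn φ (Ici 0)
  φpos : ∀ ρ, 0 < ρ → 0 < φ ρ
  φd : ∀ ρ, 0 < ρ → HasDerivAt φ (φ1 ρ) ρ
  φle : ∀ ρ, 0 < ρ → φ ρ ≤ k ρ
  leφ : ∀ ρ, 0 < ρ → k ρ ≤ M * φ ρ
  k1le : ∀ ρ, 0 < ρ → ρ * k1 ρ ≤ M * φ ρ
  mu1abs : ∀ ρ, 0 < ρ → (∫ s in (0:ℝ)..ρ, |μ1 s|) ≤ M * μ ρ
  key : ∀ ρ, 0 < ρ → |μ1 ρ| * φ ρ ≤ q * (μ1 ρ * φ ρ + μ ρ * φ1 ρ)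
  q0 : 0 < q
  q1 : q < 1
  M0 : 0 < M

namespace KData

variable {k k1 k2 μ μ1 φ φ1 : ℝ → ℝ} {q M : ℝ}

theorem kmono (h : KData k k1 k2 μ μ1 φ φ1 q M) : StrictMonoOn k (Ici 0) := by
  apply strictMonoOn_of_deriv_pos (convex_Ici 0) h.kcont
  intro x hx
  rw [interior_Ici] at hx
  rw [(h.kd x hx).deriv]
  exact h.k1pos x hx

theorem kle (h : KData k k1 k2 μ μ1 φ φ1 q M) {s ρ : ℝ} (hs : 0 ≤ s) (hsρ : s ≤ ρ) :
    k s ≤ k ρ :=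
  h.kmono.monotoneOn hs (hs.trans hsρ) hsρ

theorem kpos (h : KData k k1 k2 μ μ1 φ φ1 q M) {ρ : ℝ} (hρ : 0 < ρ) : 0 < k ρ := by
  have := h.kmono (self_mem_Ici) hρ.le hρ
  rwa [h.k0] at this

theorem φint (h : KData k k1 k2 μ μ1 φ φ1 q M) {ρ : ℝ} (hρ : 0 < ρ) :
    IntervalIntegrable (fun s => |μ1 s| * φ s) volume 0 ρ := by
  apply (h.mu1int ρ hρ).abs.mul_continuousOn
  rw [uIcc_of_le hρ.le]
  exact h.φcont.mono Icc_subset_Ici_self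

theorem φkey (h : KData k k1 k2 μ μ1 φ φ1 q M) {ρ : ℝ} (hρ : 0 < ρ) :
    (∫ s in (0:ℝ)..ρ, |μ1 s| * φ s) ≤ q * (μ ρ * φ ρ) := by
  have := intervalIntegral.integral_le_sub_of_hasDeriv_right_of_le (a := 0) (b := ρ)
    (g := fun s => q * (μ s * φ s)) (g' := fun s => q * (μ1 s * φ s + μ s * φ1 s))
    (φ := fun s => |μ1 s| * φ s) hρ.le
    (continuousOn_const.mul ((h.μcont.mul h.φcont).mono Icc_subset_Ici_self))
    (fun x hx => (((h.μd x hx.1).mul (h.φd x hx.1)).const_mul q).hasDerivWithinAt)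
    ((intervalIntegrable_iff_integrableOn_Icc_of_le hρ.le).1 (h.φint hρ))
    (fun x hx => h.key x hx.1)
  simpa [h.μ0] using this

/-- Decay lemma along characteristics. -/
theorem decay (h : KData k k1 k2 μ μ1 φ φ1 q M) {ρ N : ℝ} (hρ : 0 < ρ) (y y' : ℝ → ℝ)
    (hN : 0 ≤ N)
    (hy : ∀ s, 0 < s → s ≤ ρ → HasDerivAt y (y' s) s)
    (hb : ∀ s, 0 < s → s ≤ ρ → |y' s| ≤ |μ1 s| * (N * φ s))
    (h0 : Tendsto y (nhdsWithin 0 (Ioi 0)) (nhds 0)) :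
    |y ρ| ≤ q * N * (μ ρ * φ ρ) := by
  have hg0 : Tendsto (fun s => q * N * (μ s * φ s)) (nhdsWithin 0 (Ioi 0)) (nhds 0) := by
    have h1 : ContinuousWithinAt (fun s => q * N * (μ s * φ s)) (Ici 0) 0 :=
      (continuousOn_const.mul (h.μcont.mul h.φcont)) 0 self_mem_Ici
    have h2 := (h1.mono Ioi_subset_Ici_self).tendsto
    simpa [h.μ0] using h2
  have hgd : ∀ s, 0 < s → HasDerivAt (fun s => q * N * (μ s * φ s))
      (q * N * (μ1 s * φ s + μ s * φ1 s)) s := fun s hs =>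
    ((h.μd s hs).mul (h.φd s hs)).const_mul _
  have main : ∀ z z' : ℝ → ℝ, (∀ s, 0 < s → s ≤ ρ → HasDerivAt z (z' s) s) →
      (∀ s, 0 < s → s ≤ ρ → |z' s| ≤ |μ1 s| * (N * φ s)) →
      Tendsto z (nhdsWithin 0 (Ioi 0)) (nhds 0) → z ρ ≤ q * N * (μ ρ * φ ρ) := by
    intro z z' hz hzb hz0
    have hd : ∀ s, 0 < s → s ≤ ρ → HasDerivAt (fun s => q * N * (μ s * φ s) - z s)
      (q * N * (μ1 s * φ s + μ s * φ1 s) - z' s) s := fun s hs hsr => (hgd s hs).sub (hz s hs hsr)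
    have mono : MonotoneOn (fun s => q * N * (μ s * φ s) - z s) (Ioc 0 ρ) := by
      apply monotoneOn_of_deriv_nonneg (convex_Ioc 0 ρ)
      · intro s hs
        exact (hd s hs.1 hs.2).continuousAt.continuousWithinAt
      · intro s hs
        rw [interior_Ioc] at hs
        exact (hd s hs.1 hs.2.le).differentiableAt.differentiableWithinAt
      · intro s hs
        rw [interior_Ioc] at hs
        rw [(hd s hs.1 hs.2.le).deriv]
        have h1 := (abs_le.1 (hzb s hs.1 hs.2.le)).2
        have h2 := mul_le_mul_of_nonneg_left (h.key s hs.1) hN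
        nlinarith
    have lim := hg0.sub hz0
    rw [sub_zero] at lim
    have : (0:ℝ) ≤ q * N * (μ ρ * φ ρ) - z ρ := by
      apply le_of_tendsto lim
      filter_upwards [Ioc_mem_nhdsGT hρ] with s hs
      exact mono hs ⟨hρ, le_rfl⟩ hs.2
    linarith
  rw [abs_le]
  constructor
  · have := main (fun s => - y s) (fun s => - y' s) (fun s hs hsr => (hy s hs hsr).neg)
      (fun s hs hsr => by rw [abs_neg]; exact hb s hs hsr) (by simpa using h0.neg)
    linarith
  · exact main y y' hy hb h0

end KData

/-- The half plane `ρ > 0`. -/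
abbrev HP : Set (ℝ × ℝ) := Ioi (0:ℝ) ×ˢ (univ : Set ℝ)

theorem isOpen_HP : IsOpen HP := isOpen_Ioi.prod isOpen_univ

theorem mem_HP {ρ u : ℝ} : (ρ, u) ∈ HP ↔ 0 < ρ := by simp [HP]

/-- Continuous functions on the half plane at bounded distance from `|u|`. -/
structure Good (φ : ℝ → ℝ) (C : ℝ) (f : ℝ → ℝ → ℝ) : Prop where
  cont : ContinuousOn (fun p : ℝ × ℝ => f p.1 p.2) HP
  bd : ∀ s, 0 < s → ∀ v, |f s v - (|v|)| ≤ C * φ s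
  C0 : 0 ≤ C

namespace Good
variable {k k1 k2 μ μ1 φ φ1 : ℝ → ℝ} {q M C : ℝ} {f : ℝ → ℝ → ℝ}

theorem abs_le (g : Good φ C f) {s : ℝ} (hs : 0 < s) (v : ℝ) : |f s v| ≤ |v| + C * φ s := by
  have h1 := g.bd s hs v
  have h2 := abs_sub_abs_le_abs_sub (f s v) |v|
  rw [abs_abs] at h2
  linarith

theorem abs_le' (g : Good φ C f) (h : KData k k1 k2 μ μ1 φ φ1 q M) {s R : ℝ} (hs : 0 < s)
    (hR : s ≤ R) (v : ℝ) : |f s v| ≤ |v| + C * k R := by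
  have h1 := g.abs_le hs v
  have h2 := mul_le_mul_of_nonneg_left ((h.φle s hs).trans (h.kle hs.le hR)) g.C0
  linarith

theorem contAt (g : Good φ C f) {s v : ℝ} (hs : 0 < s) :
    ContinuousAt (fun p : ℝ × ℝ => f p.1 p.2) (s, v) :=
  g.cont.continuousAt (isOpen_HP.mem_nhds (mem_HP.2 hs))

theorem integrand_cont (g : Good φ C f) (h : KData k k1 k2 μ μ1 φ φ1 q M) (c : ℝ) :
    ContinuousOn (fun s => μ1 s * f s (k s - c)) (Ioi 0) := by
  intro s hs
  apply ContinuousAt.continuousWithinAt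
  have h1 : ContinuousAt μ1 s := h.mu1cont.continuousAt (Ioi_mem_nhds hs)
  have h2 : ContinuousAt (fun s => (s, k s - c)) s :=
    continuousAt_id.prodMk ((h.kd s hs).continuousAt.sub continuousAt_const)
  exact h1.mul (ContinuousAt.comp (f := fun s => (s, k s - c)) (g := fun p : ℝ × ℝ => f p.1 p.2) (x := s)
    (g.contAt hs) h2)

theorem integrand_le (g : Good φ C f) (h : KData k k1 k2 μ μ1 φ φ1 q M) {c s R K : ℝ}
    (hs : 0 < s) (hR : s ≤ R) (hc : |c| ≤ K) :
    |μ1 s * f s (k s - c)| ≤ |μ1 s| * (k R + K + C * k R) := by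
  rw [abs_mul]
  apply mul_le_mul_of_nonneg_left _ (abs_nonneg _)
  have h1 := g.abs_le' h hs hR (k s - c)
  have h2 : |k s - c| ≤ k R + K := by
    have := abs_sub (k s) c
    rw [abs_of_pos (h.kpos hs)] at this
    have := h.kle hs.le hR
    linarith
  linarith

theorem integrand_int (g : Good φ C f) (h : KData k k1 k2 μ μ1 φ φ1 q M) (c : ℝ) {ρ : ℝ}
    (hρ : 0 < ρ) : IntervalIntegrable (fun s => μ1 s * f s (k s - c)) volume 0 ρ := by
  have hb : IntervalIntegrable (fun s => |μ1 s| * (k ρ + |c| + C * k ρ)) volume 0 ρ :=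
    (h.mu1int ρ hρ).abs.mul_const _
  apply hb.mono_fun'
  · rw [uIoc_of_le hρ.le]
    exact ((g.integrand_cont h c).mono Ioc_subset_Ioi_self).aestronglyMeasurable measurableSet_Ioc
  · rw [uIoc_of_le hρ.le]
    filter_upwards [ae_restrict_mem measurableSet_Ioc] with s hs
    exact g.integrand_le h hs.1 hs.2 le_rfl

theorem integral_contAt (g : Good φ C f) (h : KData k k1 k2 μ μ1 φ φ1 q M) (c₀ : ℝ) {ρ₀ : ℝ}
    (hρ : 0 < ρ₀) :
    ContinuousAt (fun p : ℝ × ℝ => ∫ s in (0:ℝ)..p.2, μ1 s * f s (k s - p.1)) (c₀, ρ₀) := by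
  have key := intervalIntegral.continuousAt_parametric_primitive_of_dominated
    (F := fun c s => (Ioi (0:ℝ)).indicator (fun s => μ1 s * f s (k s - c)) s)
    (fun s => (Ioi (0:ℝ)).indicator (fun s =>
      |μ1 s| * (k (ρ₀+1) + (|c₀|+1) + C * k (ρ₀+1))) s) (-1) (ρ₀+1) (a₀ := 0) (b₀ := ρ₀) (x₀ := c₀)
    (μ := volume) ?_ ?_ ?_ ?_ ⟨by norm_num, by linarith⟩ ⟨by linarith, by linarith⟩ (by simp)
  · refine key.congr ?_
    have : {p : ℝ × ℝ | 0 < p.2} ∈ nhds (c₀, ρ₀) :=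
      (isOpen_lt continuous_const continuous_snd).mem_nhds hρ
    filter_upwards [this] with p hp
    apply intervalIntegral.integral_congr_ae
    filter_upwards with s hs
    rw [uIoc_of_le (le_of_lt hp)] at hs
    rw [indicator_of_mem (show s ∈ Ioi (0:ℝ) from hs.1)]
  · intro c
    apply AEStronglyMeasurable.mono_measure _ Measure.restrict_le_self
    rw [aestronglyMeasurable_indicator_iff measurableSet_Ioi]
    exact (g.integrand_cont h c).aestronglyMeasurable measurableSet_Ioi
  · have : ∀ᶠ c in nhds c₀, |c| ≤ |c₀| + 1 := by
      have h1 : ContinuousAt (fun c : ℝ => |c|) c₀ := continuous_abs.continuousAt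
      exact (h1.eventually (gt_mem_nhds (by linarith : |c₀| < |c₀|+1))).mono fun _ h => le_of_lt h
    filter_upwards [this] with c hc
    filter_upwards [ae_restrict_mem measurableSet_uIoc] with s hs
    rw [uIoc_of_le (by linarith)] at hs
    by_cases h0 : 0 < s
    · rw [indicator_of_mem (show s ∈ Ioi (0:ℝ) from h0),
        indicator_of_mem (show s ∈ Ioi (0:ℝ) from h0)]
      exact g.integrand_le h h0 hs.2 hc
    · rw [indicator_of_notMem (show s ∉ Ioi (0:ℝ) from h0),
        indicator_of_notMem (show s ∉ Ioi (0:ℝ) from h0)]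
      simp
  · rw [intervalIntegrable_iff_integrableOn_Ioc_of_le (by linarith)]
    rw [integrableOn_indicator_iff measurableSet_Ioi]
    have h1 := ((h.mu1int (ρ₀+1) (by linarith)).abs.mul_const
      (k (ρ₀+1) + (|c₀|+1) + C * k (ρ₀+1)))
    rw [intervalIntegrable_iff_integrableOn_Ioc_of_le (by linarith)] at h1
    exact h1.mono_set fun s hs => ⟨hs.1, hs.2.2⟩
  · filter_upwards with s
    by_cases h0 : 0 < s
    · simp only [indicator_of_mem (show s ∈ Ioi (0:ℝ) from h0)]
      apply continuousAt_const.mul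
      have h2 : ContinuousAt (fun c => (s, k s - c)) c₀ :=
        continuousAt_const.prodMk (continuousAt_const.sub continuousAt_id)
      exact ContinuousAt.comp (f := fun c => (s, k s - c)) (g := fun p : ℝ × ℝ => f p.1 p.2) (x := c₀)
        (g.contAt h0) h2
    · simp only [indicator_of_notMem (show s ∉ Ioi (0:ℝ) from h0)]
      exact continuousAt_const

end Good

namespace KData
variable {k k1 k2 μ μ1 φ φ1 : ℝ → ℝ} {q M C : ℝ} {f f' : ℝ → ℝ → ℝ}

theorem μ_eq (h : KData k k1 k2 μ μ1 φ φ1 q M) {ρ : ℝ} (hρ : 0 < ρ) :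
    (∫ s in (0:ℝ)..ρ, μ1 s) = μ ρ := by
  have := intervalIntegral.integral_eq_sub_of_hasDerivAt_of_le hρ.le
    (h.μcont.mono Icc_subset_Ici_self) (fun x hx => h.μd x hx.1) (h.mu1int ρ hρ)
  rw [this, h.μ0, sub_zero]

theorem res_le (h : KData k k1 k2 μ μ1 φ φ1 q M) (g : Good φ C f) {ρ : ℝ} (hρ : 0 < ρ) (u : ℝ) :
    |(∫ s in (0:ℝ)..ρ, μ1 s * f s (k s - (u + k ρ))) - μ ρ * (|u|)| ≤
      (q * C + M * M) * (μ ρ * φ ρ) := by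
  have e : (∫ s in (0:ℝ)..ρ, μ1 s * f s (k s - (u + k ρ))) - μ ρ * |u| =
      ∫ s in (0:ℝ)..ρ, (μ1 s * f s (k s - (u + k ρ)) - μ1 s * |u|) := by
    rw [intervalIntegral.integral_sub (g.integrand_int h _ hρ) ((h.mu1int ρ hρ).mul_const _),
      intervalIntegral.integral_mul_const, h.μ_eq hρ]
  rw [e]
  have i1 : IntervalIntegrable (fun s => C * (|μ1 s| * φ s) + k ρ * |μ1 s|) volume 0 ρ :=
    ((h.φint hρ).const_mul C).add ((h.mu1int ρ hρ).abs.const_mul _)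
  have b := intervalIntegral.norm_integral_le_of_norm_le (μ := volume)
    (f := fun s => μ1 s * f s (k s - (u + k ρ)) - μ1 s * |u|) hρ.le ?_ i1
  · rw [Real.norm_eq_abs] at b
    refine b.trans ?_
    rw [intervalIntegral.integral_add ((h.φint hρ).const_mul C) ((h.mu1int ρ hρ).abs.const_mul _),
      intervalIntegral.integral_const_mul, intervalIntegral.integral_const_mul]
    have h1 := mul_le_mul_of_nonneg_left (h.φkey hρ) g.C0
    have h2 := mul_le_mul_of_nonneg_left (h.mu1abs ρ hρ) (h.kpos hρ).le
    have h3 := mul_le_mul_of_nonneg_right (h.leφ ρ hρ)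
      (mul_nonneg h.M0.le (h.μpos ρ hρ).le)
    nlinarith
  · filter_upwards with s hs
    rw [← mul_sub, norm_mul, Real.norm_eq_abs, Real.norm_eq_abs]
    have h1 := g.bd s hs.1 (k s - (u + k ρ))
    have h2 : |(|k s - (u + k ρ)| - |u|)| ≤ k ρ := by
      have := abs_abs_sub_abs_le (k s - (u + k ρ)) (-u)
      rw [abs_neg] at this
      refine this.trans ?_
      have e1 := h.kle hs.1.le hs.2
      have e2 := h.kpos hs.1
      rw [abs_le]; constructor <;> linarith
    have h3 : |f s (k s - (u + k ρ)) - (|u|)| ≤ C * φ s + k ρ := by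
      have := abs_add_le (f s (k s - (u + k ρ)) - |k s - (u + k ρ)|) (|k s - (u + k ρ)| - |u|)
      rw [sub_add_sub_cancel] at this
      linarith
    have := mul_le_mul_of_nonneg_left h3 (abs_nonneg (μ1 s))
    linarith

theorem diff_le (h : KData k k1 k2 μ μ1 φ φ1 q M) {C' D : ℝ} (g : Good φ C f) (g' : Good φ C' f')
    (hD : 0 ≤ D) (hd : ∀ s, 0 < s → ∀ v, |f s v - f' s v| ≤ D * φ s)
    {ρ : ℝ} (hρ : 0 < ρ) (c : ℝ) :
    |(∫ s in (0:ℝ)..ρ, μ1 s * f s (k s - c)) - (∫ s in (0:ℝ)..ρ, μ1 s * f' s (k s - c))| ≤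
      q * D * (μ ρ * φ ρ) := by
  rw [← intervalIntegral.integral_sub (g.integrand_int h _ hρ) (g'.integrand_int h _ hρ)]
  have b := intervalIntegral.norm_integral_le_of_norm_le (μ := volume)
    (f := fun s => μ1 s * f s (k s - c) - μ1 s * f' s (k s - c)) hρ.le ?_
    ((h.φint hρ).const_mul D)
  · rw [Real.norm_eq_abs] at b
    refine b.trans ?_
    rw [intervalIntegral.integral_const_mul]
    have h1 := mul_le_mul_of_nonneg_left (h.φkey hρ) hD
    linarith
  · filter_upwards with s hs
    rw [← mul_sub, norm_mul, Real.norm_eq_abs, Real.norm_eq_abs]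
    have := mul_le_mul_of_nonneg_left (hd s hs.1 (k s - c)) (abs_nonneg (μ1 s))
    linarith

/-- Candidate function attached to a bounded continuous correction. -/
noncomputable def FF (φ : ℝ → ℝ) (g : BoundedContinuousFunction (ℝ × ℝ) ℝ) (s v : ℝ) : ℝ :=
  |v| + φ s * g (Real.log s, v)

theorem FF_good (h : KData k k1 k2 μ μ1 φ φ1 q M) (g : BoundedContinuousFunction (ℝ × ℝ) ℝ) :
    Good φ ‖g‖ (FF φ g) where
  cont := by
    intro p hp
    apply ContinuousAt.continuousWithinAt
    have hp' : 0 < p.1 := hp.1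
    unfold FF
    have h1 : ContinuousAt (fun p : ℝ × ℝ => φ p.1) p :=
      ContinuousAt.comp (g := φ) (h.φd p.1 hp').continuousAt continuousAt_fst
    have h2 : ContinuousAt (fun p : ℝ × ℝ => (Real.log p.1, p.2)) p :=
      (continuousAt_fst.log hp'.ne').prodMk continuousAt_snd
    exact continuousAt_snd.abs.add (h1.mul (g.continuous.continuousAt.comp h2))
  bd := by
    intro s hs v
    have := g.norm_coe_le_norm (Real.log s, v)
    simp only [FF, add_sub_cancel_left, abs_mul, abs_of_pos (h.φpos s hs)]
    rw [Real.norm_eq_abs] at this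
    nlinarith [h.φpos s hs]
  C0 := norm_nonneg _

/-- The fixed point map. -/
noncomputable def PsiFun (k μ μ1 φ : ℝ → ℝ) (g : BoundedContinuousFunction (ℝ × ℝ) ℝ)
    (p : ℝ × ℝ) : ℝ :=
  ((∫ s in (0:ℝ)..(Real.exp p.1), μ1 s * FF φ g s (k s - (p.2 + k (Real.exp p.1))))
    / μ (Real.exp p.1) - |p.2|) / φ (Real.exp p.1)

theorem PsiFun_cont (h : KData k k1 k2 μ μ1 φ φ1 q M) (g : BoundedContinuousFunction (ℝ × ℝ) ℝ) :
    Continuous (PsiFun k μ μ1 φ g) := by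
  rw [continuous_iff_continuousAt]
  intro p
  have hρ := Real.exp_pos p.1
  have hexp : ContinuousAt (fun p : ℝ × ℝ => Real.exp p.1) p := by fun_prop
  have hk : ContinuousAt (fun p : ℝ × ℝ => k (Real.exp p.1)) p :=
    ContinuousAt.comp (g := k) (h.kd _ hρ).continuousAt hexp
  have hμ : ContinuousAt (fun p : ℝ × ℝ => μ (Real.exp p.1)) p :=
    ContinuousAt.comp (g := μ) (h.μd _ hρ).continuousAt hexp
  have hφ : ContinuousAt (fun p : ℝ × ℝ => φ (Real.exp p.1)) p :=
    ContinuousAt.comp (g := φ) (h.φd _ hρ).continuousAt hexp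
  have hI := (h.FF_good g).integral_contAt h (p.2 + k (Real.exp p.1)) hρ
  have hI' : ContinuousAt (fun p : ℝ × ℝ => ∫ s in (0:ℝ)..(Real.exp p.1),
      μ1 s * FF φ g s (k s - (p.2 + k (Real.exp p.1)))) p :=
    ContinuousAt.comp (f := fun p : ℝ × ℝ => (p.2 + k (Real.exp p.1), Real.exp p.1)) (x := p) hI
      ((continuousAt_snd.add hk).prodMk hexp)
  exact ((hI'.div hμ (h.μpos _ hρ).ne').sub continuousAt_snd.abs).div hφ (h.φpos _ hρ).ne'

theorem PsiFun_bd (h : KData k k1 k2 μ μ1 φ φ1 q M) (g : BoundedContinuousFunction (ℝ × ℝ) ℝ)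
    (p : ℝ × ℝ) : ‖PsiFun k μ μ1 φ g p‖ ≤ q * ‖g‖ + M * M := by
  have hρ := Real.exp_pos p.1
  have b := h.res_le (h.FF_good g) hρ p.2
  have hμ := h.μpos _ hρ
  have hφ := h.φpos _ hρ
  have e : PsiFun k μ μ1 φ g p =
      ((∫ s in (0:ℝ)..(Real.exp p.1), μ1 s * FF φ g s (k s - (p.2 + k (Real.exp p.1))))
        - μ (Real.exp p.1) * |p.2|) / (μ (Real.exp p.1) * φ (Real.exp p.1)) := by
    unfold PsiFun
    field_simp
  rw [e, Real.norm_eq_abs, abs_div, abs_of_pos (mul_pos hμ hφ), div_le_iff₀ (mul_pos hμ hφ)]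
  exact b

noncomputable def Psi (h : KData k k1 k2 μ μ1 φ φ1 q M)
    (g : BoundedContinuousFunction (ℝ × ℝ) ℝ) : BoundedContinuousFunction (ℝ × ℝ) ℝ :=
  BoundedContinuousFunction.ofNormedAddCommGroup (PsiFun k μ μ1 φ g) (h.PsiFun_cont g)
    (q * ‖g‖ + M * M) (h.PsiFun_bd g)

theorem Psi_contracting (h : KData k k1 k2 μ μ1 φ φ1 q M) :
    ContractingWith (Real.toNNReal q) (Psi h) := by
  refine ⟨by rw [Real.toNNReal_lt_one]; exact h.q1, LipschitzWith.of_dist_le_mul fun g g' => ?_⟩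
  rw [Real.coe_toNNReal q h.q0.le,
    BoundedContinuousFunction.dist_le (mul_nonneg h.q0.le dist_nonneg)]
  intro p
  have hρ := Real.exp_pos p.1
  have hμ := h.μpos _ hρ
  have hφ := h.φpos _ hρ
  have b := h.diff_le (h.FF_good g) (h.FF_good g') (D := dist g g') dist_nonneg (by
    intro s hs v
    have := BoundedContinuousFunction.dist_coe_le_dist (f := g) (g := g') (Real.log s, v)
    rw [Real.dist_eq] at this
    simp only [FF, add_sub_add_left_eq_sub, ← mul_sub, abs_mul, abs_of_pos (h.φpos s hs)]
    nlinarith [h.φpos s hs]) hρ (p.2 + k (Real.exp p.1))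
  rw [Real.dist_eq]
  change |PsiFun k μ μ1 φ g p - PsiFun k μ μ1 φ g' p| ≤ q * dist g g'
  have e : PsiFun k μ μ1 φ g p - PsiFun k μ μ1 φ g' p =
      ((∫ s in (0:ℝ)..(Real.exp p.1), μ1 s * FF φ g s (k s - (p.2 + k (Real.exp p.1)))) -
      (∫ s in (0:ℝ)..(Real.exp p.1), μ1 s * FF φ g' s (k s - (p.2 + k (Real.exp p.1)))))
        / (μ (Real.exp p.1) * φ (Real.exp p.1)) := by
    unfold PsiFun
    field_simp
    ring
  rw [e, abs_div, abs_of_pos (mul_pos hμ hφ), div_le_iff₀ (mul_pos hμ hφ)]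
  exact b

theorem exists_f (h : KData k k1 k2 μ μ1 φ φ1 q M) :
    ∃ (f : ℝ → ℝ → ℝ) (C : ℝ), Good φ C f ∧ ∀ ρ, 0 < ρ → ∀ c,
      μ ρ * f ρ (c - k ρ) = ∫ s in (0:ℝ)..ρ, μ1 s * f s (k s - c) := by
  let g := (ContractingWith.fixedPoint (Psi h) h.Psi_contracting)
  have hg : Psi h g = g := h.Psi_contracting.fixedPoint_isFixedPt
  refine ⟨FF φ g, ‖g‖, h.FF_good g, ?_⟩
  intro ρ hρ c
  have e : g (Real.log ρ, c - k ρ) = PsiFun k μ μ1 φ g (Real.log ρ, c - k ρ) := by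
    conv_lhs => rw [← hg]
    rfl
  unfold FF
  rw [e]
  unfold PsiFun
  simp only [Real.exp_log hρ, sub_add_cancel]
  have hμ := h.μpos _ hρ
  have hφ := h.φpos _ hρ
  field_simp
  unfold FF
  ring_nf

end KData

namespace KData
variable {k k1 k2 μ μ1 φ φ1 : ℝ → ℝ} {q M C : ℝ} {f f' : ℝ → ℝ → ℝ}

theorem char_deriv (h : KData k k1 k2 μ μ1 φ φ1 q M) (g : Good φ C f)
    (he : ∀ ρ, 0 < ρ → ∀ c,
      μ ρ * f ρ (c - k ρ) = ∫ s in (0:ℝ)..ρ, μ1 s * f s (k s - c)) {ρ : ℝ} (hρ : 0 < ρ) (c : ℝ) :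
    HasDerivAt (fun s => μ s * f s (c - k s)) (μ1 ρ * f ρ (k ρ - c)) ρ := by
  have hc := g.integrand_cont h c
  have h1 := intervalIntegral.integral_hasDerivAt_right (g.integrand_int h c hρ)
    (hc.stronglyMeasurableAtFilter isOpen_Ioi ρ hρ) (hc.continuousAt (Ioi_mem_nhds hρ))
  apply h1.congr_of_eventuallyEq
  filter_upwards [Ioi_mem_nhds hρ] with s hs
  exact he s hs c

theorem outer_step (h : KData k k1 k2 μ μ1 φ φ1 q M) (g : Good φ C f)
    (he : ∀ ρ, 0 < ρ → ∀ c,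
      μ ρ * f ρ (c - k ρ) = ∫ s in (0:ℝ)..ρ, μ1 s * f s (k s - c)) {N : ℝ} (hN : 0 ≤ N)
    (hb : ∀ ρ, 0 < ρ → ∀ u, k ρ ≤ u → |f ρ u - (u + ρ * k1 ρ)| ≤ N * φ ρ ∧
      |f ρ (-u) - (u - ρ * k1 ρ)| ≤ N * φ ρ) :
    ∀ ρ, 0 < ρ → ∀ u, k ρ ≤ u → |f ρ u - (u + ρ * k1 ρ)| ≤ (q * N) * φ ρ ∧
      |f ρ (-u) - (u - ρ * k1 ρ)| ≤ (q * N) * φ ρ := by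
  intro ρ hρ u hu
  have lim0 : Tendsto (fun s => μ s * (N * φ s)) (nhdsWithin 0 (Ioi 0)) (nhds 0) := by
    have h1 : ContinuousWithinAt (fun s => μ s * (N * φ s)) (Ici 0) 0 :=
      (h.μcont.mul (continuousOn_const.mul h.φcont)) 0 self_mem_Ici
    have h2 := (h1.mono Ioi_subset_Ici_self).tendsto
    simpa [h.μ0] using h2
  have hμ := h.μpos ρ hρ
  have fin : ∀ x : ℝ, |μ ρ * x| ≤ q * N * (μ ρ * φ ρ) → |x| ≤ q * N * φ ρ := by
    intro x hx
    rw [abs_mul, abs_of_pos hμ] at hx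
    have : μ ρ * |x| ≤ μ ρ * (q * N * φ ρ) := by linarith
    exact le_of_mul_le_mul_left this hμ
  have kin : ∀ s, 0 < s → s ≤ ρ → k s ≤ k ρ := fun s hs hr => h.kle hs.le hr
  constructor
  · have d := h.decay hρ
      (fun s => μ s * (f s ((u + k ρ) - k s) - ((u + k ρ) - k s + s * k1 s)))
      (fun s => μ1 s * (f s (-((u + k ρ) - k s)) - ((u + k ρ) - k s - s * k1 s))) hN ?_ ?_ ?_
    · apply fin
      simpa using d
    · intro s hs _
      have e1 := h.char_deriv g he hs (u + k ρ)
      have e2 := (h.μd s hs).mul (((h.kd s hs).const_sub (u + k ρ)).add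
        ((hasDerivAt_id s).mul (h.k1d s hs)))
      have e3 := e1.sub e2
      refine (e3.congr_of_eventuallyEq ?_).congr_deriv ?_
      · filter_upwards with x
        simp only [Pi.sub_apply, Pi.mul_apply, Pi.add_apply, id]
        ring
      · have := h.rel2 s hs
        simp only [Pi.mul_apply, Pi.add_apply, id, neg_sub]
        linear_combination (-s) * this
    · intro s hs hsr
      rw [abs_mul]
      apply mul_le_mul_of_nonneg_left _ (abs_nonneg _)
      exact (hb s hs (u + k ρ - k s) (by linarith [kin s hs hsr])).2
    · apply squeeze_zero_norm' _ lim0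
      filter_upwards [Ioc_mem_nhdsGT hρ] with s hs
      rw [norm_mul, Real.norm_eq_abs, Real.norm_eq_abs, abs_of_pos (h.μpos s hs.1)]
      exact mul_le_mul_of_nonneg_left
        (hb s hs.1 (u + k ρ - k s) (by linarith [kin s hs.1 hs.2])).1 (h.μpos s hs.1).le
  · have d := h.decay hρ
      (fun s => μ s * (f s ((-u + k ρ) - k s) - (-((-u + k ρ) - k s) - s * k1 s)))
      (fun s => μ1 s * (f s (-((-u + k ρ) - k s)) - (-((-u + k ρ) - k s) + s * k1 s))) hN ?_ ?_ ?_
    · apply fin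
      simpa using d
    · intro s hs _
      have e1 := h.char_deriv g he hs (-u + k ρ)
      have e2 := (h.μd s hs).mul (((h.kd s hs).const_sub (-u + k ρ)).neg.sub
        ((hasDerivAt_id s).mul (h.k1d s hs)))
      have e3 := e1.sub e2
      refine (e3.congr_of_eventuallyEq ?_).congr_deriv ?_
      · filter_upwards with x
        simp only [Pi.sub_apply, Pi.mul_apply, Pi.neg_apply, id]
        ring
      · have := h.rel2 s hs
        simp only [Pi.mul_apply, Pi.sub_apply, Pi.neg_apply, id, neg_sub]
        linear_combination s * this
    · intro s hs hsr
      rw [abs_mul]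
      apply mul_le_mul_of_nonneg_left _ (abs_nonneg _)
      exact (hb s hs (-(-u + k ρ - k s)) (by linarith [kin s hs hsr])).1
    · apply squeeze_zero_norm' _ lim0
      filter_upwards [Ioc_mem_nhdsGT hρ] with s hs
      rw [norm_mul, Real.norm_eq_abs, Real.norm_eq_abs, abs_of_pos (h.μpos s hs.1)]
      have := (hb s hs.1 (-(-u + k ρ - k s)) (by linarith [kin s hs.1 hs.2])).2
      rw [neg_neg] at this
      exact mul_le_mul_of_nonneg_left this (h.μpos s hs.1).le

theorem eq_zero_of_geom {q N a x : ℝ} (q0 : 0 < q) (q1 : q < 1)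
    (hx : ∀ n : ℕ, |x| ≤ q ^ n * N * a) : x = 0 := by
  have h1 : Tendsto (fun n : ℕ => q ^ n * N * a) atTop (nhds (0 * N * a)) :=
    ((tendsto_pow_atTop_nhds_zero_of_lt_one q0.le q1).mul_const _).mul_const _
  rw [zero_mul, zero_mul] at h1
  have := ge_of_tendsto' h1 hx
  exact abs_nonpos_iff.1 this

theorem outer (h : KData k k1 k2 μ μ1 φ φ1 q M) (g : Good φ C f)
    (he : ∀ ρ, 0 < ρ → ∀ c,
      μ ρ * f ρ (c - k ρ) = ∫ s in (0:ℝ)..ρ, μ1 s * f s (k s - c)) :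
    ∀ ρ, 0 < ρ → ∀ u, k ρ ≤ u → f ρ u = u + ρ * k1 ρ ∧ f ρ (-u) = u - ρ * k1 ρ := by
  have N0 : 0 ≤ C + M := add_nonneg g.C0 h.M0.le
  have main : ∀ n : ℕ, ∀ ρ, 0 < ρ → ∀ u, k ρ ≤ u →
      |f ρ u - (u + ρ * k1 ρ)| ≤ (q ^ n * (C + M)) * φ ρ ∧
      |f ρ (-u) - (u - ρ * k1 ρ)| ≤ (q ^ n * (C + M)) * φ ρ := by
    intro n
    induction n with
    | zero =>
      intro ρ hρ u hu
      have u0 : 0 ≤ u := (h.kpos hρ).le.trans hu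
      have b1 := g.bd ρ hρ u
      have b2 := g.bd ρ hρ (-u)
      rw [abs_neg] at b2
      rw [abs_of_nonneg u0] at b1 b2
      have b3 := h.k1le ρ hρ
      have b4 := mul_pos hρ (h.k1pos ρ hρ)
      rw [abs_le] at *
      rw [abs_le]
      refine ⟨⟨?_, ?_⟩, ⟨?_, ?_⟩⟩ <;> simp only [pow_zero, one_mul] <;> linarith
    | succ n ih =>
      have := h.outer_step g he (mul_nonneg (pow_nonneg h.q0.le n) N0) ih
      intro ρ hρ u hu
      have t := this ρ hρ u hu
      rw [← mul_assoc, ← pow_succ'] at t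
      exact t
  intro ρ hρ u hu
  constructor
  · have := eq_zero_of_geom h.q0 h.q1 (fun n => (main n ρ hρ u hu).1)
    linarith
  · have := eq_zero_of_geom h.q0 h.q1 (fun n => (main n ρ hρ u hu).2)
    linarith

end KData

/-- Continuous partial derivatives give strict differentiability. -/
theorem strict_of_partials (F F1 F2 : ℝ → ℝ → ℝ) (u : ℝ × ℝ)
    (h1 : ∀ᶠ v in nhds u, HasDerivAt (fun r => F r v.2) (F1 v.1 v.2) v.1)
    (h2 : ∀ᶠ v in nhds u, HasDerivAt (fun c => F v.1 c) (F2 v.1 v.2) v.2)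
    (c1 : ContinuousAt (fun p : ℝ × ℝ => F1 p.1 p.2) u)
    (c2 : ContinuousAt (fun p : ℝ × ℝ => F2 p.1 p.2) u) :
    HasStrictFDerivAt (fun p : ℝ × ℝ => F p.1 p.2)
      ((ContinuousLinearMap.toSpanSingleton ℝ (F1 u.1 u.2)).coprod
        (ContinuousLinearMap.toSpanSingleton ℝ (F2 u.1 u.2))) u := by
  have key := hasStrictFDerivAt_uncurry_coprod (𝕜 := ℝ) (u := u)
    (f := F)
    (f₁ := fun r c => ContinuousLinearMap.toSpanSingleton ℝ (F1 r c))
    (f₂ := fun r c => ContinuousLinearMap.toSpanSingleton ℝ (F2 r c)) ?_ ?_ ?_ ?_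
  · exact key
  · filter_upwards [h1] with v hv
    exact hv.hasFDerivAt
  · filter_upwards [h2] with v hv
    exact hv.hasFDerivAt
  · exact (ContinuousLinearMap.toSpanSingletonCLE (𝕜 := ℝ) (E := ℝ)).continuous.continuousAt.comp c1
  · exact (ContinuousLinearMap.toSpanSingletonCLE (𝕜 := ℝ) (E := ℝ)).continuous.continuousAt.comp c2

/-- Leibniz rule, globally continuous version, one endpoint. -/
theorem leibniz_aux (X Y : ℝ → ℝ → ℝ) (hX : Continuous (fun p : ℝ × ℝ => X p.1 p.2))
    (hY : Continuous (fun p : ℝ × ℝ => Y p.1 p.2))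
    (hd : ∀ r b, HasDerivAt (fun r => X r b) (Y r b) r) (r c : ℝ) :
    HasStrictFDerivAt (fun p : ℝ × ℝ => ∫ b in (0:ℝ)..p.2, X p.1 b)
      (((ContinuousLinearMap.toSpanSingleton ℝ (∫ b in (0:ℝ)..c, Y r b))).coprod
        (ContinuousLinearMap.toSpanSingleton ℝ (X r c))) (r, c) := by
  apply strict_of_partials (fun r c => ∫ b in (0:ℝ)..c, X r b)
    (fun r c => ∫ b in (0:ℝ)..c, Y r b) X (r, c)
  · filter_upwards with v
    obtain ⟨K, hK⟩ := ((isCompact_closedBall v.1 1).prod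
      (isCompact_uIcc (a := (0:ℝ)) (b := v.2))).exists_bound_of_continuousOn
      (f := fun p : ℝ × ℝ => Y p.1 p.2) hY.continuousOn
    have cX : ∀ x, Continuous (fun b => X x b) := fun x =>
      hX.comp (continuous_const.prodMk continuous_id)
    have cY : ∀ x, Continuous (fun b => Y x b) := fun x =>
      hY.comp (continuous_const.prodMk continuous_id)
    refine (intervalIntegral.hasDerivAt_integral_of_dominated_loc_of_deriv_le (μ := volume)
      (F := X) (F' := Y) (bound := fun _ => K) (s := Metric.closedBall v.1 1)
      (Metric.closedBall_mem_nhds _ one_pos) ?_ ?_ ?_ ?_ ?_ ?_).2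
    · filter_upwards with x
      exact (cX x).aestronglyMeasurable
    · exact (cX v.1).intervalIntegrable _ _
    · exact (cY v.1).aestronglyMeasurable
    · filter_upwards with b hb x hx
      exact hK (x, b) ⟨hx, uIoc_subset_uIcc hb⟩
    · exact intervalIntegrable_const
    · filter_upwards with b hb x hx
      exact hd x b
  · filter_upwards with v
    have cX : Continuous (fun b => X v.1 b) := hX.comp (continuous_const.prodMk continuous_id)
    exact (cX.integral_hasStrictDerivAt 0 v.2).hasDerivAt
  · have hc : Continuous (Function.uncurry fun (p : ℝ × ℝ) (b : ℝ) => Y p.1 b) :=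
      hY.comp ((continuous_fst.comp continuous_fst).prodMk continuous_snd)
    have : Continuous (fun p : ℝ × ℝ => ∫ b in (0:ℝ)..p.2, Y p.1 b) :=
      intervalIntegral.continuous_parametric_intervalIntegral_of_continuous hc continuous_snd
    exact this.continuousAt
  · exact hX.continuousAt

theorem leibniz_one (X Y : ℝ → ℝ → ℝ) (hX : ContinuousOn (fun p : ℝ × ℝ => X p.1 p.2) HP)
    (hY : ContinuousOn (fun p : ℝ × ℝ => Y p.1 p.2) HP)
    (hd : ∀ r, 0 < r → ∀ b, HasDerivAt (fun r => X r b) (Y r b) r) {ρ : ℝ} (hρ : 0 < ρ)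
    {β : ℝ → ℝ} {β' : ℝ} (hβ : HasDerivAt β β' ρ) :
    HasDerivAt (fun r => ∫ b in (0:ℝ)..β r, X r b)
      ((∫ b in (0:ℝ)..β ρ, Y ρ b) + X ρ (β ρ) * β') ρ := by
  have cexp : Continuous (fun p : ℝ × ℝ => (Real.exp p.1, p.2)) := by fun_prop
  have mexp : ∀ p : ℝ × ℝ, (Real.exp p.1, p.2) ∈ HP := fun p => mem_HP.2 (Real.exp_pos _)
  have cX : Continuous (fun p : ℝ × ℝ => X (Real.exp p.1) p.2) :=
    hX.comp_continuous cexp mexp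
  have cY : Continuous (fun p : ℝ × ℝ => Real.exp p.1 * Y (Real.exp p.1) p.2) :=
    (Real.continuous_exp.comp continuous_fst).mul (hY.comp_continuous cexp mexp)
  have key := (leibniz_aux (fun t b => X (Real.exp t) b)
    (fun t b => Real.exp t * Y (Real.exp t) b) cX cY (by
      intro t b
      have := (hd (Real.exp t) (Real.exp_pos t) b).comp t (Real.hasDerivAt_exp t)
      rw [mul_comm]
      exact this) (Real.log ρ) (β ρ)).hasFDerivAt
  have hl : HasDerivAt (fun r => (Real.log r, β r)) (ρ⁻¹, β') ρ :=
    (Real.hasDerivAt_log hρ.ne').prodMk hβ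
  have := key.comp_hasDerivAt ρ hl
  refine (this.congr_of_eventuallyEq ?_).congr_deriv ?_
  · filter_upwards [Ioi_mem_nhds hρ] with r hr
    simp [Real.exp_log hr]
  · simp [Real.exp_log hρ]
    field_simp

/-- Leibniz rule on the half plane. -/
theorem leibniz (X Y : ℝ → ℝ → ℝ) (hX : ContinuousOn (fun p : ℝ × ℝ => X p.1 p.2) HP)
    (hY : ContinuousOn (fun p : ℝ × ℝ => Y p.1 p.2) HP)
    (hd : ∀ r, 0 < r → ∀ b, HasDerivAt (fun r => X r b) (Y r b) r) {ρ : ℝ} (hρ : 0 < ρ)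
    {α β : ℝ → ℝ} {α' β' : ℝ} (hα : HasDerivAt α α' ρ) (hβ : HasDerivAt β β' ρ) :
    HasDerivAt (fun r => ∫ b in α r..β r, X r b)
      ((∫ b in α ρ..β ρ, Y ρ b) + X ρ (β ρ) * β' - X ρ (α ρ) * α') ρ := by
  have cX : ∀ r, 0 < r → Continuous (fun b => X r b) := fun r hr =>
    hX.comp_continuous (continuous_const.prodMk continuous_id) (fun b => mem_HP.2 hr)
  have cY : ∀ r, 0 < r → Continuous (fun b => Y r b) := fun r hr =>
    hY.comp_continuous (continuous_const.prodMk continuous_id) (fun b => mem_HP.2 hr)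
  have := (leibniz_one X Y hX hY hd hρ hβ).sub (leibniz_one X Y hX hY hd hρ hα)
  refine (this.congr_of_eventuallyEq ?_).congr_deriv ?_
  · filter_upwards [Ioi_mem_nhds hρ] with r hr
    exact (intervalIntegral.integral_interval_sub_left ((cX r hr).intervalIntegrable _ _)
      ((cX r hr).intervalIntegrable _ _)).symm
  · have e := intervalIntegral.integral_interval_sub_left
      ((cY ρ hρ).intervalIntegrable (μ := volume) 0 (β ρ))
      ((cY ρ hρ).intervalIntegrable (μ := volume) 0 (α ρ))
    rw [← e]
    ring

/-- A function with zero derivative on `(0,∞)` and zero limit at `0` vanishes. -/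
theorem zero_of_deriv_zero (y : ℝ → ℝ) (r : ℝ) (hy : ∀ s, 0 < s → s ≤ r → HasDerivAt y 0 s)
    (h0 : Tendsto y (nhdsWithin 0 (Ioi 0)) (nhds 0)) {ρ : ℝ} (hρ : 0 < ρ) (hr : ρ ≤ r) :
    y ρ = 0 := by
  have hc : ∀ s ∈ Ioc 0 ρ, y s = y ρ := by
    intro s hs
    rcases hs.2.eq_or_lt with he | hlt
    · rw [he]
    have := (convex_Icc s ρ).is_const_of_fderivWithin_eq_zero (𝕜 := ℝ) (f := y) (x := s) (y := ρ)
    apply this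
    · intro t ht
      exact (hy t (hs.1.trans_le ht.1) (ht.2.trans hr)).differentiableAt.differentiableWithinAt
    · intro t ht
      have hd := (hy t (hs.1.trans_le ht.1) (ht.2.trans hr)).hasFDerivAt.hasFDerivWithinAt
        (s := Icc s ρ)
      rw [hd.fderivWithin (uniqueDiffOn_Icc hlt t ht)]
      ext
      simp
    · exact ⟨le_rfl, hs.2⟩
    · exact ⟨hs.2, le_rfl⟩
  have h1 : Tendsto y (nhdsWithin 0 (Ioi 0)) (nhds (y ρ)) := by
    apply tendsto_const_nhds.congr'
    filter_upwards [Ioc_mem_nhdsGT hρ] with s hs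
    exact (hc s hs).symm
  exact tendsto_nhds_unique h1 h0

theorem tendsto_zero_of_bound {y b : ℝ → ℝ} (hb : ContinuousOn b (Ici 0)) (b0 : b 0 = 0)
    (hyb : ∀ s, 0 < s → |y s| ≤ b s) : Tendsto y (nhdsWithin 0 (Ioi 0)) (nhds 0) := by
  have h1 : ContinuousWithinAt b (Ici 0) 0 := hb 0 self_mem_Ici
  have h2 := (h1.mono Ioi_subset_Ici_self).tendsto
  rw [b0] at h2
  apply squeeze_zero_norm' _ h2
  filter_upwards [self_mem_nhdsWithin] with s hs
  exact hyb s hs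

/-- Even part. -/
noncomputable def AA (f : ℝ → ℝ → ℝ) (ρ u : ℝ) : ℝ := (f ρ u + f ρ (-u)) / 2
/-- Weighted odd part. -/
noncomputable def BB (μ : ℝ → ℝ) (f : ℝ → ℝ → ℝ) (ρ u : ℝ) : ℝ :=
  μ ρ ^ 2 * (f ρ u - f ρ (-u)) / 2
/-- The density derivative of the entropy. -/
noncomputable def pp (f : ℝ → ℝ → ℝ) (ρ u : ℝ) : ℝ := 1 / 2 * ∫ v in (-u)..u, f ρ v
/-- The velocity derivative of the entropy. -/
noncomputable def qq (f : ℝ → ℝ → ℝ) (ρ u : ℝ) : ℝ := ∫ s in (0:ℝ)..ρ, AA f s u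
/-- The entropy. -/
noncomputable def ee (f : ℝ → ℝ → ℝ) (ρ u : ℝ) : ℝ := ∫ v in (0:ℝ)..u, qq f ρ v

namespace KData
variable {k k1 k2 μ μ1 φ φ1 : ℝ → ℝ} {q M C : ℝ} {f f' : ℝ → ℝ → ℝ}

theorem fcont (g : Good φ C f) {ρ : ℝ} (hρ : 0 < ρ) : Continuous (f ρ) :=
  g.cont.comp_continuous (continuous_const.prodMk continuous_id) (fun b => mem_HP.2 hρ)

theorem fneg_cont (g : Good φ C f) : ContinuousOn (fun p : ℝ × ℝ => f p.1 (-p.2)) HP := by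
  have : ContinuousOn (fun p : ℝ × ℝ => (p.1, -p.2)) HP := by fun_prop
  exact g.cont.comp this (fun p hp => mem_HP.2 (mem_HP.1 hp))

theorem AA_cont (g : Good φ C f) : ContinuousOn (fun p : ℝ × ℝ => AA f p.1 p.2) HP :=
  (g.cont.add (fneg_cont g)).div_const 2

theorem comp_fst {m : ℝ → ℝ} (hm : ContinuousOn m (Ioi 0)) :
    ContinuousOn (fun p : ℝ × ℝ => m p.1) HP :=
  hm.comp continuousOn_fst (fun p hp => hp.1)

theorem BB_cont (h : KData k k1 k2 μ μ1 φ φ1 q M) (g : Good φ C f) :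
    ContinuousOn (fun p : ℝ × ℝ => BB μ f p.1 p.2) HP :=
  (((comp_fst (h.μcont.mono Ioi_subset_Ici_self)).pow 2).mul
    (g.cont.sub (fneg_cont g))).div_const 2

theorem seg_deriv (h : KData k k1 k2 μ μ1 φ φ1 q M) (g : Good φ C f)
    (he : ∀ ρ, 0 < ρ → ∀ c,
      μ ρ * f ρ (c - k ρ) = ∫ s in (0:ℝ)..ρ, μ1 s * f s (k s - c)) {ρ : ℝ} (hρ : 0 < ρ) (a b : ℝ) :
    HasDerivAt (fun r => μ r * ∫ v in a..b, f r v)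
      (μ1 ρ * (∫ v in (-b)..(-a), f ρ v) + μ ρ * k1 ρ * (f ρ b - f ρ a)) ρ := by
  have kc : ContinuousOn (fun p : ℝ × ℝ => k p.1) HP :=
    comp_fst (h.kcont.mono Ioi_subset_Ici_self)
  have hX : ContinuousOn (fun p : ℝ × ℝ => (fun r b => μ r * f r (b - k r)) p.1 p.2) HP := by
    apply (comp_fst (h.μcont.mono Ioi_subset_Ici_self)).mul
    have : ContinuousOn (fun p : ℝ × ℝ => (p.1, p.2 - k p.1)) HP :=
      continuousOn_fst.prodMk (continuousOn_snd.sub kc)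
    exact g.cont.comp this (fun p hp => mem_HP.2 (mem_HP.1 hp))
  have hY : ContinuousOn (fun p : ℝ × ℝ => (fun r b => μ1 r * f r (k r - b)) p.1 p.2) HP := by
    apply (comp_fst h.mu1cont).mul
    have : ContinuousOn (fun p : ℝ × ℝ => (p.1, k p.1 - p.2)) HP :=
      continuousOn_fst.prodMk (kc.sub continuousOn_snd)
    exact g.cont.comp this (fun p hp => mem_HP.2 (mem_HP.1 hp))
  have := leibniz _ _ hX hY (fun r hr b => h.char_deriv g he hr b) hρ
    ((h.kd ρ hρ).const_add a) ((h.kd ρ hρ).const_add b)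
  refine (this.congr_of_eventuallyEq ?_).congr_deriv ?_
  · filter_upwards [Ioi_mem_nhds hρ] with r hr
    rw [intervalIntegral.integral_const_mul]
    have := intervalIntegral.integral_comp_sub_right (fun x => f r x) (a := a + k r) (b := b + k r) (k r)
    simp only [add_sub_cancel_right] at this
    rw [this]
  · simp only [add_sub_cancel_right]
    rw [intervalIntegral.integral_const_mul]
    have := intervalIntegral.integral_comp_sub_left (fun x => f ρ x) (a := a + k ρ) (b := b + k ρ) (k ρ)
    rw [this]
    have e1 : k ρ - (b + k ρ) = -b := by ring
    have e2 : k ρ - (a + k ρ) = -a := by ring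
    rw [e1, e2]
    ring

theorem AA_le (h : KData k k1 k2 μ μ1 φ φ1 q M) (g : Good φ C f) {s ρ : ℝ} (hs : 0 < s)
    (hρ : s ≤ ρ) (u : ℝ) : |AA f s u| ≤ |u| + C * k ρ := by
  have h1 := g.abs_le' h hs hρ u
  have h2 := g.abs_le' h hs hρ (-u)
  rw [abs_neg] at h2
  unfold AA
  rw [abs_le] at *
  constructor <;> linarith

theorem AAs_cont (g : Good φ C f) (u : ℝ) : ContinuousOn (fun s => AA f s u) (Ioi 0) :=
  (AA_cont g).comp (continuousOn_id.prodMk continuousOn_const) (fun s hs => mem_HP.2 hs)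

theorem AA_int (h : KData k k1 k2 μ μ1 φ φ1 q M) (g : Good φ C f) (u : ℝ) {ρ : ℝ} (hρ : 0 < ρ) :
    IntervalIntegrable (fun s => AA f s u) volume 0 ρ := by
  have hb : IntervalIntegrable (fun _ : ℝ => |u| + C * k ρ) volume 0 ρ := intervalIntegrable_const
  apply hb.mono_fun'
  · rw [uIoc_of_le hρ.le]
    exact ((AAs_cont g u).mono Ioc_subset_Ioi_self).aestronglyMeasurable measurableSet_Ioc
  · rw [uIoc_of_le hρ.le]
    filter_upwards [ae_restrict_mem measurableSet_Ioc] with s hs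
    exact h.AA_le g hs.1 hs.2 u

theorem qq_dρ (h : KData k k1 k2 μ μ1 φ φ1 q M) (g : Good φ C f) (u : ℝ) {ρ : ℝ} (hρ : 0 < ρ) :
    HasDerivAt (fun r => qq f r u) (AA f ρ u) ρ :=
  intervalIntegral.integral_hasDerivAt_right (h.AA_int g u hρ)
    ((AAs_cont g u).stronglyMeasurableAtFilter isOpen_Ioi ρ hρ)
    ((AAs_cont g u).continuousAt (Ioi_mem_nhds hρ))

theorem qq_le (h : KData k k1 k2 μ μ1 φ φ1 q M) (g : Good φ C f) (u : ℝ) {ρ : ℝ} (hρ : 0 < ρ) :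
    |qq f ρ u| ≤ ρ * (|u| + C * k ρ) := by
  have := intervalIntegral.norm_integral_le_of_norm_le_const (a := 0) (b := ρ)
    (f := fun s => AA f s u) (C := |u| + C * k ρ) (by
      intro s hs
      rw [uIoc_of_le hρ.le] at hs
      exact h.AA_le g hs.1 hs.2 u)
  rw [sub_zero, abs_of_pos hρ, mul_comm] at this
  exact this

theorem seg_le (h : KData k k1 k2 μ μ1 φ φ1 q M) (g : Good φ C f) {a b u : ℝ} (ha : |a| ≤ |u|)
    (hb : |b| ≤ |u|) {ρ : ℝ} (hρ : 0 < ρ) :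
    |∫ v in a..b, f ρ v| ≤ 2 * |u| * (|u| + C * k ρ) := by
  have := intervalIntegral.norm_integral_le_of_norm_le_const (a := a) (b := b)
    (f := f ρ) (C := |u| + C * k ρ) (by
      intro s hs
      have h1 := g.abs_le' h hρ le_rfl s
      have h2 : |s| ≤ |u| := by
        have h3 := uIoc_subset_uIcc hs
        rw [abs_le] at *
        rcases le_total a b with hab | hab
        · rw [uIcc_of_le hab] at h3
          exact ⟨ha.1.trans h3.1, h3.2.trans hb.2⟩
        · rw [uIcc_of_ge hab] at h3
          exact ⟨hb.1.trans h3.1, h3.2.trans ha.2⟩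
      rw [Real.norm_eq_abs]
      linarith)
  rw [Real.norm_eq_abs] at this
  have h4 : |b - a| ≤ 2 * |u| := by
    have := abs_sub b a
    linarith
  have h5 : 0 ≤ |u| + C * k ρ := add_nonneg (abs_nonneg _) (mul_nonneg g.C0 (h.kpos hρ).le)
  calc _ ≤ _ := this
    _ ≤ _ := by rw [mul_comm]; gcongr

theorem pp_le (h : KData k k1 k2 μ μ1 φ φ1 q M) (g : Good φ C f) (u : ℝ) {ρ : ℝ} (hρ : 0 < ρ) :
    |pp f ρ u| ≤ |u| * (|u| + C * k ρ) := by
  have := h.seg_le g (a := -u) (b := u) (u := u) (by simp) le_rfl hρ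
  unfold pp
  rw [abs_mul, abs_of_pos (by norm_num : (0:ℝ) < 1/2)]
  linarith

theorem qq_sub (h : KData k k1 k2 μ μ1 φ φ1 q M) (g : Good φ C f)
    (he : ∀ ρ, 0 < ρ → ∀ c,
      μ ρ * f ρ (c - k ρ) = ∫ s in (0:ℝ)..ρ, μ1 s * f s (k s - c)) {ρ : ℝ} (hρ : 0 < ρ) (u : ℝ) :
    qq f ρ u = qq f ρ 0 +
      μ ρ * (μ ρ * (∫ v in (0:ℝ)..u, f ρ v) - μ ρ * ∫ v in (-u)..(0:ℝ), f ρ v) / 2 := by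
  have hd : ∀ s, 0 < s → HasDerivAt (fun s => qq f s u - qq f s 0 -
      μ s * (μ s * (∫ v in (0:ℝ)..u, f s v) - μ s * ∫ v in (-u)..(0:ℝ), f s v) / 2) 0 s := by
    intro s hs
    have h1 := ((h.qq_dρ g u hs).sub (h.qq_dρ g 0 hs)).sub
      (((h.μd s hs).mul ((h.seg_deriv g he hs 0 u).sub (h.seg_deriv g he hs (-u) 0))).div_const 2)
    refine h1.congr_deriv ?_
    have := h.rel s hs
    simp only [AA, neg_zero, neg_neg, Pi.sub_apply]
    linear_combination -(f s u + f s (-u) - 2 * f s 0) / 2 * this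
  have hz := zero_of_deriv_zero _ ρ (fun s hs _ => hd s hs) (tendsto_zero_of_bound
    (b := fun s => s * (|u| + C * k s) + s * (|0| + C * k s) +
      μ s * (μ s * (2 * |u| * (|u| + C * k s)))) ?_ ?_ ?_) hρ le_rfl
  · linarith
  · have c1 := h.kcont
    have c2 := h.μcont
    fun_prop
  · simp [h.μ0]
  · intro s hs
    have b1 := h.qq_le g u hs
    have b2 := h.qq_le g 0 hs
    have b3 := h.seg_le g (a := 0) (b := u) (u := u) (by simp) le_rfl hs
    have b4 := h.seg_le g (a := -u) (b := 0) (u := u) (by simp) (by simp) hs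
    have e : μ s * (μ s * (∫ v in (0:ℝ)..u, f s v) - μ s * ∫ v in (-u)..(0:ℝ), f s v) / 2
      = μ s * (μ s * (((∫ v in (0:ℝ)..u, f s v) - ∫ v in (-u)..(0:ℝ), f s v) / 2)) := by ring
    rw [e]
    have b5 : |μ s * (μ s * (((∫ v in (0:ℝ)..u, f s v) - ∫ v in (-u)..(0:ℝ), f s v) / 2))|
      ≤ μ s * (μ s * (2 * |u| * (|u| + C * k s))) := by
      have m := (h.μpos s hs)
      rw [abs_mul, abs_mul, abs_of_pos m]
      apply mul_le_mul_of_nonneg_left _ m.le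
      apply mul_le_mul_of_nonneg_left _ m.le
      rw [abs_le] at *
      constructor <;> linarith
    have t1 := abs_sub (qq f s u - qq f s 0) (μ s * (μ s * (((∫ v in (0:ℝ)..u, f s v) - ∫ v in (-u)..(0:ℝ), f s v) / 2)))
    have t2 := abs_sub (qq f s u) (qq f s 0)
    exact t1.trans (add_le_add (t2.trans (add_le_add b1 b2)) b5)

theorem pp_du (g : Good φ C f) {ρ : ℝ} (hρ : 0 < ρ) (u : ℝ) :
    HasDerivAt (fun u => pp f ρ u) (AA f ρ u) u := by
  have cf := fcont g hρ
  have e : (fun u => pp f ρ u) = fun u => 1 / 2 * ((∫ v in (0:ℝ)..u, f ρ v) -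
      ∫ v in (0:ℝ)..(-u), f ρ v) := by
    ext u
    unfold pp
    rw [intervalIntegral.integral_interval_sub_left (cf.intervalIntegrable _ _)
      (cf.intervalIntegrable _ _)]
  rw [e]
  have h1 := (cf.integral_hasStrictDerivAt 0 u).hasDerivAt
  have h2 := (cf.integral_hasStrictDerivAt 0 (-u)).hasDerivAt.comp u (hasDerivAt_neg u)
  refine ((h1.sub h2).const_mul (1/2)).congr_deriv ?_
  unfold AA
  ring

theorem pp_dρ (h : KData k k1 k2 μ μ1 φ φ1 q M) (g : Good φ C f)
    (he : ∀ ρ, 0 < ρ → ∀ c,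
      μ ρ * f ρ (c - k ρ) = ∫ s in (0:ℝ)..ρ, μ1 s * f s (k s - c)) {ρ : ℝ} (hρ : 0 < ρ) (u : ℝ) :
    HasDerivAt (fun r => pp f r u) (k1 ρ ^ 2 * BB μ f ρ u) ρ := by
  have m := h.μpos ρ hρ
  have h1 := ((h.seg_deriv g he hρ (-u) u).div (h.μd ρ hρ) m.ne').const_mul (1/2)
  refine (h1.congr_of_eventuallyEq ?_).congr_deriv ?_
  · filter_upwards [Ioi_mem_nhds hρ] with r hr
    have := (h.μpos r hr).ne'
    unfold pp
    simp only [Pi.div_apply]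
    field_simp
  · have r := h.rel ρ hρ
    unfold BB
    rw [neg_neg]
    have : k1 ρ ^ 2 * (μ ρ ^ 2 * (f ρ u - f ρ (-u)) / 2) = k1 ρ * (f ρ u - f ρ (-u)) / 2 := by
      linear_combination k1 ρ * (f ρ u - f ρ (-u)) / 2 * r
    rw [this]
    field_simp
    ring

theorem qq_du (h : KData k k1 k2 μ μ1 φ φ1 q M) (g : Good φ C f)
    (he : ∀ ρ, 0 < ρ → ∀ c,
      μ ρ * f ρ (c - k ρ) = ∫ s in (0:ℝ)..ρ, μ1 s * f s (k s - c)) {ρ : ℝ} (hρ : 0 < ρ) (u : ℝ) :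
    HasDerivAt (fun u => qq f ρ u) (BB μ f ρ u) u := by
  have cf := fcont g hρ
  have e : (fun u => qq f ρ u) = fun u => qq f ρ 0 + μ ρ ^ 2 / 2 * ((∫ v in (0:ℝ)..u, f ρ v) +
      ∫ v in (0:ℝ)..(-u), f ρ v) := by
    ext u
    rw [h.qq_sub g he hρ u, intervalIntegral.integral_symm 0 (-u)]
    ring
  rw [e]
  have h1 := (cf.integral_hasStrictDerivAt 0 u).hasDerivAt
  have h2 := (cf.integral_hasStrictDerivAt 0 (-u)).hasDerivAt.comp u (hasDerivAt_neg u)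
  refine (((h1.add h2).const_mul (μ ρ ^ 2 / 2)).const_add _).congr_deriv ?_
  unfold BB
  ring

theorem qq_cont (h : KData k k1 k2 μ μ1 φ φ1 q M) (g : Good φ C f)
    (he : ∀ ρ, 0 < ρ → ∀ c,
      μ ρ * f ρ (c - k ρ) = ∫ s in (0:ℝ)..ρ, μ1 s * f s (k s - c)) :
    ContinuousOn (fun p : ℝ × ℝ => qq f p.1 p.2) HP := by
  intro x hx
  have nx := isOpen_HP.mem_nhds hx
  refine ContinuousAt.continuousWithinAt
    (strict_of_partials (qq f) (AA f) (BB μ f) x ?_ ?_ ?_ ?_).continuousAt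
  · filter_upwards [nx] with v hv
    exact h.qq_dρ g v.2 hv.1
  · filter_upwards [nx] with v hv
    exact h.qq_du g he hv.1 v.2
  · exact (AA_cont g).continuousAt nx
  · exact (h.BB_cont g).continuousAt nx

theorem AA_even (ρ u : ℝ) : AA f ρ (-u) = AA f ρ u := by
  unfold AA
  rw [neg_neg, add_comm]

theorem pp_eq (g : Good φ C f) {ρ : ℝ} (hρ : 0 < ρ) (u : ℝ) :
    pp f ρ u = ∫ v in (0:ℝ)..u, AA f ρ v := by
  have ca : Continuous (AA f ρ) :=
    (AA_cont g).comp_continuous (continuous_const.prodMk continuous_id) (fun b => mem_HP.2 hρ)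
  have := intervalIntegral.integral_eq_sub_of_hasDerivAt (a := 0) (b := u)
    (fun x _ => pp_du g hρ x) (ca.intervalIntegrable _ _)
  rw [this]
  simp [pp]

theorem ee_dρ (h : KData k k1 k2 μ μ1 φ φ1 q M) (g : Good φ C f)
    (he : ∀ ρ, 0 < ρ → ∀ c,
      μ ρ * f ρ (c - k ρ) = ∫ s in (0:ℝ)..ρ, μ1 s * f s (k s - c)) {ρ : ℝ} (hρ : 0 < ρ) (u : ℝ) :
    HasDerivAt (fun r => ee f r u) (pp f ρ u) ρ := by
  have := leibniz_one (qq f) (AA f) (h.qq_cont g he) (AA_cont g)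
    (fun r hr b => h.qq_dρ g b hr) hρ (hasDerivAt_const ρ u)
  refine this.congr_deriv ?_
  rw [pp_eq g hρ]
  ring

theorem ee_du (h : KData k k1 k2 μ μ1 φ φ1 q M) (g : Good φ C f)
    (he : ∀ ρ, 0 < ρ → ∀ c,
      μ ρ * f ρ (c - k ρ) = ∫ s in (0:ℝ)..ρ, μ1 s * f s (k s - c)) {ρ : ℝ} (hρ : 0 < ρ) (u : ℝ) :
    HasDerivAt (fun u => ee f ρ u) (qq f ρ u) u := by
  have cq : Continuous (qq f ρ) :=
    (h.qq_cont g he).comp_continuous (continuous_const.prodMk continuous_id) (fun b => mem_HP.2 hρ)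
  exact (cq.integral_hasStrictDerivAt 0 u).hasDerivAt

theorem ee_odd (ρ u : ℝ) : ee f ρ (-u) = - ee f ρ u := by
  unfold ee
  have h1 := intervalIntegral.integral_comp_neg (fun x => qq f ρ x) (a := 0) (b := u)
  have h2 : ∀ x, qq f ρ (-x) = qq f ρ x := by
    intro x
    unfold qq
    simp only [AA_even]
  simp only [h2, neg_zero] at h1
  rw [h1, intervalIntegral.integral_symm]

theorem ee_le (h : KData k k1 k2 μ μ1 φ φ1 q M) (g : Good φ C f) (u : ℝ) {ρ : ℝ} (hρ : 0 < ρ) :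
    |ee f ρ u| ≤ |u| * (ρ * (|u| + C * k ρ)) := by
  have := intervalIntegral.norm_integral_le_of_norm_le_const (a := 0) (b := u)
    (f := fun v => qq f ρ v) (C := ρ * (|u| + C * k ρ)) (by
      intro s hs
      have h1 := h.qq_le g s hρ
      have h2 : |s| ≤ |u| := by
        have h3 := uIoc_subset_uIcc hs
        have := abs_sub_left_of_mem_uIcc h3
        simpa using this
      rw [Real.norm_eq_abs]
      refine h1.trans ?_
      gcongr)
  rw [sub_zero, mul_comm] at this
  exact this

theorem exists_eta (h : KData k k1 k2 μ μ1 φ φ1 q M) :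
    ∃ (η p r A B : ℝ → ℝ → ℝ) (C : ℝ), 0 ≤ C ∧
      ContinuousOn (fun x : ℝ × ℝ => A x.1 x.2) HP ∧
      ContinuousOn (fun x : ℝ × ℝ => B x.1 x.2) HP ∧
      (∀ ρ, 0 < ρ → ∀ u, HasDerivAt (fun s => η s u) (p ρ u) ρ) ∧
      (∀ ρ, 0 < ρ → ∀ u, HasDerivAt (fun v => η ρ v) (r ρ u) u) ∧
      (∀ ρ, 0 < ρ → ∀ u, HasDerivAt (fun s => p s u) (k1 ρ ^ 2 * B ρ u) ρ) ∧
      (∀ ρ, 0 < ρ → ∀ u, HasDerivAt (fun v => p ρ v) (A ρ u) u) ∧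
      (∀ ρ, 0 < ρ → ∀ u, HasDerivAt (fun s => r s u) (A ρ u) ρ) ∧
      (∀ ρ, 0 < ρ → ∀ u, HasDerivAt (fun v => r ρ v) (B ρ u) u) ∧
      (∀ ρ, 0 < ρ → ∀ u, |η ρ u| ≤ |u| * (ρ * (|u| + C * k ρ))) ∧
      (∀ ρ, 0 < ρ → ∀ u, |p ρ u| ≤ |u| * (|u| + C * k ρ)) ∧
      (∀ ρ, 0 < ρ → ∀ u, |r ρ u| ≤ ρ * (|u| + C * k ρ)) ∧
      (∀ ρ u, η ρ (-u) = - η ρ u) ∧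
      (∀ ρ, 0 < ρ → ∀ u, k ρ ≤ u → B ρ u = ρ ∧ A ρ u = u) := by
  obtain ⟨f, C, g, he⟩ := h.exists_f
  refine ⟨ee f, pp f, qq f, AA f, BB μ f, C, g.C0, AA_cont g, h.BB_cont g,
    fun ρ hρ u => h.ee_dρ g he hρ u, fun ρ hρ u => h.ee_du g he hρ u,
    fun ρ hρ u => h.pp_dρ g he hρ u, fun ρ hρ u => pp_du g hρ u,
    fun ρ hρ u => h.qq_dρ g u hρ, fun ρ hρ u => h.qq_du g he hρ u,
    fun ρ hρ u => h.ee_le g u hρ, fun ρ hρ u => h.pp_le g u hρ,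
    fun ρ hρ u => h.qq_le g u hρ, ee_odd, ?_⟩
  intro ρ hρ u hu
  obtain ⟨h1, h2⟩ := h.outer g he ρ hρ u hu
  have r := h.rel ρ hρ
  unfold BB AA
  rw [h1, h2]
  constructor
  · linear_combination ρ * r
  · ring

end KData

theorem tendsto_zero_of_bound' {y b : ℝ → ℝ} {r : ℝ} (hr : 0 < r) (hb : ContinuousOn b (Ici 0))
    (b0 : b 0 = 0)
    (hyb : ∀ s, 0 < s → s ≤ r → |y s| ≤ b s) : Tendsto y (nhdsWithin 0 (Ioi 0)) (nhds 0) := by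
  have h1 : ContinuousWithinAt b (Ici 0) 0 := hb 0 self_mem_Ici
  have h2 := (h1.mono Ioi_subset_Ici_self).tendsto
  rw [b0] at h2
  apply squeeze_zero_norm' _ h2
  filter_upwards [Ioc_mem_nhdsGT hr] with s hs
  exact hyb s hs.1 hs.2

theorem hasFDerivAt_of_partials (F F1 F2 : ℝ → ℝ → ℝ)
    (h1 : ∀ ρ, 0 < ρ → ∀ u, HasDerivAt (fun s => F s u) (F1 ρ u) ρ)
    (h2 : ∀ ρ, 0 < ρ → ∀ u, HasDerivAt (fun v => F ρ v) (F2 ρ u) u)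
    (c1 : ContinuousOn (fun x : ℝ × ℝ => F1 x.1 x.2) HP)
    (c2 : ContinuousOn (fun x : ℝ × ℝ => F2 x.1 x.2) HP) {x : ℝ × ℝ} (hx : x ∈ HP) :
    HasFDerivAt (fun x : ℝ × ℝ => F x.1 x.2)
      (F1 x.1 x.2 • ContinuousLinearMap.fst ℝ ℝ ℝ + F2 x.1 x.2 • ContinuousLinearMap.snd ℝ ℝ ℝ) x := by
  have nx := isOpen_HP.mem_nhds hx
  have := (strict_of_partials F F1 F2 x (by
    filter_upwards [nx] with v hv
    exact h1 v.1 hv.1 v.2) (by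
    filter_upwards [nx] with v hv
    exact h2 v.1 hv.1 v.2) (c1.continuousAt nx) (c2.continuousAt nx)).hasFDerivAt
  convert this using 1
  ext <;> simp

theorem contDiffOn_of_partials (n : ℕ) (F F1 F2 : ℝ → ℝ → ℝ)
    (h1 : ∀ ρ, 0 < ρ → ∀ u, HasDerivAt (fun s => F s u) (F1 ρ u) ρ)
    (h2 : ∀ ρ, 0 < ρ → ∀ u, HasDerivAt (fun v => F ρ v) (F2 ρ u) u)
    (c1 : ContDiffOn ℝ n (fun x : ℝ × ℝ => F1 x.1 x.2) HP)
    (c2 : ContDiffOn ℝ n (fun x : ℝ × ℝ => F2 x.1 x.2) HP) :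
    ContDiffOn ℝ (n + 1) (fun x : ℝ × ℝ => F x.1 x.2) HP := by
  rw [contDiffOn_succ_iff_fderiv_of_isOpen isOpen_HP]
  have hd := fun x (hx : x ∈ HP) =>
    hasFDerivAt_of_partials F F1 F2 h1 h2 c1.continuousOn c2.continuousOn hx
  refine ⟨fun x hx => (hd x hx).differentiableAt.differentiableWithinAt, by simp, ?_⟩
  have : ContDiffOn ℝ n (fun x : ℝ × ℝ => F1 x.1 x.2 • ContinuousLinearMap.fst ℝ ℝ ℝ +
      F2 x.1 x.2 • ContinuousLinearMap.snd ℝ ℝ ℝ) HP :=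
    (c1.smul contDiffOn_const).add (c2.smul contDiffOn_const)
  exact this.congr (fun x hx => (hd x hx).fderiv)

theorem partial_fst {F : ℝ × ℝ → ℝ} {L : ℝ × ℝ →L[ℝ] ℝ} {ρ u : ℝ} (h : HasFDerivAt F L (ρ, u)) :
    HasDerivAt (fun s => F (s, u)) (L (1, 0)) ρ :=
  h.comp_hasDerivAt ρ ((hasDerivAt_id ρ).prodMk (hasDerivAt_const ρ u))

theorem partial_snd {F : ℝ × ℝ → ℝ} {L : ℝ × ℝ →L[ℝ] ℝ} {ρ u : ℝ} (h : HasFDerivAt F L (ρ, u)) :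
    HasDerivAt (fun v => F (ρ, v)) (L (0, 1)) u :=
  h.comp_hasDerivAt u ((hasDerivAt_const u ρ).prodMk (hasDerivAt_id u))

/-- Partial derivatives of a `C²` function. -/
theorem partials_of_contDiffOn {η : ℝ × ℝ → ℝ} (h : ContDiffOn ℝ 2 η HP) :
    ∃ (p r A B D : ℝ → ℝ → ℝ),
      ContinuousOn (fun x : ℝ × ℝ => A x.1 x.2) HP ∧
      ContinuousOn (fun x : ℝ × ℝ => B x.1 x.2) HP ∧
      ContinuousOn (fun x : ℝ × ℝ => D x.1 x.2) HP ∧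
      (∀ ρ, 0 < ρ → ∀ u, HasDerivAt (fun s => η (s, u)) (p ρ u) ρ) ∧
      (∀ ρ, 0 < ρ → ∀ u, HasDerivAt (fun v => η (ρ, v)) (r ρ u) u) ∧
      (∀ ρ, 0 < ρ → ∀ u, HasDerivAt (fun s => p s u) (D ρ u) ρ) ∧
      (∀ ρ, 0 < ρ → ∀ u, HasDerivAt (fun v => p ρ v) (A ρ u) u) ∧
      (∀ ρ, 0 < ρ → ∀ u, HasDerivAt (fun s => r s u) (A ρ u) ρ) ∧
      (∀ ρ, 0 < ρ → ∀ u, HasDerivAt (fun v => r ρ v) (B ρ u) u) := by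
  have h' : ContDiffOn ℝ (1 + 1) η HP := by
    rw [one_add_one_eq_two]; exact h
  rw [contDiffOn_succ_iff_fderiv_of_isOpen isOpen_HP] at h'
  obtain ⟨hd, -, h1⟩ := h'
  have h1' : ContDiffOn ℝ (0 + 1) (fderiv ℝ η) HP := by
    rw [zero_add]; exact h1
  rw [contDiffOn_succ_iff_fderiv_of_isOpen isOpen_HP] at h1'
  obtain ⟨hdd, -, h2⟩ := h1'
  have hc := h2.continuousOn
  have d1 : ∀ x ∈ HP, HasFDerivAt η (fderiv ℝ η x) x := fun x hx =>
    (hd.differentiableAt (isOpen_HP.mem_nhds hx)).hasFDerivAt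
  have d2 : ∀ x ∈ HP, HasFDerivAt (fderiv ℝ η) (fderiv ℝ (fderiv ℝ η) x) x := fun x hx =>
    (hdd.differentiableAt (isOpen_HP.mem_nhds hx)).hasFDerivAt
  have d3 : ∀ a x, x ∈ HP → HasFDerivAt (fun x => fderiv ℝ η x a)
      ((ContinuousLinearMap.apply ℝ ℝ a).comp (fderiv ℝ (fderiv ℝ η) x)) x := fun a x hx =>
    (ContinuousLinearMap.apply ℝ ℝ a).hasFDerivAt.comp x (d2 x hx)
  have cc : ∀ a b : ℝ × ℝ, ContinuousOn (fun x : ℝ × ℝ => fderiv ℝ (fderiv ℝ η) x b a) HP :=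
    fun a b => (hc.clm_apply continuousOn_const).clm_apply continuousOn_const
  have sym : ∀ x ∈ HP, ∀ a b, fderiv ℝ (fderiv ℝ η) x a b = fderiv ℝ (fderiv ℝ η) x b a := by
    intro x hx a b
    apply second_derivative_symmetric_of_eventually (𝕜 := ℝ) (f := η) (f' := fderiv ℝ η) _ (d2 x hx)
    filter_upwards [isOpen_HP.mem_nhds hx] with y hy
    exact d1 y hy
  refine ⟨fun ρ u => fderiv ℝ η (ρ, u) (1, 0), fun ρ u => fderiv ℝ η (ρ, u) (0, 1),
    fun ρ u => fderiv ℝ (fderiv ℝ η) (ρ, u) (0, 1) (1, 0),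
    fun ρ u => fderiv ℝ (fderiv ℝ η) (ρ, u) (0, 1) (0, 1),
    fun ρ u => fderiv ℝ (fderiv ℝ η) (ρ, u) (1, 0) (1, 0), cc _ _, cc _ _, cc _ _, ?_, ?_, ?_, ?_,
    ?_, ?_⟩
  · intro ρ hρ u
    exact partial_fst (d1 _ (mem_HP.2 hρ))
  · intro ρ hρ u
    exact partial_snd (d1 _ (mem_HP.2 hρ))
  · intro ρ hρ u
    exact partial_fst (d3 _ _ (mem_HP.2 hρ))
  · intro ρ hρ u
    exact partial_snd (d3 _ _ (mem_HP.2 hρ))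
  · intro ρ hρ u
    have := partial_fst (d3 (0, 1) (ρ, u) (mem_HP.2 hρ))
    refine this.congr_deriv ?_
    exact sym _ (mem_HP.2 hρ) _ _
  · intro ρ hρ u
    exact partial_snd (d3 _ _ (mem_HP.2 hρ))

namespace KData
variable {k k1 k2 μ μ1 φ φ1 : ℝ → ℝ} {q M : ℝ}

/-- Uniqueness in the class of functions vanishing outside the cone. -/
theorem unique (h : KData k k1 k2 μ μ1 φ φ1 q M) (d p r A B D : ℝ → ℝ → ℝ) (C : ℝ) (hC : 0 ≤ C)
    (cA : ContinuousOn (fun x : ℝ × ℝ => A x.1 x.2) HP)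
    (cB : ContinuousOn (fun x : ℝ × ℝ => B x.1 x.2) HP)
    (cD : ContinuousOn (fun x : ℝ × ℝ => D x.1 x.2) HP)
    (dp : ∀ ρ, 0 < ρ → ∀ u, HasDerivAt (fun s => d s u) (p ρ u) ρ)
    (dr : ∀ ρ, 0 < ρ → ∀ u, HasDerivAt (fun v => d ρ v) (r ρ u) u)
    (pD : ∀ ρ, 0 < ρ → ∀ u, HasDerivAt (fun s => p s u) (D ρ u) ρ)
    (pA : ∀ ρ, 0 < ρ → ∀ u, HasDerivAt (fun v => p ρ v) (A ρ u) u)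
    (rA : ∀ ρ, 0 < ρ → ∀ u, HasDerivAt (fun s => r s u) (A ρ u) ρ)
    (rB : ∀ ρ, 0 < ρ → ∀ u, HasDerivAt (fun v => r ρ v) (B ρ u) u)
    (out : ∀ ρ, 0 < ρ → ∀ u, k ρ ≤ |u| → d ρ u = 0)
    (pde : ∀ ρ, 0 < ρ → ∀ u, |u| ≤ k ρ → D ρ u = k1 ρ ^ 2 * B ρ u)
    (pb : ∀ ρ, 0 < ρ → ∀ u, |u| ≤ k ρ → |p ρ u| ≤ C * k ρ ^ 2)
    (rb : ∀ ρ, 0 < ρ → ∀ u, |u| ≤ k ρ → |k1 ρ * r ρ u| ≤ C * k ρ ^ 2) :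
    ∀ ρ, 0 < ρ → ∀ u, d ρ u = 0 := by
  -- outside the cone everything vanishes
  have ev : ∀ ρ, 0 < ρ → ∀ u, k ρ < |u| → ∀ᶠ x : ℝ × ℝ in nhds (ρ, u), 0 < x.1 ∧ k x.1 < |x.2| := by
    intro ρ hρ u hu
    have c1 : ContinuousAt (fun x : ℝ × ℝ => k x.1) (ρ, u) :=
      ContinuousAt.comp (f := fun x : ℝ × ℝ => x.1) (g := k) (x := (ρ, u))
        (h.kd ρ hρ).continuousAt continuousAt_fst
    have c2 : ContinuousAt (fun x : ℝ × ℝ => |x.2|) (ρ, u) := by fun_prop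
    have e1 : ∀ᶠ x : ℝ × ℝ in nhds (ρ, u), 0 < x.1 :=
      continuousAt_fst.eventually (Ioi_mem_nhds hρ)
    exact e1.and (c1.eventually_lt c2 hu)
  have ev1 : ∀ ρ, 0 < ρ → ∀ u, k ρ < |u| → ∀ᶠ s in nhds ρ, 0 < s ∧ k s < |u| := by
    intro ρ hρ u hu
    have c : ContinuousAt (fun s : ℝ => (s, u)) ρ := by fun_prop
    exact c.eventually (ev ρ hρ u hu)
  have ev2 : ∀ ρ, 0 < ρ → ∀ u, k ρ < |u| → ∀ᶠ v in nhds u, 0 < ρ ∧ k ρ < |v| := by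
    intro ρ hρ u hu
    have c : ContinuousAt (fun v : ℝ => (ρ, v)) u := by fun_prop
    exact c.eventually (ev ρ hρ u hu)
  have p0 : ∀ ρ, 0 < ρ → ∀ u, k ρ < |u| → p ρ u = 0 := by
    intro ρ hρ u hu
    have : HasDerivAt (fun s => d s u) 0 ρ := (hasDerivAt_const ρ 0).congr_of_eventuallyEq (by
      filter_upwards [ev1 ρ hρ u hu] with s hs
      exact out s hs.1 u hs.2.le)
    exact (dp ρ hρ u).unique this
  have r0 : ∀ ρ, 0 < ρ → ∀ u, k ρ < |u| → r ρ u = 0 := by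
    intro ρ hρ u hu
    have : HasDerivAt (fun s => d ρ s) 0 u := (hasDerivAt_const u 0).congr_of_eventuallyEq (by
      filter_upwards [ev2 ρ hρ u hu] with s hs
      exact out ρ hρ s hs.2.le)
    exact (dr ρ hρ u).unique this
  have pde' : ∀ ρ, 0 < ρ → ∀ u, D ρ u = k1 ρ ^ 2 * B ρ u := by
    intro ρ hρ u
    rcases le_or_gt |u| (k ρ) with hu | hu
    · exact pde ρ hρ u hu
    · have t1 : HasDerivAt (fun s => p s u) 0 ρ := (hasDerivAt_const ρ 0).congr_of_eventuallyEq (by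
        filter_upwards [ev1 ρ hρ u hu] with s hs
        exact p0 s hs.1 u hs.2)
      have t2 : HasDerivAt (fun s => r ρ s) 0 u := (hasDerivAt_const u 0).congr_of_eventuallyEq (by
        filter_upwards [ev2 ρ hρ u hu] with s hs
        exact r0 ρ hρ s hs.2)
      rw [(pD ρ hρ u).unique t1, (rB ρ hρ u).unique t2, mul_zero]
  have fp := fun x (hx : x ∈ HP) => hasFDerivAt_of_partials p D A pD pA cD cA hx
  have fr := fun x (hx : x ∈ HP) => hasFDerivAt_of_partials r A B rA rB cA cB hx
  -- derivatives along curves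
  have pc : ∀ (σ : ℝ → ℝ) (σ' s : ℝ), 0 < s → HasDerivAt σ σ' s →
      HasDerivAt (fun s => p s (σ s)) (D s (σ s) + A s (σ s) * σ') s := by
    intro σ σ' s hs hσ
    have := (fp (s, σ s) (mem_HP.2 hs)).comp_hasDerivAt s ((hasDerivAt_id s).prodMk hσ)
    refine this.congr_deriv ?_
    simp
  have rc : ∀ (σ : ℝ → ℝ) (σ' s : ℝ), 0 < s → HasDerivAt σ σ' s →
      HasDerivAt (fun s => r s (σ s)) (A s (σ s) + B s (σ s) * σ') s := by
    intro σ σ' s hs hσ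
    have := (fr (s, σ s) (mem_HP.2 hs)).comp_hasDerivAt s ((hasDerivAt_id s).prodMk hσ)
    refine this.congr_deriv ?_
    simp
  have dw : ∀ c s, 0 < s → HasDerivAt (fun s => μ s * (p s (c - k s) + k1 s * r s (c - k s)))
      (μ1 s * (p s (c - k s) - k1 s * r s (c - k s))) s := by
    intro c s hs
    have hσ := (h.kd s hs).const_sub c
    have := (h.μd s hs).mul ((pc _ _ s hs hσ).add ((h.k1d s hs).mul (rc _ _ s hs hσ)))
    refine this.congr_deriv ?_
    have e1 := pde' s hs (c - k s)
    have e2 := h.rel2 s hs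
    simp only [Pi.add_apply, Pi.mul_apply]
    linear_combination μ s * e1 + r s (c - k s) * e2
  have dz : ∀ c s, 0 < s → HasDerivAt (fun s => μ s * (p s (c + k s) - k1 s * r s (c + k s)))
      (μ1 s * (p s (c + k s) + k1 s * r s (c + k s))) s := by
    intro c s hs
    have hσ := (h.kd s hs).const_add c
    have := (h.μd s hs).mul ((pc _ _ s hs hσ).sub ((h.k1d s hs).mul (rc _ _ s hs hσ)))
    refine this.congr_deriv ?_
    have e1 := pde' s hs (c + k s)
    have e2 := h.rel2 s hs
    simp only [Pi.sub_apply, Pi.mul_apply]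
    linear_combination μ s * e1 - r s (c + k s) * e2
  have main : ∀ R, 0 < R → ∀ n : ℕ, ∀ s, 0 < s → s ≤ R → ∀ u,
      |p s u + k1 s * r s u| ≤ q ^ n * (2 * C * k R * M) * φ s ∧
      |p s u - k1 s * r s u| ≤ q ^ n * (2 * C * k R * M) * φ s := by
    intro R hR n
    have kR := (h.kpos hR).le
    have N0 : 0 ≤ 2 * C * k R * M := by have := h.M0; positivity
    induction n with
    | zero =>
      intro s hs hsR u
      have hφ := h.φpos s hs
      rcases le_or_gt |u| (k s) with hu | hu
      · have b1 := pb s hs u hu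
        have b2 := rb s hs u hu
        have b3 : C * k s ^ 2 ≤ C * k R * M * φ s := by
          have := mul_le_mul (h.kle hs.le hsR) (h.leφ s hs) (h.kpos hs).le kR
          nlinarith
        rw [abs_le] at b1 b2
        rw [abs_le, abs_le, pow_zero, one_mul]
        refine ⟨⟨?_, ?_⟩, ⟨?_, ?_⟩⟩ <;> linarith
      · rw [p0 s hs u hu, r0 s hs u hu]
        simp only [mul_zero, add_zero, sub_zero, abs_zero, pow_zero, one_mul]
        exact ⟨by positivity, by positivity⟩
    | succ n ih =>
      intro s hs hsR u
      have m := h.μpos s hs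
      have Nn : 0 ≤ q ^ n * (2 * C * k R * M) := mul_nonneg (pow_nonneg h.q0.le n) N0
      have cb : ContinuousOn (fun s => μ s * (q ^ n * (2 * C * k R * M) * φ s)) (Ici 0) :=
        h.μcont.mul (continuousOn_const.mul h.φcont)
      have gen : ∀ y y' : ℝ → ℝ → ℝ, ∀ σ : ℝ → ℝ, σ s = u →
          (∀ t, 0 < t → t ≤ R → ∀ v, |y t v| ≤ q ^ n * (2 * C * k R * M) * φ t) →
          (∀ t, 0 < t → t ≤ R → ∀ v, |y' t v| ≤ q ^ n * (2 * C * k R * M) * φ t) →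
          (∀ t, 0 < t → HasDerivAt (fun t => μ t * y t (σ t)) (μ1 t * y' t (σ t)) t) →
          |y s u| ≤ q ^ (n + 1) * (2 * C * k R * M) * φ s := by
        intro y y' σ hσ hy hy' hd
        have := h.decay hs (fun t => μ t * y t (σ t)) (fun t => μ1 t * y' t (σ t)) Nn
          (fun t ht _ => hd t ht) (fun t ht hts => by
            rw [abs_mul]
            exact mul_le_mul_of_nonneg_left (hy' t ht (hts.trans hsR) _) (abs_nonneg _))
          (tendsto_zero_of_bound' hR cb (by simp [h.μ0]) (fun t ht htR => by
            rw [abs_mul, abs_of_pos (h.μpos t ht)]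
            exact mul_le_mul_of_nonneg_left (hy t ht htR _) (h.μpos t ht).le))
        simp only [hσ] at this
        rw [abs_mul, abs_of_pos m] at this
        rw [pow_succ']
        refine le_of_mul_le_mul_left ?_ m
        linarith
      constructor
      · exact gen (fun t v => p t v + k1 t * r t v) (fun t v => p t v - k1 t * r t v)
          (fun t => (u + k s) - k t) (by simp) (fun t ht htR v => (ih t ht htR v).1)
          (fun t ht htR v => (ih t ht htR v).2) (fun t ht => dw _ t ht)
      · exact gen (fun t v => p t v - k1 t * r t v) (fun t v => p t v + k1 t * r t v)
          (fun t => (u - k s) + k t) (by simp) (fun t ht htR v => (ih t ht htR v).2)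
          (fun t ht htR v => (ih t ht htR v).1) (fun t ht => dz _ t ht)
  have rz : ∀ ρ, 0 < ρ → ∀ u, r ρ u = 0 := by
    intro ρ hρ u
    have e1 := eq_zero_of_geom h.q0 h.q1 (fun n => (main ρ hρ n ρ hρ le_rfl u).1)
    have e2 := eq_zero_of_geom h.q0 h.q1 (fun n => (main ρ hρ n ρ hρ le_rfl u).2)
    have e3 : k1 ρ * r ρ u = 0 := by linarith
    exact (mul_eq_zero.1 e3).resolve_left (h.k1pos ρ hρ).ne'
  intro ρ hρ u
  have := is_const_of_deriv_eq_zero (f := fun v => d ρ v)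
    (fun v => (dr ρ hρ v).differentiableAt) (fun v => by rw [(dr ρ hρ v).deriv, rz ρ hρ v])
    u (k ρ)
  rw [this]
  exact out ρ hρ _ (le_abs_self _)

end KData

/-- The reference power `ρ ^ θ(ρ)`. -/
noncomputable def HH (ρstar γ₁ γ₂ ρ : ℝ) : ℝ :=
  ρ ^ (if ρ ≤ ρstar then (γ₁ - 1) / 2 else (γ₂ - 1) / 2)

theorem HH_pos (ρstar γ₁ γ₂ : ℝ) {ρ : ℝ} (hρ : 0 < ρ) : 0 < HH ρstar γ₁ γ₂ ρ :=
  Real.rpow_pos_of_pos hρ _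

theorem HH_two (ρstar γ₁ γ₂ : ℝ) {ρ : ℝ} (hρ : 0 < ρ) :
    ρ ^ (2 * (if ρ ≤ ρstar then (γ₁ - 1)/2 else (γ₂ - 1)/2)) = HH ρstar γ₁ γ₂ ρ ^ 2 := by
  unfold HH
  rw [mul_comm, Real.rpow_mul hρ.le]
  norm_num

theorem HH_one (ρstar γ₁ γ₂ : ℝ) {ρ : ℝ} (hρ : 0 < ρ) :
    ρ ^ ((if ρ ≤ ρstar then (γ₁ - 1)/2 else (γ₂ - 1)/2) + 1) = ρ * HH ρstar γ₁ γ₂ ρ := by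
  unfold HH
  rw [Real.rpow_add hρ, Real.rpow_one, mul_comm]

theorem HH_gamma (ρstar γ₁ γ₂ : ℝ) {ρ : ℝ} (hρ : 0 < ρ) :
    ρ ^ (if ρ ≤ ρstar then γ₁ else γ₂) = ρ * HH ρstar γ₁ γ₂ ρ ^ 2 := by
  rw [← HH_two ρstar γ₁ γ₂ hρ]
  have : (if ρ ≤ ρstar then γ₁ else γ₂)
      = 1 + 2 * (if ρ ≤ ρstar then (γ₁ - 1)/2 else (γ₂ - 1)/2) := by
    split_ifs <;> ring
  rw [this, Real.rpow_add hρ, Real.rpow_one]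

namespace KData
variable {k k1 k2 μ μ1 φ φ1 P e : ℝ → ℝ} {q M K ρstar γ₁ γ₂ : ℝ}

theorem special_unique (h : KData k k1 k2 μ μ1 φ φ1 q M)
    (hK : 0 < K) (Hk : ∀ ρ, 0 < ρ → HH ρstar γ₁ γ₂ ρ ≤ K * k ρ) {η η' : ℝ × ℝ → ℝ}
    (hη : IsSpecialEntropy ρstar γ₁ γ₂ k e η) (hη' : IsSpecialEntropy ρstar γ₁ γ₂ k e η') :
    ∀ ρ : ℝ, 0 < ρ → ∀ u : ℝ, η' (ρ, u) = η (ρ, u) := by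
  obtain ⟨cd, out, pde, C, C0, bd⟩ := hη
  obtain ⟨cd', out', pde', C', C0', bd'⟩ := hη'
  obtain ⟨p, r, A, B, D, cA, cB, cD, dp, dr, pD, pA, rA, rB⟩ := partials_of_contDiffOn cd
  obtain ⟨p', r', A', B', D', cA', cB', cD', dp', dr', pD', pA', rA', rB'⟩ :=
    partials_of_contDiffOn cd'
  have gpde : ∀ (η : ℝ × ℝ → ℝ) (p r B D : ℝ → ℝ → ℝ),
      (∀ ρ, 0 < ρ → ∀ u, HasDerivAt (fun s => η (s, u)) (p ρ u) ρ) →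
      (∀ ρ, 0 < ρ → ∀ u, HasDerivAt (fun v => η (ρ, v)) (r ρ u) u) →
      (∀ ρ, 0 < ρ → ∀ u, HasDerivAt (fun s => p s u) (D ρ u) ρ) →
      (∀ ρ, 0 < ρ → ∀ u, HasDerivAt (fun v => r ρ v) (B ρ u) u) →
      (∀ ρ : ℝ, 0 < ρ → ∀ u : ℝ, |u| ≤ k ρ →
        deriv (deriv (fun r => η (r, u))) ρ
          = deriv k ρ ^ 2 * deriv (deriv (fun v => η (ρ, v))) u) →
      ∀ ρ, 0 < ρ → ∀ u, |u| ≤ k ρ → D ρ u = k1 ρ ^ 2 * B ρ u := by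
    intro η p r B D dp dr pD rB pde ρ hρ u hu
    have := pde ρ hρ u hu
    have e1 : deriv (fun s => η (s, u)) =ᶠ[nhds ρ] fun s => p s u := by
      filter_upwards [Ioi_mem_nhds hρ] with s hs
      exact (dp s hs u).deriv
    have e2 : deriv (fun v => η (ρ, v)) = fun v => r ρ v := by
      ext v
      exact (dr ρ hρ v).deriv
    rw [e1.deriv_eq, e2, (pD ρ hρ u).deriv, (rB ρ hρ u).deriv, (h.kd ρ hρ).deriv] at this
    exact this
  have P1 := gpde η p r B D dp dr pD rB pde
  have P2 := gpde η' p' r' B' D' dp' dr' pD' rB' pde'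
  have gb : ∀ (η : ℝ × ℝ → ℝ) (p r : ℝ → ℝ → ℝ) (C : ℝ), 0 < C →
      (∀ ρ, 0 < ρ → ∀ u, HasDerivAt (fun s => η (s, u)) (p ρ u) ρ) →
      (∀ ρ, 0 < ρ → ∀ u, HasDerivAt (fun v => η (ρ, v)) (r ρ u) u) →
      (∀ ρ : ℝ, 0 < ρ → ∀ u : ℝ,
        |η (ρ, u)| ≤ C * (ρ * u ^ 2 + ρ ^ (if ρ ≤ ρstar then γ₁ else γ₂)) ∧
        |deriv (fun r => η (r, u)) ρ|
          ≤ C * (u ^ 2 + ρ ^ (2 * (if ρ ≤ ρstar then (γ₁ - 1)/2 else (γ₂ - 1)/2))) ∧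
        |deriv (fun v => η (ρ, v)) u|
          ≤ C * (ρ * |u| + ρ ^ ((if ρ ≤ ρstar then (γ₁ - 1)/2 else (γ₂ - 1)/2) + 1))) →
      ∀ ρ, 0 < ρ → ∀ u, |u| ≤ k ρ →
        |p ρ u| ≤ C * (1 + K ^ 2 + M * (1 + K)) * k ρ ^ 2 ∧
        |k1 ρ * r ρ u| ≤ C * (1 + K ^ 2 + M * (1 + K)) * k ρ ^ 2 := by
    intro η p r C C0 dp dr bd ρ hρ u hu
    obtain ⟨-, b1, b2⟩ := bd ρ hρ u
    rw [(dp ρ hρ u).deriv, HH_two _ _ _ hρ] at b1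
    rw [(dr ρ hρ u).deriv, HH_one _ _ _ hρ] at b2
    have hM := h.M0
    have kp := h.kpos hρ
    have hH := Hk ρ hρ
    have Hp := HH_pos ρstar γ₁ γ₂ hρ
    have k1p := h.k1pos ρ hρ
    have u2 : u ^ 2 ≤ k ρ ^ 2 := sq_le_sq' (abs_le.1 hu).1 (abs_le.1 hu).2
    have H2 : HH ρstar γ₁ γ₂ ρ ^ 2 ≤ (K * k ρ) ^ 2 := by gcongr
    have k1b : ρ * k1 ρ ≤ M * k ρ :=
      (h.k1le ρ hρ).trans (mul_le_mul_of_nonneg_left (h.φle ρ hρ) hM.le)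
    constructor
    · calc |p ρ u| ≤ _ := b1
        _ ≤ C * (k ρ ^ 2 + (K * k ρ) ^ 2) := by gcongr
        _ = C * (1 + K ^ 2) * k ρ ^ 2 := by ring
        _ ≤ _ := by
          have : 0 ≤ M * (1 + K) := by positivity
          exact mul_le_mul_of_nonneg_right (mul_le_mul_of_nonneg_left (by linarith) C0.le)
            (sq_nonneg _)
    · rw [abs_mul, abs_of_pos k1p]
      calc k1 ρ * |r ρ u| ≤ k1 ρ * (C * (ρ * |u| + ρ * HH ρstar γ₁ γ₂ ρ)) := by gcongr
        _ ≤ k1 ρ * (C * (ρ * k ρ + ρ * (K * k ρ))) := by gcongr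
        _ = C * (1 + K) * k ρ * (ρ * k1 ρ) := by ring
        _ ≤ C * (1 + K) * k ρ * (M * k ρ) := by gcongr
        _ = C * (M * (1 + K)) * k ρ ^ 2 := by ring
        _ ≤ _ := by
          have : 0 ≤ 1 + K ^ 2 := by positivity
          exact mul_le_mul_of_nonneg_right (mul_le_mul_of_nonneg_left (by linarith) C0.le)
            (sq_nonneg _)
  have B1 := gb η p r C C0 dp dr bd
  have B2 := gb η' p' r' C' C0' dp' dr' bd'
  have hM := h.M0
  intro ρ hρ u
  have key := h.unique (fun s v => η' (s, v) - η (s, v)) (fun s v => p' s v - p s v)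
    (fun s v => r' s v - r s v) (fun s v => A' s v - A s v) (fun s v => B' s v - B s v)
    (fun s v => D' s v - D s v)
    (C' * (1 + K ^ 2 + M * (1 + K)) + C * (1 + K ^ 2 + M * (1 + K))) (by positivity)
    (cA'.sub cA) (cB'.sub cB) (cD'.sub cD)
    (fun s hs v => (dp' s hs v).sub (dp s hs v)) (fun s hs v => (dr' s hs v).sub (dr s hs v))
    (fun s hs v => (pD' s hs v).sub (pD s hs v)) (fun s hs v => (pA' s hs v).sub (pA s hs v))
    (fun s hs v => (rA' s hs v).sub (rA s hs v)) (fun s hs v => (rB' s hs v).sub (rB s hs v))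
    (by
      intro s hs v hv
      rcases le_abs.1 hv with hv | hv
      · simp only [(out s hs v).1 hv, (out' s hs v).1 hv, sub_self]
      · have hv' : v ≤ - k s := by linarith
        simp only [(out s hs v).2 hv', (out' s hs v).2 hv', sub_self])
    (by
      intro s hs v hv
      simp only [P1 s hs v hv, P2 s hs v hv]
      ring)
    (by
      intro s hs v hv
      have a1 := (B1 s hs v hv).1
      have a2 := (B2 s hs v hv).1
      have a3 := abs_sub (p' s v) (p s v)
      rw [add_mul]
      linarith)
    (by
      intro s hs v hv
      have a1 := (B1 s hs v hv).2
      have a2 := (B2 s hs v hv).2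
      have a3 := abs_sub (k1 s * r' s v) (k1 s * r s v)
      rw [add_mul, mul_sub]
      linarith) ρ hρ u
  linarith

theorem special_exists (h : KData k k1 k2 μ μ1 φ φ1 q M)
    (hK : 0 < K) (kH : ∀ ρ, 0 < ρ → k ρ ≤ K * HH ρstar γ₁ γ₂ ρ)
    (ed : ∀ ρ, 0 < ρ → HasDerivAt e (P ρ / ρ ^ 2) ρ)
    (Pd : ∀ ρ, 0 < ρ → HasDerivAt P (ρ ^ 2 * k1 ρ ^ 2) ρ)
    (e0 : Tendsto e (nhdsWithin 0 (Ioi 0)) (nhds 0))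
    (P0 : Tendsto (fun ρ => P ρ / ρ) (nhdsWithin 0 (Ioi 0)) (nhds 0)) :
    ∃ η : ℝ × ℝ → ℝ, IsSpecialEntropy ρstar γ₁ γ₂ k e η := by
  obtain ⟨η, p, r, A, B, C, C0, cA, cB, dp, dr, pD, pA, rA, rB, bη, bp, br, odd, out⟩ := h.exists_eta
  have ck1 : ContinuousOn (fun x : ℝ × ℝ => k1 x.1) HP :=
    comp_fst (fun s hs => (h.k1d s hs).continuousAt.continuousWithinAt)
  have cD : ContinuousOn (fun x : ℝ × ℝ => k1 x.1 ^ 2 * B x.1 x.2) HP := (ck1.pow 2).mul cB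
  have C1p : ContDiffOn ℝ 1 (fun x : ℝ × ℝ => p x.1 x.2) HP := by
    have := contDiffOn_of_partials 0 p (fun s v => k1 s ^ 2 * B s v) A pD pA
      (by simpa using cD) (by simpa using cA)
    simpa using this
  have C1r : ContDiffOn ℝ 1 (fun x : ℝ × ℝ => r x.1 x.2) HP := by
    have := contDiffOn_of_partials 0 r A B rA rB
      (by simpa using cA) (by simpa using cB)
    simpa using this
  have C2 : ContDiffOn ℝ 2 (fun x : ℝ × ℝ => η x.1 x.2) HP := by
    have := contDiffOn_of_partials 1 η p r dp dr (by simpa using C1p) (by simpa using C1r)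
    have e : ((1:ℕ) : WithTop ℕ∞) + 1 = 2 := by rw [Nat.cast_one, one_add_one_eq_two]
    rw [e] at this
    exact this
  -- values of `p` outside the cone
  have pout : ∀ s, 0 < s → ∀ u, k s ≤ u → p s u - 1 / 2 * u ^ 2 = p s (k s) - 1 / 2 * k s ^ 2 := by
    intro s hs u hu
    have hd : ∀ v, k s ≤ v → HasDerivAt (fun v => p s v - 1 / 2 * v ^ 2) 0 v := by
      intro v hv
      refine ((pA s hs v).sub ((hasDerivAt_pow 2 v).const_mul (1 / 2))).congr_deriv ?_
      rw [(out s hs v hv).2]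
      norm_num
      ring
    exact constant_of_has_deriv_right_zero (a := k s) (b := u) (f := fun v => p s v - 1 / 2 * v ^ 2)
      (fun v hv => (hd v hv.1).continuousAt.continuousWithinAt)
      (fun v hv => (hd v hv.1).hasDerivWithinAt) u ⟨hu, le_rfl⟩
  have pval : ∀ ρ, 0 < ρ → ∀ u, k ρ ≤ u → p ρ u - 1 / 2 * u ^ 2 - (e ρ + P ρ / ρ) = 0 := by
    intro ρ hρ u hu
    refine zero_of_deriv_zero (fun s => p s u - 1 / 2 * u ^ 2 - (e s + P s / s)) ρ ?_ ?_ hρ le_rfl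
    · intro s hs hsρ
      have := ((pD s hs u).sub_const (1 / 2 * u ^ 2)).sub
        ((ed s hs).add ((Pd s hs).div (hasDerivAt_id s) hs.ne'))
      refine this.congr_deriv ?_
      rw [(out s hs u ((h.kle hs.le hsρ).trans hu)).1]
      simp only [id]
      field_simp
      ring
    · have t1 : Tendsto (fun s => p s u - 1 / 2 * u ^ 2) (nhdsWithin 0 (Ioi 0)) (nhds 0) := by
        refine tendsto_zero_of_bound' (b := fun s => k s * (k s + C * k s) + 1 / 2 * k s ^ 2) hρ ?_ ?_ ?_
        · have := h.kcont
          fun_prop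
        · simp [h.k0]
        · intro s hs hsρ
          rw [pout s hs u ((h.kle hs.le hsρ).trans hu)]
          have b := bp s hs (k s)
          rw [abs_of_pos (h.kpos hs)] at b
          have a := abs_sub (p s (k s)) (1 / 2 * k s ^ 2)
          rw [abs_of_nonneg (by positivity : 0 ≤ 1 / 2 * k s ^ 2)] at a
          linarith
      have := t1.sub (e0.add P0)
      simpa using this
  have ηval : ∀ ρ, 0 < ρ → ∀ u, k ρ ≤ u → η ρ u = 1 / 2 * ρ * u ^ 2 + ρ * e ρ := by
    intro ρ hρ u hu
    have := zero_of_deriv_zero (fun s => η s u - s * (1 / 2 * u ^ 2 + e s)) ρ ?_ ?_ hρ le_rfl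
    · linarith
    · intro s hs hsρ
      have h1 := (dp s hs u).sub ((hasDerivAt_id s).mul ((ed s hs).const_add (1 / 2 * u ^ 2)))
      refine h1.congr_deriv ?_
      have h2 := pval s hs u ((h.kle hs.le hsρ).trans hu)
      simp only [id]
      have : s * (P s / s ^ 2) = P s / s := by field_simp
      rw [this]
      linarith
    · have t1 : Tendsto (fun s => η s u) (nhdsWithin 0 (Ioi 0)) (nhds 0) := by
        refine tendsto_zero_of_bound (b := fun s => |u| * (s * (|u| + C * k s))) ?_ ?_ ?_
        · have := h.kcont
          fun_prop
        · simp
        · exact fun s hs => bη s hs u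
      have t2 : Tendsto (fun s : ℝ => s) (nhdsWithin 0 (Ioi 0)) (nhds 0) :=
        tendsto_id.mono_left nhdsWithin_le_nhds
      have := t1.sub (t2.mul (e0.const_add (1 / 2 * u ^ 2)))
      simpa using this
  refine ⟨fun x => η x.1 x.2, C2, ?_, ?_, 1 + C * K, by positivity, ?_⟩
  · intro ρ hρ u
    refine ⟨ηval ρ hρ u, fun hu => ?_⟩
    have h1 := ηval ρ hρ (-u) (by linarith)
    have h2 := odd ρ u
    simp only
    rw [h1] at h2
    linarith [h2, neg_sq u]
  · intro ρ hρ u hu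
    have e1 : deriv (fun s => η s u) =ᶠ[nhds ρ] fun s => p s u := by
      filter_upwards [Ioi_mem_nhds hρ] with s hs
      exact (dp s hs u).deriv
    have e2 : deriv (fun v => η ρ v) = fun v => r ρ v := by
      ext v
      exact (dr ρ hρ v).deriv
    simp only
    rw [e1.deriv_eq, e2, (pD ρ hρ u).deriv, (rB ρ hρ u).deriv, (h.kd ρ hρ).deriv]
  · intro ρ hρ u
    simp only
    rw [(dp ρ hρ u).deriv, (dr ρ hρ u).deriv, HH_two _ _ _ hρ, HH_one _ _ _ hρ, HH_gamma _ _ _ hρ]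
    have Hp := HH_pos ρstar γ₁ γ₂ hρ
    have kb := kH ρ hρ
    set H := HH ρstar γ₁ γ₂ ρ
    have b1 : |u| * (|u| + C * k ρ) ≤ (1 + C * K) * (u ^ 2 + H ^ 2) := by
      have a1 : |u| * (|u| + C * k ρ) ≤ |u| * (|u| + C * (K * H)) := by gcongr
      have a2 : |u| * H ≤ u ^ 2 + H ^ 2 := by
        rw [← sq_abs u]
        nlinarith [sq_nonneg (|u| - H), abs_nonneg u, mul_nonneg (abs_nonneg u) Hp.le]
      have a3 : C * K * (|u| * H) ≤ C * K * (u ^ 2 + H ^ 2) := by gcongr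
      have a4 : |u| * |u| = u ^ 2 := by rw [← sq_abs u]; ring
      nlinarith [sq_nonneg H]
    refine ⟨?_, (bp ρ hρ u).trans b1, ?_⟩
    · calc |η ρ u| ≤ _ := bη ρ hρ u
        _ = ρ * (|u| * (|u| + C * k ρ)) := by ring
        _ ≤ ρ * ((1 + C * K) * (u ^ 2 + H ^ 2)) := by gcongr
        _ = _ := by ring
    · calc |r ρ u| ≤ _ := br ρ hρ u
        _ ≤ ρ * (|u| + C * (K * H)) := by gcongr
        _ ≤ _ := by
          have : 0 ≤ C * K * (ρ * |u|) := by positivity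
          have : 0 ≤ ρ * H := by positivity
          nlinarith

end KData

/-- Smooth reference profile comparable with `ρ ^ θ(ρ)`. -/
noncomputable def ht (a b ρ : ℝ) : ℝ := ρ ^ a * (1 + ρ) ^ (b - a)

theorem ht_pos (a b : ℝ) {ρ : ℝ} (hρ : 0 < ρ) : 0 < ht a b ρ :=
  mul_pos (Real.rpow_pos_of_pos hρ _) (Real.rpow_pos_of_pos (by linarith) _)

theorem ht_zero {a b : ℝ} (ha : 0 < a) : ht a b 0 = 0 := by
  unfold ht
  rw [Real.zero_rpow ha.ne', zero_mul]

theorem ht_cont {a b : ℝ} (ha : 0 < a) : ContinuousOn (ht a b) (Ici 0) := by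
  apply ContinuousOn.mul
  · exact continuousOn_id.rpow_const (fun x _ => Or.inr ha.le)
  · refine (continuousOn_const.add continuousOn_id).rpow_const (fun x hx => Or.inl ?_)
    have : (0:ℝ) ≤ x := hx
    have h2 : 0 < 1 + x := by linarith
    exact h2.ne'

theorem ht_deriv (a b : ℝ) {ρ : ℝ} (hρ : 0 < ρ) :
    HasDerivAt (ht a b) (ht a b ρ * (a + (b - a) * (ρ / (1 + ρ))) / ρ) ρ := by
  have h1 : 0 < 1 + ρ := by linarith
  have := (Real.hasDerivAt_rpow_const (p := a) (Or.inl hρ.ne')).mul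
    (((hasDerivAt_id ρ).const_add 1).rpow_const (p := b - a) (Or.inl h1.ne'))
  refine this.congr_deriv ?_
  unfold ht
  simp only [id]
  rw [Real.rpow_sub_one hρ.ne', Real.rpow_sub_one h1.ne']
  field_simp

theorem ht_le {a b : ℝ} (hab : b ≤ a) {ρ : ℝ} (hρ : 0 < ρ) : ht a b ρ ≤ ρ ^ a := by
  unfold ht
  have h1 : (1 + ρ) ^ (b - a) ≤ 1 := Real.rpow_le_one_of_one_le_of_nonpos (by linarith) (by linarith)
  have h2 := Real.rpow_pos_of_pos hρ a
  nlinarith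

theorem slope_bounds {a b ρ : ℝ} (hab : b ≤ a) (hρ : 0 < ρ) :
    b ≤ a + (b - a) * (ρ / (1 + ρ)) ∧ a + (b - a) * (ρ / (1 + ρ)) ≤ a := by
  have h1 : 0 < ρ / (1 + ρ) := by positivity
  have h2 : ρ / (1 + ρ) ≤ 1 := by rw [div_le_one (by positivity)]; linarith
  constructor <;> nlinarith

/-- Comparison of primitives through derivatives. -/
theorem le_of_deriv_le {f g f' g' : ℝ → ℝ} (cf : ContinuousOn f (Ici 0)) (cg : ContinuousOn g (Ici 0))
    (h0 : f 0 = g 0) (hf : ∀ ρ, 0 < ρ → HasDerivAt f (f' ρ) ρ)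
    (hg : ∀ ρ, 0 < ρ → HasDerivAt g (g' ρ) ρ) (hle : ∀ ρ, 0 < ρ → f' ρ ≤ g' ρ) {ρ : ℝ} (hρ : 0 < ρ) :
    f ρ ≤ g ρ := by
  have mono : MonotoneOn (fun s => g s - f s) (Ici 0) := by
    apply monotoneOn_of_deriv_nonneg (convex_Ici 0) (cg.sub cf)
    · intro s hs
      rw [interior_Ici] at hs
      exact ((hg s hs).sub (hf s hs)).differentiableAt.differentiableWithinAt
    · intro s hs
      rw [interior_Ici] at hs
      have : deriv (g - f) s = _ := ((hg s hs).sub (hf s hs)).deriv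
      change 0 ≤ deriv (g - f) s
      rw [this]
      linarith [hle s hs]
  have := mono self_mem_Ici (show ρ ∈ Ici 0 from hρ.le) hρ.le
  simp only at this
  linarith

theorem mkKData (P1 P2 k : ℝ → ℝ) (a b s0 s1 r1 r2 : ℝ) (hb : 0 < b) (hab : b ≤ a) (ha1 : a < 1)
    (hs0 : 0 < s0) (hs1 : 0 < s1) (hr1 : 0 < r1)
    (P1pos : ∀ ρ, 0 < ρ → 0 < P1 ρ)
    (P1d : ∀ ρ, 0 < ρ → HasDerivAt P1 (P2 ρ) ρ)
    (P2c : ContinuousOn P2 (Ioi 0))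
    (H1 : ∀ ρ, 0 < ρ → 0 < 2 * P1 ρ + ρ * P2 ρ)
    (lo : ∀ ρ, 0 < ρ → s0 * ht a b ρ ≤ √(P1 ρ))
    (hi : ∀ ρ, 0 < ρ → √(P1 ρ) ≤ s1 * ht a b ρ)
    (end1 : ∀ ρ, 0 < ρ → ρ ≤ r1 → ρ * P2 ρ ≤ 2 * P1 ρ)
    (end2 : ∀ ρ, 0 < ρ → r2 ≤ ρ → ρ * P2 ρ ≤ 2 * P1 ρ)
    (hk : ∀ ρ, k ρ = ∫ y in (0:ℝ)..ρ, √(P1 y) / y) :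
    ∃ (k1 k2 μ μ1 φ φ1 : ℝ → ℝ) (q M : ℝ), KData k k1 k2 μ μ1 φ φ1 q M ∧
      (∀ ρ, 0 < ρ → k1 ρ = √(P1 ρ) / ρ) ∧
      ∃ K, 0 < K ∧ ∀ ρ, 0 < ρ → k ρ ≤ K * ht a b ρ ∧ ht a b ρ ≤ K * k ρ := by
  have ha : 0 < a := hb.trans_le hab
  set k1 : ℝ → ℝ := fun ρ => √(P1 ρ) / ρ with hk1
  have sp : ∀ ρ, 0 < ρ → 0 < √(P1 ρ) := fun ρ hρ => Real.sqrt_pos.2 (P1pos ρ hρ)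
  have k1pos : ∀ ρ, 0 < ρ → 0 < k1 ρ := fun ρ hρ => div_pos (sp ρ hρ) hρ
  -- logarithmic derivative of `μ`
  set m : ℝ → ℝ := fun ρ => (2 * P1 ρ - ρ * P2 ρ) / (4 * ρ * P1 ρ) with hm
  have k1d : ∀ ρ, 0 < ρ → HasDerivAt k1 (-2 * m ρ * k1 ρ) ρ := by
    intro ρ hρ
    have p := P1pos ρ hρ
    have := ((P1d ρ hρ).sqrt p.ne').div (hasDerivAt_id ρ) hρ.ne'
    refine this.congr_deriv ?_
    have e : √(P1 ρ) ^ 2 = P1 ρ := Real.sq_sqrt p.le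
    have s := (sp ρ hρ).ne'
    simp only [hm, hk1, id]
    rw [← e, Real.sqrt_sq (sp ρ hρ).le]
    field_simp
    ring
  have k1c : ContinuousOn k1 (Ioi 0) := fun ρ hρ => (k1d ρ hρ).continuousAt.continuousWithinAt
  have k1le : ∀ ρ, 0 < ρ → k1 ρ ≤ s1 * ρ ^ (a - 1) := by
    intro ρ hρ
    rw [Real.rpow_sub_one hρ.ne', ← mul_div_assoc]
    simp only [hk1]
    gcongr
    exact (hi ρ hρ).trans (mul_le_mul_of_nonneg_left (ht_le hab hρ) hs1.le)
  have k1int : ∀ ρ, 0 < ρ → IntervalIntegrable k1 volume 0 ρ := by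
    intro ρ hρ
    have hbd : IntervalIntegrable (fun x : ℝ => s1 * x ^ (a - 1)) volume 0 ρ :=
      (intervalIntegral.intervalIntegrable_rpow' (by linarith)).const_mul _
    apply hbd.mono_fun'
    · rw [uIoc_of_le hρ.le]
      exact (k1c.mono Ioc_subset_Ioi_self).aestronglyMeasurable measurableSet_Ioc
    · rw [uIoc_of_le hρ.le]
      filter_upwards [ae_restrict_mem measurableSet_Ioc] with s hs
      rw [Real.norm_eq_abs, abs_of_pos (k1pos s hs.1)]
      exact k1le s hs.1
  have hkf : k = fun ρ => ∫ y in (0:ℝ)..ρ, k1 y := by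
    ext ρ
    exact hk ρ
  have k0 : k 0 = 0 := by rw [hk]; simp
  have kd : ∀ ρ, 0 < ρ → HasDerivAt k (k1 ρ) ρ := by
    intro ρ hρ
    rw [hkf]
    exact intervalIntegral.integral_hasDerivAt_right (k1int ρ hρ)
      (k1c.stronglyMeasurableAtFilter isOpen_Ioi ρ hρ) (k1c.continuousAt (Ioi_mem_nhds hρ))
  have kcont : ContinuousOn k (Ici 0) := by
    intro ρ hρ
    rcases (show (0:ℝ) ≤ ρ from hρ).eq_or_lt with h | h
    · rw [← h]
      have h1 : ContinuousOn k (Icc 0 1) := by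
        rw [hkf]
        have := intervalIntegral.continuousOn_primitive_interval (f := k1) (μ := volume) (a := 0) (b := 1)
          (by
            rw [uIcc_of_le zero_le_one]
            exact (intervalIntegrable_iff_integrableOn_Icc_of_le zero_le_one).1 (k1int 1 one_pos))
        rwa [uIcc_of_le zero_le_one] at this
      have h2 := h1 0 (by simp)
      exact h2.mono_of_mem_nhdsWithin (Icc_mem_nhdsGE one_pos)
    · exact (kd ρ h).continuousAt.continuousWithinAt
  -- comparison of `k` with the reference profile
  have hthi : ∀ ρ, 0 < ρ → k ρ ≤ s1 / b * ht a b ρ := by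
    intro ρ hρ
    refine le_of_deriv_le kcont (continuousOn_const.mul (ht_cont ha))
      (by simp [k0, ht_zero ha]) kd (fun s hs => (ht_deriv a b hs).const_mul (s1 / b)) ?_ hρ
    intro s hs
    have p := ht_pos a b hs
    have t := (slope_bounds hab hs).1
    simp only [hk1]
    rw [← mul_div_assoc]
    gcongr
    calc √(P1 s) ≤ s1 * ht a b s := hi s hs
      _ = s1 / b * (ht a b s * b) := by field_simp
      _ ≤ _ := by gcongr
  have htlo : ∀ ρ, 0 < ρ → s0 / a * ht a b ρ ≤ k ρ := by
    intro ρ hρ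
    refine le_of_deriv_le (continuousOn_const.mul (ht_cont ha)) kcont
      (by simp [k0, ht_zero ha]) (fun s hs => (ht_deriv a b hs).const_mul (s0 / a)) kd ?_ hρ
    intro s hs
    have p := ht_pos a b hs
    have t := (slope_bounds hab hs).2
    simp only [hk1]
    rw [← mul_div_assoc]
    gcongr
    calc _ ≤ s0 / a * (ht a b s * a) := by gcongr
      _ = s0 * ht a b s := by field_simp
      _ ≤ _ := lo s hs
  have kpos : ∀ ρ, 0 < ρ → 0 < k ρ := fun ρ hρ =>
    (mul_pos (div_pos hs0 ha) (ht_pos a b hρ)).trans_le (htlo ρ hρ)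
  set c : ℝ := s0 * b / s1 with hc
  have cpos : 0 < c := by positivity
  have kc : ∀ ρ, 0 < ρ → c * k ρ ≤ ρ * k1 ρ := by
    intro ρ hρ
    have e : ρ * k1 ρ = √(P1 ρ) := by simp only [hk1]; field_simp
    rw [e]
    calc c * k ρ ≤ c * (s1 / b * ht a b ρ) := by gcongr; exact hthi ρ hρ
      _ = s0 * ht a b ρ := by rw [hc]; field_simp
      _ ≤ _ := lo ρ hρ
  have kC : ∀ ρ, 0 < ρ → ρ * k1 ρ ≤ s1 * a / s0 * k ρ := by
    intro ρ hρ
    have e : ρ * k1 ρ = √(P1 ρ) := by simp only [hk1]; field_simp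
    rw [e]
    calc √(P1 ρ) ≤ s1 * ht a b ρ := hi ρ hρ
      _ = s1 * a / s0 * (s0 / a * ht a b ρ) := by field_simp
      _ ≤ _ := by gcongr; exact htlo ρ hρ
  -- properties of `m`
  have mlt : ∀ ρ, 0 < ρ → m ρ ≤ 1 / ρ := by
    intro ρ hρ
    have p := P1pos ρ hρ
    simp only [hm]
    rw [div_le_div_iff₀ (by positivity) hρ]
    nlinarith [H1 ρ hρ]
  have mc : ContinuousOn m (Ioi 0) := by
    have c1 : ContinuousOn P1 (Ioi 0) := fun ρ hρ => (P1d ρ hρ).continuousAt.continuousWithinAt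
    refine ContinuousOn.div (by fun_prop) (by fun_prop) ?_
    intro x hx
    have := P1pos x hx
    have : (0:ℝ) < x := hx
    positivity
  have mend : ∀ ρ, 0 < ρ → (ρ ≤ r1 ∨ r2 ≤ ρ) → 0 ≤ m ρ := by
    intro ρ hρ h
    have p := P1pos ρ hρ
    simp only [hm]
    apply div_nonneg _ (by positivity)
    rcases h with h | h
    · linarith [end1 ρ hρ h]
    · linarith [end2 ρ hρ h]
  obtain ⟨Mm, Mm0, hMm⟩ : ∃ Mm, 0 ≤ Mm ∧ ∀ ρ ∈ Icc r1 r2, |m ρ| ≤ Mm := by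
    obtain ⟨N, hN⟩ := isCompact_Icc.exists_bound_of_continuousOn
      (mc.mono (fun x (hx : x ∈ Icc r1 r2) => hr1.trans_le hx.1))
    exact ⟨max N 0, le_max_right _ _, fun ρ hρ => (hN ρ hρ).trans (le_max_left _ _)⟩
  -- the integrating factor
  set μ : ℝ → ℝ := fun ρ => (√(k1 ρ))⁻¹ with hμ
  have μpos : ∀ ρ, 0 < ρ → 0 < μ ρ := fun ρ hρ => inv_pos.2 (Real.sqrt_pos.2 (k1pos ρ hρ))
  have μd : ∀ ρ, 0 < ρ → HasDerivAt μ (m ρ * μ ρ) ρ := by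
    intro ρ hρ
    have p := k1pos ρ hρ
    have := ((k1d ρ hρ).sqrt p.ne').inv (Real.sqrt_pos.2 p).ne'
    refine this.congr_deriv ?_
    have e : √(k1 ρ) ^ 2 = k1 ρ := Real.sq_sqrt p.le
    have s := (Real.sqrt_pos.2 p).ne'
    simp only [hμ]
    rw [e]
    field_simp
  have μ0 : μ 0 = 0 := by simp [hμ, hk1]
  have rel : ∀ ρ, 0 < ρ → μ ρ ^ 2 * k1 ρ = 1 := by
    intro ρ hρ
    have p := k1pos ρ hρ
    simp only [hμ]
    rw [inv_pow, Real.sq_sqrt p.le, inv_mul_cancel₀ p.ne']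
  have μsq : ∀ ρ, 0 < ρ → μ ρ = √((k1 ρ)⁻¹) := by
    intro ρ hρ
    rw [Real.sqrt_inv]
  have μcont : ContinuousOn μ (Ici 0) := by
    intro ρ hρ
    rcases (show (0:ℝ) ≤ ρ from hρ).eq_or_lt with h | h
    · rw [← h]
      have hlim : Tendsto μ (nhdsWithin 0 (Ioi 0)) (nhds 0) := by
        refine tendsto_zero_of_bound
          (b := fun s => √(s0⁻¹ * (s ^ (1 - a) * (1 + s) ^ (a - b)))) ?_ ?_ ?_
        · apply ContinuousOn.sqrt
          apply continuousOn_const.mul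
          apply ContinuousOn.mul
          · exact continuousOn_id.rpow_const (fun x _ => Or.inr (by linarith))
          · exact (continuousOn_const.add continuousOn_id).rpow_const (fun x _ => Or.inr (by linarith))
        · rw [Real.zero_rpow (by linarith)]
          simp
        · intro s hs
          rw [abs_of_pos (μpos s hs), μsq s hs]
          apply Real.sqrt_le_sqrt
          have h1 : 0 < 1 + s := by linarith
          have p := ht_pos a b hs
          have e : s0⁻¹ * (s ^ (1 - a) * (1 + s) ^ (a - b)) = (s0 * ht a b s / s)⁻¹ := by
            unfold ht
            rw [Real.rpow_sub hs, Real.rpow_one, Real.rpow_sub h1, Real.rpow_sub h1]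
            have := Real.rpow_pos_of_pos hs a
            have := Real.rpow_pos_of_pos h1 a
            have := Real.rpow_pos_of_pos h1 b
            field_simp
          rw [e]
          apply inv_anti₀ (by positivity)
          simp only [hk1]
          gcongr
          exact lo s hs
      have : ContinuousWithinAt μ (Ioi 0) 0 := by
        unfold ContinuousWithinAt
        rw [μ0]
        exact hlim
      exact continuousWithinAt_Ioi_iff_Ici.1 this
    · exact (μd ρ h).continuousAt.continuousWithinAt
  have mu1c : ContinuousOn (fun ρ => m ρ * μ ρ) (Ioi 0) := mc.mul (μcont.mono Ioi_subset_Ici_self)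
  have mu1int : ∀ ρ, 0 < ρ → IntervalIntegrable (fun ρ => m ρ * μ ρ) volume 0 ρ := by
    intro ρ hρ
    have i1 : IntervalIntegrable (fun ρ => m ρ * μ ρ) volume 0 r1 := by
      rw [intervalIntegrable_iff_integrableOn_Ioc_of_le hr1.le]
      apply intervalIntegral.integrableOn_deriv_of_nonneg (g := μ)
        (μcont.mono Icc_subset_Ici_self) (fun x hx => μd x hx.1)
      intro x hx
      exact mul_nonneg (mend x hx.1 (Or.inl hx.2.le)) (μpos x hx.1).le
    refine i1.trans (ContinuousOn.intervalIntegrable (mu1c.mono ?_))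
    intro x hx
    exact (lt_min hr1 hρ).trans_le hx.1
  -- the weight
  set q : ℝ := 1 / (1 + c) with hq
  have q0 : 0 < q := by positivity
  have q1 : q < 1 := by
    rw [hq, div_lt_one (by positivity)]
    linarith
  have qe : q * (1 + c) = 1 := by rw [hq]; field_simp
  set L : ℝ := (1 + 1 / q) * Mm * (1 + r2) ^ 2 with hL
  have L0 : 0 ≤ L := by positivity
  set E : ℝ → ℝ := fun ρ => Real.exp (-(L / (1 + ρ))) with hE
  have Epos : ∀ ρ, 0 < E ρ := fun ρ => Real.exp_pos _
  have Ele : ∀ ρ, 0 < ρ → E ρ ≤ 1 := by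
    intro ρ hρ
    apply Real.exp_le_one_iff.2
    have : 0 ≤ L / (1 + ρ) := by positivity
    linarith
  have leE : ∀ ρ, 0 < ρ → 1 ≤ Real.exp L * E ρ := by
    intro ρ hρ
    simp only [hE]
    rw [← Real.exp_add]
    apply Real.one_le_exp
    have : L / (1 + ρ) ≤ L := div_le_self L0 (by linarith)
    linarith
  have Ed : ∀ ρ, 0 < ρ → HasDerivAt E (E ρ * (L / (1 + ρ) ^ 2)) ρ := by
    intro ρ hρ
    have h1 : (1 + ρ) ≠ 0 := by positivity
    have := (((hasDerivAt_const ρ L).div ((hasDerivAt_id ρ).const_add 1) h1).neg).exp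
    refine this.congr_deriv ?_
    simp only [hE, Pi.neg_apply, Pi.div_apply, id]
    field_simp
    ring
  have Ec : ContinuousOn E (Ici 0) := by
    apply Real.continuous_exp.comp_continuousOn
    refine (continuousOn_const.div (by fun_prop) ?_).neg
    intro x hx
    have : (0:ℝ) ≤ x := hx
    positivity
  -- where `m < 0` the weight compensates
  have mneg : ∀ ρ, 0 < ρ → m ρ < 0 → (1 + 1 / q) * |m ρ| ≤ L / (1 + ρ) ^ 2 := by
    intro ρ hρ hneg
    have hmem : ρ ∈ Icc r1 r2 := by
      constructor
      · by_contra hcon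
        exact absurd (mend ρ hρ (Or.inl (not_le.1 hcon).le)) (not_le.2 hneg)
      · by_contra hcon
        exact absurd (mend ρ hρ (Or.inr (not_le.1 hcon).le)) (not_le.2 hneg)
    rw [le_div_iff₀ (by positivity), hL]
    have h1 := hMm ρ hmem
    have h2 := hmem.2
    gcongr
  have iq : 1 ≤ 1 / q := by rw [le_div_iff₀ q0]; linarith
  refine ⟨k1, fun ρ => -2 * m ρ * k1 ρ, μ, fun ρ => m ρ * μ ρ, fun ρ => k ρ * E ρ,
    fun ρ => k1 ρ * E ρ + k ρ * (E ρ * (L / (1 + ρ) ^ 2)), q,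
    Real.exp L + s1 * a / s0 * Real.exp L, ?_, fun ρ _ => rfl, s1 / b + a / s0, by positivity, ?_⟩
  · refine ⟨k0, kcont, kd, k1d, k1pos, μ0, μcont, μpos, μd, mu1c, mu1int, rel, ?_, by simp [k0],
      kcont.mul Ec, fun ρ hρ => mul_pos (kpos ρ hρ) (Epos ρ), fun ρ hρ => (kd ρ hρ).mul (Ed ρ hρ),
      ?_, ?_, ?_, ?_, ?_, q0, q1, by positivity⟩
    · intro ρ hρ
      ring
    · intro ρ hρ
      have := mul_le_mul_of_nonneg_left (Ele ρ hρ) (kpos ρ hρ).le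
      simpa using this
    · intro ρ hρ
      have h1 := leE ρ hρ
      have h2 := kpos ρ hρ
      have h3 := Epos ρ
      have h4 : 0 ≤ s1 * a / s0 * Real.exp L * (k ρ * E ρ) := by positivity
      nlinarith
    · intro ρ hρ
      have h1 := leE ρ hρ
      have h2 := kpos ρ hρ
      have h3 := Epos ρ
      have h4 := kC ρ hρ
      have h5 : 0 ≤ Real.exp L * (k ρ * E ρ) := by positivity
      have h6 : s1 * a / s0 * k ρ * 1 ≤ s1 * a / s0 * k ρ * (Real.exp L * E ρ) := by gcongr
      linarith
    · intro ρ hρ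
      have key := intervalIntegral.integral_le_sub_of_hasDeriv_right_of_le (a := 0) (b := ρ)
        (g := fun s => Real.exp L * (μ s * E s))
        (g' := fun s => Real.exp L * (m s * μ s * E s + μ s * (E s * (L / (1 + s) ^ 2))))
        (φ := fun s => |m s * μ s|) hρ.le
        (continuousOn_const.mul ((μcont.mul Ec).mono Icc_subset_Ici_self))
        (fun x hx => (((μd x hx.1).mul (Ed x hx.1)).const_mul _).hasDerivWithinAt)
        ((intervalIntegrable_iff_integrableOn_Icc_of_le hρ.le).1 (mu1int ρ hρ).abs)
        (by
          intro s hs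
          have hs := hs.1
          have p := μpos s hs
          have h1 := leE s hs
          have h2 := Epos s
          have h3 : |m s| ≤ m s + L / (1 + s) ^ 2 := by
            rcases le_or_gt 0 (m s) with h | h
            · rw [abs_of_nonneg h]
              have : 0 ≤ L / (1 + s) ^ 2 := by positivity
              linarith
            · have := mneg s hs h
              rw [abs_of_neg h] at *
              nlinarith
          rw [abs_mul, abs_of_pos p]
          calc |m s| * μ s = 1 * (|m s| * μ s) := by ring
            _ ≤ (Real.exp L * E s) * (|m s| * μ s) := by gcongr
            _ ≤ (Real.exp L * E s) * ((m s + L / (1 + s) ^ 2) * μ s) := by gcongr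
            _ = _ := by ring)
      simp only [μ0, zero_mul, mul_zero, sub_zero] at key
      have h1 := Ele ρ hρ
      have p := μpos ρ hρ
      have h2 : Real.exp L * (μ ρ * E ρ) ≤ Real.exp L * (μ ρ * 1) := by gcongr
      have h3 : 0 ≤ s1 * a / s0 * Real.exp L * μ ρ := by positivity
      linarith
    · intro ρ hρ
      have p := μpos ρ hρ
      have kp := kpos ρ hρ
      have Ep := Epos ρ
      have h3 : |m ρ| * k ρ ≤ q * (m ρ * k ρ + k1 ρ + k ρ * (L / (1 + ρ) ^ 2)) := by
        rcases le_or_gt 0 (m ρ) with h | h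
        · rw [abs_of_nonneg h]
          have h4 : 0 ≤ k ρ * (L / (1 + ρ) ^ 2) := by positivity
          have h5 : c * (m ρ * k ρ) ≤ k1 ρ := by
            have h6 := mlt ρ hρ
            have h7 := kc ρ hρ
            calc c * (m ρ * k ρ) = m ρ * (c * k ρ) := by ring
              _ ≤ m ρ * (ρ * k1 ρ) := by gcongr
              _ ≤ 1 / ρ * (ρ * k1 ρ) := by
                have := (k1pos ρ hρ).le
                gcongr
              _ = k1 ρ := by field_simp
          calc m ρ * k ρ = q * (1 + c) * (m ρ * k ρ) := by rw [qe, one_mul]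
            _ = q * (m ρ * k ρ + c * (m ρ * k ρ)) := by ring
            _ ≤ _ := by
              apply mul_le_mul_of_nonneg_left _ q0.le
              linarith
        · have h4 := mneg ρ hρ h
          have h5 := k1pos ρ hρ
          have h6 : q * ((1 + 1 / q) * |m ρ| * k ρ) ≤ q * (L / (1 + ρ) ^ 2 * k ρ) := by gcongr
          have h7 : q * ((1 + 1 / q) * |m ρ| * k ρ) = q * |m ρ| * k ρ + |m ρ| * k ρ := by
            field_simp
          have h8 : 0 < q * k1 ρ := by positivity
          rw [abs_of_neg h] at *
          linarith
      rw [abs_mul, abs_of_pos p]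
      have h4 := mul_le_mul_of_nonneg_left h3 (mul_pos p Ep).le
      linarith
  · intro ρ hρ
    have h1 := hthi ρ hρ
    have h2 := htlo ρ hρ
    have p := ht_pos a b hρ
    have kp := kpos ρ hρ
    constructor
    · have : 0 ≤ a / s0 * ht a b ρ := by positivity
      linarith
    · have h3 : a / s0 * (s0 / a * ht a b ρ) ≤ a / s0 * k ρ := by gcongr
      have h4 : a / s0 * (s0 / a * ht a b ρ) = ht a b ρ := by field_simp
      have : 0 ≤ s1 / b * k ρ := by positivity
      linarith

theorem ht_le_b {a b : ℝ} (hab : b ≤ a) {ρ : ℝ} (hρ : 0 < ρ) : ht a b ρ ≤ ρ ^ b := by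
  unfold ht
  have h1 : (1 + ρ) ^ (b - a) ≤ ρ ^ (b - a) :=
    Real.rpow_le_rpow_of_nonpos hρ (by linarith) (by linarith)
  calc ρ ^ a * (1 + ρ) ^ (b - a) ≤ ρ ^ a * ρ ^ (b - a) :=
        mul_le_mul_of_nonneg_left h1 (Real.rpow_pos_of_pos hρ _).le
    _ = ρ ^ b := by rw [← Real.rpow_add hρ]; congr 1; ring

theorem ht_ge_a {a b R : ℝ} (hab : b ≤ a) {ρ : ℝ} (hρ : 0 < ρ) (hR : ρ ≤ R) :
    ρ ^ a ≤ (1 + R) ^ (a - b) * ht a b ρ := by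
  unfold ht
  have h1 : (1 + ρ) ^ (a - b) ≤ (1 + R) ^ (a - b) :=
    Real.rpow_le_rpow (by linarith) (by linarith) (by linarith)
  have h2 : (1 + ρ) ^ (a - b) * (1 + ρ) ^ (b - a) = 1 := by
    rw [← Real.rpow_add (by linarith)]; simp
  have h3 : 0 < (1 + ρ) ^ (b - a) := Real.rpow_pos_of_pos (by linarith) _
  have h4 := Real.rpow_pos_of_pos hρ a
  calc ρ ^ a = (1 + ρ) ^ (a - b) * (ρ ^ a * (1 + ρ) ^ (b - a)) := by
        linear_combination (-ρ ^ a) * h2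
    _ ≤ _ := mul_le_mul_of_nonneg_right h1 (by positivity)

theorem ht_ge_b {a b r : ℝ} (hab : b ≤ a) {ρ : ℝ} (hr : 0 < r) (hρ : r ≤ ρ) :
    ρ ^ b ≤ ((1 + r) / r) ^ (a - b) * ht a b ρ := by
  unfold ht
  have hρ0 : 0 < ρ := hr.trans_le hρ
  have h1 : ((1 + ρ) / ρ) ^ (a - b) ≤ ((1 + r) / r) ^ (a - b) := by
    apply Real.rpow_le_rpow (by positivity) _ (by linarith)
    rw [div_le_div_iff₀ hρ0 hr]
    nlinarith
  have h2 : (1 + ρ) ^ (a - b) * (1 + ρ) ^ (b - a) = 1 := by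
    rw [← Real.rpow_add (by linarith)]; simp
  have h3 : 0 < (1 + ρ) ^ (b - a) := Real.rpow_pos_of_pos (by linarith) _
  have h4 := Real.rpow_pos_of_pos hρ0 a
  have h5 : ρ ^ b * ρ ^ (a - b) = ρ ^ a := by
    rw [← Real.rpow_add hρ0]; congr 1; ring
  have h6 := Real.rpow_pos_of_pos hρ0 (a - b)
  calc ρ ^ b = ((1 + ρ) / ρ) ^ (a - b) * (ρ ^ a * (1 + ρ) ^ (b - a)) := by
        rw [Real.div_rpow (by linarith) hρ0.le, ← h5]
        field_simp
        linear_combination (-1) * h2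
    _ ≤ _ := mul_le_mul_of_nonneg_right h1 (by positivity)

theorem ht_HH {ρstar γ₁ γ₂ : ℝ} (hs : 0 < ρstar) (hg : γ₂ ≤ γ₁) :
    ∃ D, 0 < D ∧ ∀ ρ, 0 < ρ → ht ((γ₁-1)/2) ((γ₂-1)/2) ρ ≤ HH ρstar γ₁ γ₂ ρ ∧
      HH ρstar γ₁ γ₂ ρ ≤ D * ht ((γ₁-1)/2) ((γ₂-1)/2) ρ := by
  have hab : (γ₂-1)/2 ≤ (γ₁-1)/2 := by linarith
  have p1 : 0 < (1 + ρstar) ^ ((γ₁-1)/2 - (γ₂-1)/2) := Real.rpow_pos_of_pos (by linarith) _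
  have p2 : 0 < ((1 + ρstar) / ρstar) ^ ((γ₁-1)/2 - (γ₂-1)/2) :=
    Real.rpow_pos_of_pos (by positivity) _
  refine ⟨_, add_pos p1 p2, fun ρ hρ => ?_⟩
  have h0 := ht_pos ((γ₁-1)/2) ((γ₂-1)/2) hρ
  unfold HH
  split_ifs with h
  · have := ht_ge_a hab hρ h
    exact ⟨ht_le hab hρ, by nlinarith [mul_pos p2 h0]⟩
  · have := ht_ge_b hab hs (not_le.1 h).le
    exact ⟨ht_le_b hab hρ, by nlinarith [mul_pos p1 h0]⟩

theorem power_est {P Q : ℝ → ℝ} {κ γ ρ δ : ℝ} (hρ : 0 < ρ) (hγ1 : 1 < γ) (hγ3 : γ < 3) (hκ : 0 < κ)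
    (ev : ∀ᶠ x in nhds ρ, P x = κ * x ^ γ * (1 + Q x)) (Qc : ContDiffOn ℝ 4 Q (Ioi 0))
    (q0 : |Q ρ| ≤ δ) (q1 : |ρ * deriv Q ρ| ≤ δ) (q2 : |ρ ^ 2 * deriv (deriv Q) ρ| ≤ δ)
    (hδ : δ ≤ 1 / 10) (hδ' : δ ≤ (3 - γ) / 10) :
    κ * γ / 2 * ρ ^ (γ - 1) ≤ deriv P ρ ∧ deriv P ρ ≤ 2 * (κ * γ) * ρ ^ (γ - 1) ∧
      ρ * deriv (deriv P) ρ ≤ 2 * deriv P ρ := by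
  have hQ : ∀ x, 0 < x → HasDerivAt Q (deriv Q x) x := fun x hx =>
    ((Qc.contDiffAt (Ioi_mem_nhds hx)).differentiableAt (by norm_num)).hasDerivAt
  have hQ1c : ContDiffOn ℝ 3 (deriv Q) (Ioi 0) :=
    ((contDiffOn_succ_iff_deriv_of_isOpen (n := 3) isOpen_Ioi).1 (by exact_mod_cast Qc)).2.2
  have hQ1 : HasDerivAt (deriv Q) (deriv (deriv Q) ρ) ρ :=
    ((hQ1c.contDiffAt (Ioi_mem_nhds hρ)).differentiableAt (by norm_num)).hasDerivAt
  have hp : ∀ (p x : ℝ), 0 < x → HasDerivAt (fun y : ℝ => y ^ p) (p * x ^ (p - 1)) x :=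
    fun p x hx => Real.hasDerivAt_rpow_const (Or.inl hx.ne')
  have hP : ∀ᶠ x in nhds ρ,
      deriv P x = κ * (γ * x ^ (γ - 1)) * (1 + Q x) + κ * x ^ γ * deriv Q x := by
    filter_upwards [ev.eventually_nhds, Ioi_mem_nhds hρ] with x hx hx0
    have h := (((hp γ x hx0).const_mul κ).mul ((hQ x hx0).const_add 1))
    exact (h.congr_of_eventuallyEq hx).deriv
  have hd2 := ((((hp (γ-1) ρ hρ).const_mul γ).const_mul κ).mul ((hQ ρ hρ).const_add 1)).add
    (((hp γ ρ hρ).const_mul κ).mul hQ1)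
  have e2 := (hd2.congr_of_eventuallyEq hP).deriv
  have e1 := hP.self_of_nhds
  have r1 : ρ ^ γ = ρ * ρ ^ (γ - 1) := by rw [Real.rpow_sub_one hρ.ne']; field_simp
  have r2 : ρ * ρ ^ (γ - 1 - 1) = ρ ^ (γ - 1) := by rw [Real.rpow_sub_one hρ.ne' (γ - 1)]; field_simp
  have X := Real.rpow_pos_of_pos hρ (γ - 1)
  have E1 : deriv P ρ = κ * ρ ^ (γ - 1) * (γ * (1 + Q ρ) + ρ * deriv Q ρ) := by
    rw [e1, r1]; ring
  have E2 : ρ * deriv (deriv P) ρ = κ * ρ ^ (γ - 1) *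
      (γ * (γ - 1) * (1 + Q ρ) + 2 * γ * (ρ * deriv Q ρ) + ρ ^ 2 * deriv (deriv Q) ρ) := by
    rw [e2, r1]
    linear_combination (κ * γ * (γ - 1) * (1 + Q ρ)) * r2
  have KX := mul_pos hκ X
  obtain ⟨a1, a2⟩ := abs_le.1 q0
  obtain ⟨b1, b2⟩ := abs_le.1 q1
  obtain ⟨c1, c2⟩ := abs_le.1 q2
  set A := Q ρ
  set B := ρ * deriv Q ρ
  set C := ρ ^ 2 * deriv (deriv Q) ρ
  rw [E2, E1]
  have g1 : γ / 2 ≤ γ * (1 + A) + B := by nlinarith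
  have g2 : γ * (1 + A) + B ≤ 2 * γ := by nlinarith
  have g3 : γ * (γ - 1) * (1 + A) + 2 * γ * B + C ≤ 2 * (γ * (1 + A) + B) := by
    have t1 : γ * (3 - γ) * (9 / 10) ≤ γ * (3 - γ) * (1 + A) :=
      mul_le_mul_of_nonneg_left (by linarith) (by nlinarith)
    have t2 : (2 * γ - 2) * B ≤ (2 * γ - 2) * ((3 - γ) / 10) :=
      mul_le_mul_of_nonneg_left (by linarith) (by linarith)
    nlinarith
  refine ⟨?_, ?_, ?_⟩
  · nlinarith [mul_le_mul_of_nonneg_left g1 KX.le]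
  · nlinarith [mul_le_mul_of_nonneg_left g2 KX.le]
  · nlinarith [mul_le_mul_of_nonneg_left g3 KX.le]

theorem small_Q {Q : ℝ → ℝ} {C α ρ δ : ℝ} (hρ : 0 < ρ)
    (h : ∀ j : ℕ, j ≤ 4 → |iteratedDeriv j Q ρ| ≤ C * ρ ^ (α - (j : ℝ))) (hδ : C * ρ ^ α ≤ δ) :
    |Q ρ| ≤ δ ∧ |ρ * deriv Q ρ| ≤ δ ∧ |ρ ^ 2 * deriv (deriv Q) ρ| ≤ δ := by
  have h0 := h 0 (by norm_num)
  have h1 := h 1 (by norm_num)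
  have h2 := h 2 (by norm_num)
  have e2 : iteratedDeriv 2 Q = deriv (deriv Q) := by
    rw [iteratedDeriv_succ, iteratedDeriv_one]
  rw [iteratedDeriv_zero] at h0
  rw [iteratedDeriv_one] at h1
  rw [e2] at h2
  rw [Real.rpow_sub_natCast hρ.ne'] at h0 h1 h2
  refine ⟨?_, ?_, ?_⟩
  · refine le_trans h0 ?_
    simpa using hδ
  · rw [abs_mul, abs_of_pos hρ]
    calc ρ * |deriv Q ρ| ≤ ρ * (C * (ρ ^ α / ρ ^ 1)) := mul_le_mul_of_nonneg_left h1 hρ.le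
      _ = C * ρ ^ α := by field_simp
      _ ≤ δ := hδ
  · have hp : 0 < ρ ^ 2 := by positivity
    rw [abs_mul, abs_of_pos hp]
    calc ρ ^ 2 * |deriv (deriv Q) ρ| ≤ ρ ^ 2 * (C * (ρ ^ α / ρ ^ 2)) := mul_le_mul_of_nonneg_left h2 hp.le
      _ = C * ρ ^ α := by field_simp
      _ ≤ δ := hδ

/-- Threshold near zero. -/
theorem exists_r1 {C α δ r : ℝ} (hα : 0 < α) (hδ : 0 < δ) (hr : 0 < r) :
    ∃ r1, 0 < r1 ∧ r1 < r ∧ ∀ ρ, 0 < ρ → ρ ≤ r1 → C * ρ ^ α ≤ δ := by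
  have t : Tendsto (fun ρ : ℝ => C * ρ ^ α) (nhds 0) (nhds 0) := by
    have := (Real.continuousAt_rpow_const 0 α (Or.inr hα.le)).tendsto.const_mul C
    simpa [Real.zero_rpow hα.ne'] using this
  have ev := t.eventually (Iic_mem_nhds hδ)
  obtain ⟨w, hw, hw2⟩ := Metric.eventually_nhds_iff.1 ev
  refine ⟨min w r / 2, by positivity, ?_, fun ρ h0 h1 => hw2 ?_⟩
  · have := min_le_right w r
    linarith
  · have := min_le_left w r
    have := lt_min hw hr
    rw [Real.dist_eq, sub_zero, abs_of_pos h0]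
    linarith

theorem exists_r2 {C α δ r : ℝ} (hα : 0 < α) (hδ : 0 < δ) :
    ∃ r2, r < r2 ∧ ∀ ρ, r2 ≤ ρ → C * ρ ^ (-α) ≤ δ := by
  have t : Tendsto (fun ρ : ℝ => C * ρ ^ (-α)) atTop (nhds 0) := by
    simpa using (tendsto_rpow_neg_atTop hα).const_mul C
  have ev := t.eventually (Iic_mem_nhds hδ)
  obtain ⟨w, hw⟩ := eventually_atTop.1 ev
  refine ⟨max w (r + 1), ?_, fun ρ h => hw ρ ((le_max_left _ _).trans h)⟩
  have := le_max_right w (r + 1)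
  linarith

/-- Global two-sided comparison from the two ends and compactness. -/
theorem global_comp {f g : ℝ → ℝ} {r1 r2 m1 M1 m2 M2 : ℝ} (hr1 : 0 < r1)
    (fp : ∀ ρ, 0 < ρ → 0 < f ρ) (gp : ∀ ρ, 0 < ρ → 0 < g ρ)
    (fc : ContinuousOn f (Ioi 0)) (gc : ContinuousOn g (Ioi 0))
    (hm1 : 0 < m1) (hm2 : 0 < m2)
    (E1 : ∀ ρ, 0 < ρ → ρ ≤ r1 → m1 * g ρ ≤ f ρ ∧ f ρ ≤ M1 * g ρ)
    (E2 : ∀ ρ, 0 < ρ → r2 ≤ ρ → m2 * g ρ ≤ f ρ ∧ f ρ ≤ M2 * g ρ) :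
    ∃ m M, 0 < m ∧ 0 < M ∧ ∀ ρ, 0 < ρ → m * g ρ ≤ f ρ ∧ f ρ ≤ M * g ρ := by
  have sub : Icc r1 (max r1 r2) ⊆ Ioi 0 := fun x hx => hr1.trans_le hx.1
  have c : ContinuousOn (fun ρ => f ρ / g ρ) (Icc r1 (max r1 r2)) :=
    (fc.mono sub).div (gc.mono sub) (fun x hx => (gp x (sub hx)).ne')
  have ne : (Icc r1 (max r1 r2)).Nonempty := nonempty_Icc.2 (le_max_left _ _)
  obtain ⟨x, hx, hx2⟩ := isCompact_Icc.exists_isMinOn ne c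
  obtain ⟨y, hy, hy2⟩ := isCompact_Icc.exists_isMaxOn ne c
  have px : 0 < f x / g x := div_pos (fp x (sub hx)) (gp x (sub hx))
  have py : 0 < f y / g y := div_pos (fp y (sub hy)) (gp y (sub hy))
  refine ⟨min (f x / g x) (min m1 m2), max (f y / g y) (max M1 M2), lt_min px (lt_min hm1 hm2),
    lt_max_of_lt_left py, fun ρ hρ => ?_⟩
  have G := gp ρ hρ
  have a1 : min (f x / g x) (min m1 m2) ≤ m1 := (min_le_right _ _).trans (min_le_left _ _)
  have a2 : min (f x / g x) (min m1 m2) ≤ m2 := (min_le_right _ _).trans (min_le_right _ _)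
  have a3 : min (f x / g x) (min m1 m2) ≤ f x / g x := min_le_left _ _
  have b1 : M1 ≤ max (f y / g y) (max M1 M2) := (le_max_left _ _).trans (le_max_right _ _)
  have b2 : M2 ≤ max (f y / g y) (max M1 M2) := (le_max_right _ _).trans (le_max_right _ _)
  have b3 : f y / g y ≤ max (f y / g y) (max M1 M2) := le_max_left _ _
  rcases le_total ρ r1 with h | h
  · obtain ⟨u, v⟩ := E1 ρ hρ h
    exact ⟨(mul_le_mul_of_nonneg_right a1 G.le).trans u, v.trans (mul_le_mul_of_nonneg_right b1 G.le)⟩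
  rcases le_total r2 ρ with h' | h'
  · obtain ⟨u, v⟩ := E2 ρ hρ h'
    exact ⟨(mul_le_mul_of_nonneg_right a2 G.le).trans u, v.trans (mul_le_mul_of_nonneg_right b2 G.le)⟩
  have mem : ρ ∈ Icc r1 (max r1 r2) := ⟨h, h'.trans (le_max_right _ _)⟩
  have u : f x / g x ≤ f ρ / g ρ := hx2 mem
  have v : f ρ / g ρ ≤ f y / g y := hy2 mem
  exact ⟨(le_div_iff₀ G).1 (a3.trans u), (div_le_iff₀ G).1 (v.trans b3)⟩

/-- The internal energy. -/
theorem energy_facts {P e : ℝ → ℝ} {γ B r : ℝ} (hγ : 1 < γ) (hr : 0 < r)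
    (Pc : ContinuousOn P (Ioi 0)) (hB : ∀ ρ, 0 < ρ → ρ ≤ r → |P ρ| ≤ B * ρ ^ γ)
    (he : ∀ ρ : ℝ, e ρ = ∫ s in (0:ℝ)..ρ, P s / s ^ 2) :
    (∀ ρ, 0 < ρ → HasDerivAt e (P ρ / ρ ^ 2) ρ) ∧
    Tendsto e (nhdsWithin 0 (Ioi 0)) (nhds 0) ∧
    Tendsto (fun ρ => P ρ / ρ) (nhdsWithin 0 (Ioi 0)) (nhds 0) := by
  have c : ContinuousOn (fun s => P s / s ^ 2) (Ioi 0) :=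
    Pc.div (continuousOn_id.pow 2) (fun x hx => by
      have : (0:ℝ) < x := hx
      exact pow_ne_zero 2 this.ne')
  have ms : ∀ ρ, AEStronglyMeasurable (fun s => P s / s ^ 2) (volume.restrict (Ioc 0 ρ)) := fun ρ =>
    (c.mono (fun x hx => hx.1)).aestronglyMeasurable measurableSet_Ioc
  have bd : ∀ s, 0 < s → s ≤ r → |P s / s ^ 2| ≤ B * s ^ (γ - 2) := by
    intro s hs hsr
    have e2 : s ^ (γ - 2) = s ^ γ / s ^ 2 := by
      have := Real.rpow_sub_natCast hs.ne' γ 2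
      simpa using this
    rw [abs_div, abs_of_pos (show (0:ℝ) < s ^ 2 by positivity), e2, ← mul_div_assoc]
    exact div_le_div_of_nonneg_right (hB s hs hsr) (by positivity)
  have iir : IntervalIntegrable (fun s => P s / s ^ 2) volume 0 r := by
    have g : IntervalIntegrable (fun s : ℝ => B * s ^ (γ - 2)) volume 0 r :=
      (intervalIntegral.intervalIntegrable_rpow' (by linarith)).const_mul B
    rw [intervalIntegrable_iff_integrableOn_Ioc_of_le hr.le] at g ⊢
    refine Integrable.mono' g (ms r) ?_
    filter_upwards [ae_restrict_mem measurableSet_Ioc] with s hs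
    exact bd s hs.1 hs.2
  have ii : ∀ ρ, 0 < ρ → IntervalIntegrable (fun s => P s / s ^ 2) volume 0 ρ := by
    intro ρ hρ
    refine iir.trans ?_
    apply ContinuousOn.intervalIntegrable
    refine c.mono (fun x hx => ?_)
    exact (lt_min hr hρ).trans_le hx.1
  have eeq : e = fun ρ => ∫ s in (0:ℝ)..ρ, P s / s ^ 2 := funext he
  have ed : ∀ ρ, 0 < ρ → HasDerivAt e (P ρ / ρ ^ 2) ρ := by
    intro ρ hρ
    rw [eeq]
    exact intervalIntegral.integral_hasDerivAt_right (ii ρ hρ)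
      (c.stronglyMeasurableAtFilter isOpen_Ioi ρ hρ) (c.continuousAt (Ioi_mem_nhds hρ))
  refine ⟨ed, ?_, ?_⟩
  · have cc : ContinuousOn e (Icc 0 r) := by
      have := intervalIntegral.continuousOn_primitive_interval
        (a := 0) (b := r) (f := fun s => P s / s ^ 2) (μ := volume)
        (by rw [uIcc_of_le hr.le, integrableOn_Icc_iff_integrableOn_Ioc,
              ← intervalIntegrable_iff_integrableOn_Ioc_of_le hr.le]; exact iir)
      rw [uIcc_of_le hr.le] at this
      rw [eeq]; exact this
    have z : e 0 = 0 := by rw [he]; simp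
    have := (cc 0 ⟨le_rfl, hr.le⟩).tendsto
    rw [z] at this
    refine this.mono_left ?_
    rw [← nhdsWithin_Ioc_eq_nhdsGT hr]
    exact nhdsWithin_mono _ Ioc_subset_Icc_self
  · have t : Tendsto (fun ρ : ℝ => B * ρ ^ (γ - 1)) (nhdsWithin 0 (Ioi 0)) (nhds 0) := by
      have := (Real.continuousAt_rpow_const 0 (γ - 1) (Or.inr (by linarith))).tendsto.const_mul B
      rw [Real.zero_rpow (by linarith), mul_zero] at this
      exact this.mono_left nhdsWithin_le_nhds
    refine squeeze_zero_norm' ?_ t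
    filter_upwards [Ioc_mem_nhdsGT hr] with ρ h
    have h0 : 0 < ρ := h.1
    rw [Real.norm_eq_abs, abs_div, abs_of_pos h0, Real.rpow_sub_one h0.ne', ← mul_div_assoc]
    exact div_le_div_of_nonneg_right (hB ρ h0 h.2) h0.le

theorem special_entropy_exists_unique
    (P Q₁ Q₂ : ℝ → ℝ) (ρstar ρss γ₁ γ₂ κ₁ κ₂ Cs Css εe : ℝ)
    (hPC1 : ContDiffOn ℝ 1 P (Ici 0))
    (hPC4 : ContDiffOn ℝ 4 P (Ioi 0))
    (hH1 : ∀ ρ : ℝ, 0 < ρ → 0 < deriv P ρ ∧ 0 < 2 * deriv P ρ + ρ * deriv (deriv P) ρ)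
    (hρstar : 0 < ρstar) (hγ₁ : 1 < γ₁) (hγ₁3 : γ₁ < 3) (hκ₁ : 0 < κ₁) (hCs : 0 < Cs)
    (hQ₁C4 : ContDiffOn ℝ 4 Q₁ (Ioi 0))
    (hPsmall : ∀ ρ ∈ Ico (0:ℝ) ρstar, P ρ = κ₁ * ρ ^ γ₁ * (1 + Q₁ ρ))
    (hQ₁bd : ∀ ρ ∈ Ioo (0:ℝ) ρstar, ∀ j : ℕ, j ≤ 4 →
      |iteratedDeriv j Q₁ ρ| ≤ Cs * ρ ^ (γ₁ - 1 - (j : ℝ)))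
    (hρss : ρstar < ρss) (hγ₂ : 6/5 < γ₂) (hγ₂1 : γ₂ ≤ γ₁) (hκ₂ : 0 < κ₂)
    (hεe : 0 < εe) (hCss : 0 < Css)
    (hQ₂C4 : ContDiffOn ℝ 4 Q₂ (Ioi 0))
    (hPlarge : ∀ ρ : ℝ, ρss ≤ ρ → P ρ = κ₂ * ρ ^ γ₂ * (1 + Q₂ ρ))
    (hQ₂bd : ∀ ρ : ℝ, ρss ≤ ρ → ∀ j : ℕ, j ≤ 4 →
      |iteratedDeriv j Q₂ ρ| ≤ Css * ρ ^ (-εe - (j : ℝ)))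
    (k e : ℝ → ℝ)
    (hk : ∀ ρ : ℝ, k ρ = ∫ y in (0:ℝ)..ρ, Real.sqrt (deriv P y) / y)
    (he : ∀ ρ : ℝ, e ρ = ∫ s in (0:ℝ)..ρ, P s / s ^ 2) :
    ∃ η : ℝ × ℝ → ℝ, IsSpecialEntropy ρstar γ₁ γ₂ k e η ∧
      ∀ η' : ℝ × ℝ → ℝ, IsSpecialEntropy ρstar γ₁ γ₂ k e η' →
        ∀ ρ : ℝ, 0 < ρ → ∀ u : ℝ, η' (ρ, u) = η (ρ, u) := by
  have hPd1 : ∀ ρ, 0 < ρ → HasDerivAt P (deriv P ρ) ρ := fun x hx =>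
    ((hPC4.contDiffAt (Ioi_mem_nhds hx)).differentiableAt (by norm_num)).hasDerivAt
  have hP1c : ContDiffOn ℝ 3 (deriv P) (Ioi 0) :=
    ((contDiffOn_succ_iff_deriv_of_isOpen (n := 3) isOpen_Ioi).1 (by exact_mod_cast hPC4)).2.2
  have hPd2 : ∀ ρ, 0 < ρ → HasDerivAt (deriv P) (deriv (deriv P) ρ) ρ := fun x hx =>
    ((hP1c.contDiffAt (Ioi_mem_nhds hx)).differentiableAt (by norm_num)).hasDerivAt
  have hP2c : ContinuousOn (deriv (deriv P)) (Ioi 0) :=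
    (((contDiffOn_succ_iff_deriv_of_isOpen (n := 2) isOpen_Ioi).1
      (by exact_mod_cast hP1c)).2.2).continuousOn
  have hab : (γ₂ - 1) / 2 ≤ (γ₁ - 1) / 2 := by linarith
  have hδ : 0 < (3 - γ₁) / 20 := by linarith
  obtain ⟨r1, hr1, hr1s, hr1b⟩ := exists_r1 (C := Cs) (α := γ₁ - 1) (by linarith) hδ hρstar
  obtain ⟨r2, hr2s, hr2b⟩ := exists_r2 (C := Css) (α := εe) (r := ρss) hεe hδ
  have end1 : ∀ ρ, 0 < ρ → ρ ≤ r1 → κ₁ * γ₁ / 2 * ρ ^ (γ₁ - 1) ≤ deriv P ρ ∧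
      deriv P ρ ≤ 2 * (κ₁ * γ₁) * ρ ^ (γ₁ - 1) ∧ ρ * deriv (deriv P) ρ ≤ 2 * deriv P ρ := by
    intro ρ h0 h1
    obtain ⟨a, b, c⟩ := small_Q h0 (hQ₁bd ρ ⟨h0, h1.trans_lt hr1s⟩) (hr1b ρ h0 h1)
    refine power_est h0 hγ₁ hγ₁3 hκ₁ ?_ hQ₁C4 a b c (by linarith) (by linarith)
    filter_upwards [Ioo_mem_nhds h0 (h1.trans_lt hr1s)] with x hx
    exact hPsmall x ⟨hx.1.le, hx.2⟩
  have pos2 : ∀ ρ, r2 ≤ ρ → 0 < ρ := fun ρ h => by linarith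
  have end2 : ∀ ρ, 0 < ρ → r2 ≤ ρ → κ₂ * γ₂ / 2 * ρ ^ (γ₂ - 1) ≤ deriv P ρ ∧
      deriv P ρ ≤ 2 * (κ₂ * γ₂) * ρ ^ (γ₂ - 1) ∧ ρ * deriv (deriv P) ρ ≤ 2 * deriv P ρ := by
    intro ρ h0 h1
    obtain ⟨a, b, c⟩ := small_Q h0 (hQ₂bd ρ (by linarith)) (hr2b ρ h1)
    refine power_est h0 (by linarith) (by linarith) hκ₂ ?_ hQ₂C4 a b c (by linarith) (by linarith)
    filter_upwards [Ioi_mem_nhds (show ρss < ρ by linarith)] with x hx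
    exact hPlarge x (le_of_lt hx)
  have sqa : ∀ (γ ρ : ℝ), 0 < ρ → ρ ^ (γ - 1) = (ρ ^ ((γ - 1) / 2)) ^ 2 := by
    intro γ ρ h
    rw [← Real.rpow_natCast, ← Real.rpow_mul h.le]
    congr 1
    push_cast
    ring
  have hr2 : 0 < r2 := pos2 r2 le_rfl
  -- comparison of the derivative of the pressure with the squared profile
  obtain ⟨m, M, hm, hM, cmp⟩ := global_comp (f := deriv P)
    (g := fun ρ => ht ((γ₁ - 1) / 2) ((γ₂ - 1) / 2) ρ ^ 2) (r1 := r1) (r2 := r2)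
    (m1 := κ₁ * γ₁ / 2) (M1 := 2 * (κ₁ * γ₁) * ((1 + r1) ^ ((γ₁ - 1) / 2 - (γ₂ - 1) / 2)) ^ 2)
    (m2 := κ₂ * γ₂ / 2)
    (M2 := 2 * (κ₂ * γ₂) * (((1 + r2) / r2) ^ ((γ₁ - 1) / 2 - (γ₂ - 1) / 2)) ^ 2)
    hr1 (fun ρ h => (hH1 ρ h).1) (fun ρ h => pow_pos (ht_pos _ _ h) 2) hP1c.continuousOn
    (((ht_cont (by linarith)).mono Ioi_subset_Ici_self).pow 2)
    (by positivity) (by have : 0 < γ₂ := by linarith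
                        positivity)
    (by
      intro ρ h0 h1
      obtain ⟨l, u, -⟩ := end1 ρ h0 h1
      rw [sqa γ₁ ρ h0] at l u
      have H := ht_pos ((γ₁ - 1) / 2) ((γ₂ - 1) / 2) h0
      have q1 := pow_le_pow_left₀ H.le (ht_le hab h0) 2
      have q2 := pow_le_pow_left₀ (Real.rpow_pos_of_pos h0 _).le (ht_ge_a hab h0 h1) 2
      rw [mul_pow] at q2
      have c0 : 0 < κ₁ * γ₁ := by positivity
      refine ⟨(mul_le_mul_of_nonneg_left q1 (by positivity)).trans l, u.trans ?_⟩
      rw [mul_assoc _ _ (ht _ _ _ ^ 2)]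
      exact mul_le_mul_of_nonneg_left q2 (by positivity))
    (by
      intro ρ h0 h1
      obtain ⟨l, u, -⟩ := end2 ρ h0 h1
      rw [sqa γ₂ ρ h0] at l u
      have H := ht_pos ((γ₁ - 1) / 2) ((γ₂ - 1) / 2) h0
      have q1 := pow_le_pow_left₀ H.le (ht_le_b hab h0) 2
      have q2 := pow_le_pow_left₀ (Real.rpow_pos_of_pos h0 _).le (ht_ge_b hab hr2 h1) 2
      rw [mul_pow] at q2
      have c0 : 0 < κ₂ * γ₂ := mul_pos hκ₂ (by linarith)
      refine ⟨(mul_le_mul_of_nonneg_left q1 (by positivity)).trans l, u.trans ?_⟩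
      rw [mul_assoc _ _ (ht _ _ _ ^ 2)]
      exact mul_le_mul_of_nonneg_left q2 (by positivity))
  obtain ⟨k1, k2, μ, μ1, φ, φ1, q, N, hK, hk1, K, Kpos, hKk⟩ :=
    mkKData (deriv P) (deriv (deriv P)) k ((γ₁ - 1) / 2) ((γ₂ - 1) / 2) (√m) (√M) r1 r2
      (by linarith) hab (by linarith) (Real.sqrt_pos.2 hm) (Real.sqrt_pos.2 hM) hr1
      (fun ρ h => (hH1 ρ h).1) hPd2 hP2c (fun ρ h => (hH1 ρ h).2)
      (fun ρ h => by
        have := Real.sqrt_le_sqrt (cmp ρ h).1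
        rwa [Real.sqrt_mul hm.le, Real.sqrt_sq (ht_pos _ _ h).le] at this)
      (fun ρ h => by
        have := Real.sqrt_le_sqrt (cmp ρ h).2
        rwa [Real.sqrt_mul hM.le, Real.sqrt_sq (ht_pos _ _ h).le] at this)
      (fun ρ h h1 => (end1 ρ h h1).2.2) (fun ρ h h1 => (end2 ρ h h1).2.2) hk
  obtain ⟨D, hD, hDh⟩ := ht_HH (ρstar := ρstar) (γ₁ := γ₁) (γ₂ := γ₂) hρstar hγ₂1
  obtain ⟨ed, e0, P0⟩ := energy_facts (P := P) (e := e) (γ := γ₁) (B := κ₁ * 2) (r := r1) hγ₁ hr1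
    hPC4.continuousOn
    (by
      intro ρ h0 h1
      obtain ⟨a, -, -⟩ := small_Q h0 (hQ₁bd ρ ⟨h0, h1.trans_lt hr1s⟩) (hr1b ρ h0 h1)
      obtain ⟨a1, a2⟩ := abs_le.1 a
      have X := mul_pos hκ₁ (Real.rpow_pos_of_pos h0 γ₁)
      rw [hPsmall ρ ⟨h0.le, h1.trans_lt hr1s⟩, abs_mul, abs_of_pos X,
        abs_of_pos (show 0 < 1 + Q₁ ρ by linarith)]
      nlinarith) he
  obtain ⟨η, hη⟩ := hK.special_exists (ρstar := ρstar) (γ₁ := γ₁) (γ₂ := γ₂) (P := P) (e := e) Kpos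
    (fun ρ h => (hKk ρ h).1.trans (mul_le_mul_of_nonneg_left (hDh ρ h).1 Kpos.le)) ed
    (fun ρ h => by
      have := hPd1 ρ h
      rw [hk1 ρ h, div_pow, Real.sq_sqrt (hH1 ρ h).1.le]
      refine this.congr_deriv ?_
      field_simp) e0 P0
  refine ⟨η, hη, fun η' hη' => ?_⟩
  exact hK.special_unique (K := D * K) (mul_pos hD Kpos)
    (fun ρ h => (hDh ρ h).2.trans (by
      rw [mul_assoc]
      exact mul_le_mul_of_nonneg_left (hKk ρ h).2 hD.le)) hη hη'
end

section
/- Let a > 0 and let ρ : [a,∞) → [0,∞) be measurable with ∫ₐ^∞ ρ(r) r² dr < ∞ and ∫ₐ^∞ ρ(r)^{6/5} r² dr < ∞. Set G(r) = ∫ₐ^r ρ(z) z² dz. Then ∫ₐ^∞ G(r) ρ(r) r dr = ½ ∫ₐ^∞ r^{−2} G(r)² dr, and moreover ∫ₐ^∞ G(r) ρ(r) r dr ≤ (2/3) (2π²)^{−2/3} (4π)^{2/3} (∫ₐ^∞ ρ(r)^{6/5} r² dr)^{5/3}. -/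
open Set MeasureTheory Filter

lemma byparts_aux {a b : ℝ} (hab : a ≤ b) {F K f g : ℝ → ℝ}
    (hf : IntervalIntegrable f volume a b) (hg : IntervalIntegrable g volume a b)
    (hF : ∀ x ∈ Icc a b, F x = F a + ∫ t in a..x, f t)
    (hK : ∀ x ∈ Icc a b, K x = K a + ∫ t in a..x, g t) :
    ∫ x in a..b, (f x * K x + F x * g x) = F b * K b - F a * K a := by
  have ha' : a ∈ uIcc a b := left_mem_uIcc
  have hc : ∀ c : ℝ, AbsolutelyContinuousOnInterval (fun _ : ℝ => c) a b := fun c =>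
    (LipschitzWith.const c).lipschitzOnWith.absolutelyContinuousOnInterval
  have A1 := (hc (F a)).add (hf.absolutelyContinuousOnInterval_intervalIntegral ha')
  have A2 := (hc (K a)).add (hg.absolutelyContinuousOnInterval_intervalIntegral ha')
  have := A1.integral_deriv_mul_eq_sub A2
  simp only [Pi.add_apply, intervalIntegral.integral_same, add_zero] at this
  rw [← hF b ⟨hab, le_rfl⟩, ← hK b ⟨hab, le_rfl⟩] at this
  rw [← this]
  apply intervalIntegral.integral_congr_ae
  filter_upwards [hf.ae_hasDerivAt_integral, hg.ae_hasDerivAt_integral] with x h1 h2 hx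
  have hx' : x ∈ uIcc a b := uIoc_subset_uIcc hx
  have d1 := ((h1 hx' a ha').const_add (F a)).deriv
  have d2 := ((h2 hx' a ha').const_add (K a)).deriv
  rw [uIcc_of_le hab] at hx'
  rw [hF x hx', hK x hx']
  congr 1
  · congr 1
    exact d1.symm
  · congr 1
    exact d2.symm

lemma H0_one : ∫ y in (0:ℝ)..1, Real.sqrt (1 - y ^ 2) = Real.pi / 4 := by
  have h := integral_sqrt_one_sub_sq
  have hc : Continuous fun y : ℝ => Real.sqrt (1 - y ^ 2) := by fun_prop
  have h1 := intervalIntegral.integral_add_adjacent_intervals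
    (hc.intervalIntegrable (μ := volume) (-1) 0) (hc.intervalIntegrable 0 1)
  have h2 := intervalIntegral.integral_comp_neg (a := 0) (b := 1) (fun y : ℝ => Real.sqrt (1 - y ^ 2))
  simp only [neg_sq, neg_zero] at h2
  linarith

lemma calib_aux {r1 r2 : ℝ} (h12 : r1 ≤ r2) {P p e : ℝ → ℝ}
    (hP : ∀ r ∈ Icc r1 r2, HasDerivAt P (p r) r) (hp : ContinuousOn p (Icc r1 r2))
    (he : ContinuousOn e (Icc r1 r2))
    (hpe : ∀ r ∈ Icc r1 r2, p r ≤ e r) : P r2 - P r1 ≤ ∫ r in r1..r2, e r := by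
  rw [← uIcc_of_le h12] at hP hp he
  rw [← intervalIntegral.integral_eq_sub_of_hasDerivAt hP hp.intervalIntegrable]
  exact intervalIntegral.integral_mono_on h12 hp.intervalIntegrable he.intervalIntegrable hpe

lemma calib {a : ℝ} (ha : 0 < a) {f q : ℝ → ℝ} (hq : Continuous q)
    (hf : ∀ r, HasDerivAt f (-q r) r) {M : ℝ} (hf0 : ∀ r, a ≤ r → 0 ≤ f r)
    (hfM : ∀ r, a ≤ r → f r ≤ M / r) (hne : ∃ r, a ≤ r ∧ f r ≠ 0)
    (hE : IntegrableOn (fun r => q r ^ 2 * r ^ 2) (Ioi a))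
    (hJ : IntegrableOn (fun r => f r ^ 6 * r ^ 2) (Ioi a)) :
    27 / 256 * Real.pi ^ 2 * (∫ r in Ioi a, f r ^ 6 * r ^ 2) ≤
      (∫ r in Ioi a, q r ^ 2 * r ^ 2) ^ 3 := by
  have hfc : Continuous f := continuous_iff_continuousAt.2 fun r => (hf r).continuousAt
  set v : ℝ → ℝ := fun r => r * f r ^ 2 with hv
  have hvc : Continuous v := by fun_prop
  have hv0 : ∀ r, a ≤ r → 0 ≤ v r := fun r hr => by
    have : 0 < r := ha.trans_le hr
    simp only [hv]; positivity
  have hvlim : Tendsto v atTop (nhds 0) := by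
    have h1 : Tendsto (fun r : ℝ => M ^ 2 / r) atTop (nhds 0) :=
      tendsto_const_nhds.div_atTop tendsto_id
    refine tendsto_of_tendsto_of_tendsto_of_le_of_le' tendsto_const_nhds h1 ?_ ?_
    · filter_upwards [eventually_ge_atTop a] with r hr using hv0 r hr
    · filter_upwards [eventually_ge_atTop a] with r hr
      have hr0 : 0 < r := ha.trans_le hr
      have h2 : f r ^ 2 ≤ (M / r) ^ 2 := pow_le_pow_left₀ (hf0 r hr) (hfM r hr) 2
      calc v r = r * f r ^ 2 := rfl
        _ ≤ r * (M / r) ^ 2 := by gcongr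
        _ = M ^ 2 / r := by field_simp
  -- the maximum
  obtain ⟨r0, hr0, hmax⟩ : ∃ r0, a ≤ r0 ∧ ∀ r, a ≤ r → v r ≤ v r0 := by
    obtain ⟨r1, hr1, hne⟩ := hne
    have hv1 : 0 < v r1 := by
      have : 0 < r1 := ha.trans_le hr1
      simp only [hv]; positivity
    obtain ⟨R, hR⟩ := eventually_atTop.1 (hvlim.eventually (gt_mem_nhds hv1))
    obtain ⟨r0, hr0, hm⟩ := isCompact_Icc.exists_isMaxOn (s := Icc a (max R r1))
      ⟨a, le_rfl, hr1.trans (le_max_right _ _)⟩ hvc.continuousOn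
    refine ⟨r0, hr0.1, fun r hr => ?_⟩
    by_cases hrR : r ≤ max R r1
    · exact hm ⟨hr, hrR⟩
    · exact (hR r ((le_max_left _ _).trans (not_le.1 hrR).le)).le.trans
        (hm ⟨hr1, le_max_right _ _⟩)
  have hr0p : 0 < r0 := ha.trans_le hr0
  have hm0 : 0 < v r0 := by
    obtain ⟨r1, hr1, hne⟩ := hne
    have : 0 < r1 := ha.trans_le hr1
    have : 0 < v r1 := by simp only [hv]; positivity
    exact this.trans_le (hmax r1 hr1)
  set m := v r0 with hm
  have hsc : Continuous fun y : ℝ => Real.sqrt (1 - y ^ 2) := by fun_prop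
  set H : ℝ → ℝ := fun x => ∫ y in (0:ℝ)..x, Real.sqrt (1 - y ^ 2) with hH
  have hHd : ∀ x, HasDerivAt H (Real.sqrt (1 - x ^ 2)) x := fun x =>
    intervalIntegral.integral_hasDerivAt_right (hsc.intervalIntegrable _ _)
      (hsc.stronglyMeasurableAtFilter _ _) hsc.continuousAt
  have hHc : Continuous H := continuous_iff_continuousAt.2 fun r => (hHd r).continuousAt
  have hH1 : H 1 = Real.pi / 4 := H0_one
  have hH0 : H 0 = 0 := by simp [hH]
  have hHle : ∀ x, 0 ≤ x → H x ≤ x := by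
    intro x hx
    have := intervalIntegral.integral_mono_on (μ := volume) hx (hsc.intervalIntegrable 0 x)
      ((continuous_const (y := (1:ℝ))).intervalIntegrable 0 x)
      (fun y _ => Real.sqrt_le_one.2 (by nlinarith [sq_nonneg y]))
    simpa [hH] using this
  have hvd : ∀ r, HasDerivAt v (f r ^ 2 - 2 * r * f r * q r) r := fun r => by
    refine HasDerivAt.congr_deriv (f := v) ((hasDerivAt_id r).mul ((hf r).pow 2)) ?_
    simp only [id]
    push_cast
    ring
  set e : ℝ → ℝ := fun r => q r ^ 2 * r ^ 2 - 1 / (4 * m ^ 2) * (f r ^ 6 * r ^ 2) with he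
  have hec : Continuous e := by fun_prop
  set S : ℝ → ℝ := fun r => Real.sqrt (1 - (v r / m) ^ 2) with hS
  have hSc : Continuous S := by fun_prop
  have hP : ∀ (σ : ℝ) r, HasDerivAt (fun r => σ * (m / 2 * H (v r / m)) - v r / 2)
      (σ * (1 / 2 * S r * (f r ^ 2 - 2 * r * f r * q r)) - (f r ^ 2 - 2 * r * f r * q r) / 2) r := by
    intro σ r
    have h1 := (((hHd (v r / m)).comp r ((hvd r).div_const m)).const_mul (m / 2)).const_mul σ
    refine (h1.sub ((hvd r).div_const 2)).congr_deriv ?_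
    simp only [hS]; field_simp
  have hpt : ∀ σ : ℝ, σ ^ 2 = 1 → ∀ r, a ≤ r →
      σ * (1 / 2 * S r * (f r ^ 2 - 2 * r * f r * q r)) - (f r ^ 2 - 2 * r * f r * q r) / 2 ≤ e r := by
    intro σ hσ r hr
    have hX1 : (v r / m) ^ 2 ≤ 1 := by
      apply pow_le_one₀ (div_nonneg (hv0 r hr) hm0.le)
      exact (div_le_one hm0).2 (hmax r hr)
    have hS2 : S r ^ 2 = 1 - (v r / m) ^ 2 := Real.sq_sqrt (by linarith)
    have hk : 1 / (4 * m ^ 2) * (f r ^ 6 * r ^ 2) = (v r / m) ^ 2 * f r ^ 2 / 4 := by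
      simp only [hv]; field_simp
    have h3 : (v r / m) ^ 2 = 1 - S r ^ 2 := by linarith
    simp only [he]
    rw [hk, h3]
    have := sq_nonneg (q r * r - f r / 2 + σ * (f r * S r) / 2)
    have h4 : (q r * r - f r / 2 + σ * (f r * S r) / 2) ^ 2 = 
      (q r * r - f r / 2) ^ 2 + (q r * r - f r / 2) * (σ * (f r * S r)) + σ ^ 2 * (f r * S r) ^ 2 / 4 := by ring
    rw [hσ] at h4
    nlinarith
  have key : ∀ R, r0 ≤ R → m * Real.pi / 4 - (m / 2 * H (v R / m)) - v R / 2 ≤ ∫ r in a..R, e r := by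
    intro R hR
    have c1 := calib_aux hr0 (e := e) (fun r _ => hP 1 r) (by fun_prop) (by fun_prop)
      (fun r hr => hpt 1 (by norm_num) r hr.1)
    have c2 := calib_aux hR (e := e) (fun r _ => hP (-1) r) (by fun_prop) (by fun_prop)
      (fun r hr => hpt (-1) (by norm_num) r (hr0.trans hr.1))
    have c3 := intervalIntegral.integral_add_adjacent_intervals
      (hec.intervalIntegrable (μ := volume) a r0) (hec.intervalIntegrable r0 R)
    have c4 : m / 2 * H (v a / m) ≤ v a / 2 := by
      calc m / 2 * H (v a / m) ≤ m / 2 * (v a / m) := by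
            gcongr; exact hHle _ (div_nonneg (hv0 a le_rfl) hm0.le)
        _ = v a / 2 := by field_simp
    rw [← hm, div_self hm0.ne', hH1] at c1 c2
    linarith
  have hei : IntegrableOn e (Ioi a) := hE.sub (hJ.const_mul _)
  have lim1 := intervalIntegral_tendsto_integral_Ioi a hei tendsto_id
  have lim2 : Tendsto (fun R => m * Real.pi / 4 - (m / 2 * H (v R / m)) - v R / 2) atTop
      (nhds (m * Real.pi / 4 - (m / 2 * H (0 / m)) - 0 / 2)) :=
    (tendsto_const_nhds.sub (((hHc.tendsto _).comp (hvlim.div_const m)).const_mul _)).sub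
      (hvlim.div_const 2)
  have fin := le_of_tendsto_of_tendsto lim2 lim1
    (by filter_upwards [eventually_ge_atTop r0] with R hR using key R hR)
  rw [zero_div, hH0] at fin
  have hsplit : ∫ r in Ioi a, e r = (∫ r in Ioi a, q r ^ 2 * r ^ 2) -
      1 / (4 * m ^ 2) * ∫ r in Ioi a, f r ^ 6 * r ^ 2 := by
    rw [← integral_const_mul]
    exact integral_sub hE (hJ.const_mul _)
  rw [hsplit] at fin
  have hJ0 : 0 ≤ ∫ r in Ioi a, f r ^ 6 * r ^ 2 := integral_nonneg fun r => by positivity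
  set J := ∫ r in Ioi a, f r ^ 6 * r ^ 2
  set E := ∫ r in Ioi a, q r ^ 2 * r ^ 2
  set A := 1 / (4 * m ^ 2) * J with hA
  set B := m * Real.pi / 8 with hB
  have hA0 : 0 ≤ A := by positivity
  have hB0 : 0 ≤ B := by positivity
  have hAB : 27 / 256 * Real.pi ^ 2 * J = 27 * (A * B ^ 2) := by
    rw [hA, hB]; field_simp; ring
  have hEAB : A + 2 * B ≤ E := by rw [hB]; linarith
  calc _ = 27 * (A * B ^ 2) := hAB
    _ ≤ (A + 2 * B) ^ 3 := by nlinarith [mul_nonneg hA0 (sq_nonneg (A - B)), mul_nonneg hB0 (sq_nonneg (A - B))]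
    _ ≤ E ^ 3 := by gcongr

lemma final_const {E J I : ℝ} (hE : 0 ≤ E) (hJ : 0 ≤ J) (hI : 0 ≤ I)
    (hc : 27 / 256 * Real.pi ^ 2 * J ≤ E ^ 3)
    (hH : E ≤ J ^ (1 / (6:ℝ)) * I ^ (1 / ((6:ℝ) / 5))) :
    1 / 2 * E ≤ 2/3 * (2 * Real.pi ^ 2) ^ (-(2:ℝ)/3) * (4 * Real.pi) ^ ((2:ℝ)/3) * I ^ ((5:ℝ)/3) := by
  have hpi := Real.pi_pos
  have h6 : E ^ 6 ≤ J * I ^ 5 := by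
    calc E ^ 6 ≤ (J ^ (1 / (6:ℝ)) * I ^ (1 / ((6:ℝ) / 5))) ^ 6 := by gcongr
      _ = J * I ^ 5 := by
        rw [mul_pow, ← Real.rpow_mul_natCast hJ, ← Real.rpow_mul_natCast hI]
        norm_num
  have h3 : 27 / 256 * Real.pi ^ 2 * E ^ 3 ≤ I ^ 5 := by
    rcases hE.eq_or_lt with h | h
    · rw [← h]; simp; positivity
    · have : (27 / 256 * Real.pi ^ 2 * E ^ 3) * E ^ 3 ≤ I ^ 5 * E ^ 3 := by
        calc _ = 27 / 256 * Real.pi ^ 2 * E ^ 6 := by ring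
          _ ≤ 27 / 256 * Real.pi ^ 2 * (J * I ^ 5) := by gcongr
          _ = I ^ 5 * (27 / 256 * Real.pi ^ 2 * J) := by ring
          _ ≤ _ := by gcongr
      exact le_of_mul_le_mul_right this (by positivity)
  refine le_of_pow_le_pow_left₀ (n := 3) (by norm_num) (by positivity) ?_
  rw [mul_pow, mul_pow, mul_pow, mul_pow, ← Real.rpow_mul_natCast hI,
    ← Real.rpow_mul_natCast (by positivity), ← Real.rpow_mul_natCast (by positivity)]
  have e1 : (-(2:ℝ)/3) * (3:ℕ) = -((2:ℕ):ℝ) := by norm_num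
  have e2 : ((2:ℝ)/3) * (3:ℕ) = ((2:ℕ):ℝ) := by norm_num
  have e3 : ((5:ℝ)/3) * (3:ℕ) = ((5:ℕ):ℝ) := by norm_num
  rw [e1, e2, e3, Real.rpow_neg (by positivity), Real.rpow_natCast, Real.rpow_natCast,
    Real.rpow_natCast]
  have : (2 / 3 : ℝ) ^ 3 * ((2 * Real.pi ^ 2) ^ 2)⁻¹ * (4 * Real.pi) ^ 2 * I ^ 5
      = 32 / (27 * Real.pi ^ 2) * I ^ 5 := by field_simp; ring
  rw [this]
  calc (1 / 2) ^ 3 * E ^ 3 = 32 / (27 * Real.pi ^ 2) * (27 / 256 * Real.pi ^ 2 * E ^ 3) := by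
        field_simp; ring
    _ ≤ _ := by gcongr

lemma holder_aux {a : ℝ} (ha : 0 < a) {f ρ : ℝ → ℝ} (hf : Continuous f) (hρ : Measurable ρ)
    (hf0 : ∀ r, a ≤ r → 0 ≤ f r) (hnn : ∀ r : ℝ, a ≤ r → 0 ≤ ρ r)
    (hJ : IntegrableOn (fun r => f r ^ 6 * r ^ 2) (Ioi a))
    (h2 : IntegrableOn (fun r => ρ r ^ ((6:ℝ)/5) * r ^ 2) (Ioi a)) :
    ∫ r in Ioi a, f r * (ρ r * r ^ 2) ≤ (∫ r in Ioi a, f r ^ 6 * r ^ 2) ^ (1 / (6:ℝ)) *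
      (∫ r in Ioi a, ρ r ^ ((6:ℝ)/5) * r ^ 2) ^ (1 / ((6:ℝ) / 5)) := by
  have hpq : (6:ℝ).HolderConjugate (6/5) := by
    rw [Real.holderConjugate_iff]; norm_num
  have E1 : ∀ r ∈ Ioi a, (f r * r ^ ((1:ℝ)/3)) ^ (6:ℝ) = f r ^ 6 * r ^ 2 := by
    intro r hr
    have hr0 : 0 ≤ r := (ha.trans hr).le
    rw [Real.mul_rpow (hf0 r (le_of_lt hr)) (by positivity), ← Real.rpow_mul hr0]
    norm_num
  have E2 : ∀ r ∈ Ioi a, (ρ r * r ^ ((5:ℝ)/3)) ^ ((6:ℝ)/5) = ρ r ^ ((6:ℝ)/5) * r ^ 2 := by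
    intro r hr
    have hr0 : 0 ≤ r := (ha.trans hr).le
    rw [Real.mul_rpow (hnn r (le_of_lt hr)) (by positivity), ← Real.rpow_mul hr0]
    norm_num
  have E3 : ∀ r ∈ Ioi a, f r * (ρ r * r ^ 2) = (f r * r ^ ((1:ℝ)/3)) * (ρ r * r ^ ((5:ℝ)/3)) := by
    intro r hr
    have hr0 : 0 < r := (ha.trans hr)
    have : r ^ ((1:ℝ)/3) * r ^ ((5:ℝ)/3) = r ^ 2 := by
      rw [← Real.rpow_add hr0]; norm_num
    rw [← this]; ring
  have N1 : ∀ r ∈ Ioi a, 0 ≤ f r * r ^ ((1:ℝ)/3) := fun r hr =>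
    mul_nonneg (hf0 r (le_of_lt hr)) (Real.rpow_nonneg (ha.trans hr).le _)
  have N2 : ∀ r ∈ Ioi a, 0 ≤ ρ r * r ^ ((5:ℝ)/3) := fun r hr =>
    mul_nonneg (hnn r (le_of_lt hr)) (Real.rpow_nonneg (ha.trans hr).le _)
  have M1 : Measurable fun r => f r * r ^ ((1:ℝ)/3) := by
    have := hf.measurable; fun_prop
  have M2 : Measurable fun r => ρ r * r ^ ((5:ℝ)/3) := by fun_prop
  have L1 : MemLp (fun r => f r * r ^ ((1:ℝ)/3)) (ENNReal.ofReal 6) (volume.restrict (Ioi a)) := by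
    rw [← integrable_norm_rpow_iff M1.aestronglyMeasurable (by simp) (by simp)]
    refine (integrableOn_congr_fun ?_ measurableSet_Ioi).2 hJ
    intro r hr
    simp only [Real.norm_of_nonneg (N1 r hr)]
    rw [← E1 r hr]; simp
  have L2 : MemLp (fun r => ρ r * r ^ ((5:ℝ)/3)) (ENNReal.ofReal (6/5)) (volume.restrict (Ioi a)) := by
    rw [← integrable_norm_rpow_iff M2.aestronglyMeasurable (by norm_num) (by simp)]
    refine (integrableOn_congr_fun ?_ measurableSet_Ioi).2 h2
    intro r hr
    simp only [Real.norm_of_nonneg (N2 r hr)]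
    rw [← E2 r hr, ENNReal.toReal_ofReal (by norm_num)]
  have := integral_mul_le_Lp_mul_Lq_of_nonneg hpq
    ((ae_restrict_iff' measurableSet_Ioi).2 (Eventually.of_forall N1))
    ((ae_restrict_iff' measurableSet_Ioi).2 (Eventually.of_forall N2)) L1 L2
  rwa [← setIntegral_congr_fun measurableSet_Ioi E3, setIntegral_congr_fun measurableSet_Ioi E1,
    setIntegral_congr_fun measurableSet_Ioi E2] at this

lemma inv_sq_int {a : ℝ} (ha : 0 < a) : IntegrableOn (fun r : ℝ => 1 / r ^ 2) (Ioi a) ∧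
    ∫ r in Ioi a, 1 / r ^ 2 = 1 / a := by
  have h : ∀ r ∈ Ioi a, r ^ (-2:ℝ) = 1 / r ^ 2 := by
    intro r hr
    rw [Real.rpow_neg (ha.trans hr).le]
    norm_num
  refine ⟨(integrableOn_congr_fun h measurableSet_Ioi).1
    (integrableOn_Ioi_rpow_of_lt (by norm_num) ha), ?_⟩
  rw [← setIntegral_congr_fun measurableSet_Ioi h, integral_Ioi_rpow_of_lt (by norm_num) ha]
  norm_num
  rw [Real.rpow_neg ha.le]; simp

theorem radial_potential_energy_estimate
    (a : ℝ) (ha : 0 < a) (ρ : ℝ → ℝ)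
    (hmeas : Measurable ρ)
    (hnn : ∀ r : ℝ, a ≤ r → 0 ≤ ρ r)
    (h1 : IntegrableOn (fun r => ρ r * r ^ 2) (Ioi a))
    (h2 : IntegrableOn (fun r => ρ r ^ ((6:ℝ)/5) * r ^ 2) (Ioi a))
    (G : ℝ → ℝ)
    (hG : ∀ r : ℝ, G r = ∫ z in a..r, ρ z * z ^ 2) :
    (∫ r in Ioi a, G r * ρ r * r) = 1/2 * ∫ r in Ioi a, G r ^ 2 / r ^ 2 ∧
    (∫ r in Ioi a, G r * ρ r * r) ≤
      2/3 * (2 * Real.pi ^ 2) ^ (-(2:ℝ)/3) * (4 * Real.pi) ^ ((2:ℝ)/3) *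
        (∫ r in Ioi a, ρ r ^ ((6:ℝ)/5) * r ^ 2) ^ ((5:ℝ)/3) := by
  set w : ℝ → ℝ := fun r => ρ r * r ^ 2 with hw
  have hw0 : ∀ r, a ≤ r → 0 ≤ w r := fun r hr => mul_nonneg (hnn r hr) (by positivity)
  have hwi : ∀ R, a ≤ R → IntervalIntegrable w volume a R := fun R hR =>
    (intervalIntegrable_iff_integrableOn_Ioc_of_le hR).2 (h1.mono_set Ioc_subset_Ioi_self)
  set M := ∫ r in Ioi a, w r with hM
  have hGa : G a = 0 := by simp [hG]
  have hG0 : ∀ r, a ≤ r → 0 ≤ G r := fun r hr => by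
    rw [hG]; exact intervalIntegral.integral_nonneg hr fun z hz => hw0 z hz.1
  have hGM : ∀ r, a ≤ r → G r ≤ M := fun r hr => by
    rw [hG, intervalIntegral.integral_of_le hr]
    refine setIntegral_mono_set h1 ?_ (LE.le.eventuallyLE Ioc_subset_Ioi_self)
    exact (ae_restrict_iff' measurableSet_Ioi).2 (Eventually.of_forall fun z hz => hw0 z (le_of_lt hz))
  have hM0 : 0 ≤ M := (hG0 a le_rfl).trans (hGM a le_rfl)
  have hGeq : ∀ r, G r = G a + ∫ z in a..r, w z := fun r => by rw [hGa, zero_add, hG]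
  have hGc' : ∀ R, a ≤ R → ContinuousOn G (Icc a R) := fun R hR => by
    have := intervalIntegral.continuousOn_primitive_interval' (hwi R hR) left_mem_uIcc
    rw [uIcc_of_le hR] at this
    exact this.congr fun r _ => hG r
  have hGc : ContinuousOn G (Ici a) := by
    intro r hr
    have hr' : a ≤ r := hr
    refine ((hGc' (r + 1) (by linarith)) r ⟨hr, by linarith⟩).mono_of_mem_nhdsWithin ?_
    rw [mem_nhdsWithin]
    exact ⟨Iio (r + 1), isOpen_Iio, by simp, fun x hx => ⟨hx.2, le_of_lt hx.1⟩⟩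
  set q : ℝ → ℝ := fun s => G (max a s) / (max a s) ^ 2 with hq
  have hmaxp : ∀ s, 0 < max a s := fun s => ha.trans_le (le_max_left _ _)
  have hqc : Continuous q := by
    refine Continuous.div (hGc.comp_continuous (by fun_prop) fun s => le_max_left a s) (by fun_prop)
      fun s => (pow_pos (hmaxp s) 2).ne'
  have hqe : ∀ s, a ≤ s → q s = G s / s ^ 2 := fun s hs => by simp only [hq, max_eq_right hs]
  have hq0 : ∀ s, a ≤ s → 0 ≤ q s := fun s hs => by
    rw [hqe s hs]; exact div_nonneg (hG0 s hs) (by positivity)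
  have hqM : ∀ s, a ≤ s → q s ≤ M * (1 / s ^ 2) := fun s hs => by
    rw [hqe s hs, mul_one_div]; have := hGM s hs; gcongr
  have hqi : IntegrableOn q (Ioi a) := by
    refine ((inv_sq_int ha).1.const_mul M).mono' hqc.aestronglyMeasurable ?_
    refine (ae_restrict_iff' measurableSet_Ioi).2 (Eventually.of_forall fun s hs => ?_)
    rw [Real.norm_of_nonneg (hq0 s (le_of_lt hs))]
    exact hqM s (le_of_lt hs)
  set f : ℝ → ℝ := fun r => (∫ s in Ioi a, q s) - ∫ s in a..r, q s with hf
  have hfd : ∀ r, HasDerivAt f (-q r) r := fun r =>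
    (intervalIntegral.integral_hasDerivAt_right (hqc.intervalIntegrable _ _)
      (hqc.stronglyMeasurableAtFilter _ _) hqc.continuousAt).const_sub _
  have hfc : Continuous f := continuous_iff_continuousAt.2 fun r => (hfd r).continuousAt
  have hfeq : ∀ r, a ≤ r → f r = ∫ s in Ioi r, q s := fun r hr => by
    have := intervalIntegral.integral_interval_add_Ioi hqi
      (hqi.mono_set (Ioi_subset_Ioi hr))
    simp only [hf]; linarith
  have hf0 : ∀ r, a ≤ r → 0 ≤ f r := fun r hr => by
    rw [hfeq r hr]
    exact setIntegral_nonneg measurableSet_Ioi fun s hs => hq0 s (hr.trans (le_of_lt hs))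
  have hfM : ∀ r, a ≤ r → f r ≤ M / r := fun r hr => by
    have hr0 := ha.trans_le hr
    rw [hfeq r hr, ← mul_one_div, ← (inv_sq_int hr0).2, ← integral_const_mul]
    exact setIntegral_mono_on (hqi.mono_set (Ioi_subset_Ioi hr)) ((inv_sq_int hr0).1.const_mul M)
      measurableSet_Ioi fun s hs => hqM s (hr.trans (le_of_lt hs))
  have hflim : Tendsto f atTop (nhds 0) := by
    have h1 : Tendsto (fun r : ℝ => M / r) atTop (nhds 0) :=
      tendsto_const_nhds.div_atTop tendsto_id
    refine tendsto_of_tendsto_of_tendsto_of_le_of_le' tendsto_const_nhds h1 ?_ ?_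
    · filter_upwards [eventually_ge_atTop a] with r hr using hf0 r hr
    · filter_upwards [eventually_ge_atTop a] with r hr using hfM r hr
  have hGmeas : AEStronglyMeasurable G (volume.restrict (Ioi a)) :=
    (hGc.mono Ioi_subset_Ici_self).aestronglyMeasurable measurableSet_Ioi
  -- integrability of the quantities
  have hEq : ∀ r ∈ Ioi a, q r ^ 2 * r ^ 2 = G r ^ 2 / r ^ 2 := fun r hr => by
    have hr0 : 0 < r := ha.trans hr
    rw [hqe r (le_of_lt hr)]; field_simp
  have hEi : IntegrableOn (fun r => q r ^ 2 * r ^ 2) (Ioi a) := by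
    refine ((inv_sq_int ha).1.const_mul (M ^ 2)).mono' (by fun_prop) ?_
    refine (ae_restrict_iff' measurableSet_Ioi).2 (Eventually.of_forall fun r hr => ?_)
    have hr' : a ≤ r := le_of_lt hr
    rw [Real.norm_of_nonneg (by positivity), hEq r hr, mul_one_div]
    have := hGM r hr'
    have := hG0 r hr'
    gcongr
  have hEi' : IntegrableOn (fun r => G r ^ 2 / r ^ 2) (Ioi a) :=
    (integrableOn_congr_fun hEq measurableSet_Ioi).1 hEi
  have hJi : IntegrableOn (fun r => f r ^ 6 * r ^ 2) (Ioi a) := by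
    refine ((inv_sq_int ha).1.const_mul (M ^ 6 / a ^ 2)).mono' (by fun_prop) ?_
    refine (ae_restrict_iff' measurableSet_Ioi).2 (Eventually.of_forall fun r hr => ?_)
    have hr' : a ≤ r := le_of_lt hr
    have hr0 : 0 < r := ha.trans hr
    rw [Real.norm_of_nonneg (by positivity)]
    calc f r ^ 6 * r ^ 2 ≤ (M / r) ^ 6 * r ^ 2 := by
          have := hfM r hr'
          have := hf0 r hr'
          gcongr
      _ = M ^ 6 / r ^ 2 * (1 / r ^ 2) := by field_simp
      _ ≤ M ^ 6 / a ^ 2 * (1 / r ^ 2) := by gcongr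
  have hAi : IntegrableOn (fun r => G r * ρ r * r) (Ioi a) := by
    refine (h1.const_mul (M / a)).mono' ?_ ?_
    · exact (hGmeas.mul hmeas.aestronglyMeasurable).mul measurable_id.aestronglyMeasurable
    refine (ae_restrict_iff' measurableSet_Ioi).2 (Eventually.of_forall fun r hr => ?_)
    have hr' : a ≤ r := le_of_lt hr
    have hr0 : 0 < r := ha.trans hr
    have g0 := hG0 r hr'
    have p0 := hnn r hr'
    rw [Real.norm_of_nonneg (by positivity)]
    calc G r * ρ r * r ≤ M * ρ r * r := by have := hGM r hr'; gcongr
      _ = M / a * (ρ r * (r * a)) := by field_simp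
      _ ≤ M / a * (ρ r * (r * r)) := by gcongr
      _ = M / a * w r := by simp only [hw]; ring
  have hBi : IntegrableOn (fun r => f r * w r) (Ioi a) := by
    refine (h1.const_mul (M / a)).mono' ?_ ?_
    · exact hfc.aestronglyMeasurable.mul h1.aestronglyMeasurable
    refine (ae_restrict_iff' measurableSet_Ioi).2 (Eventually.of_forall fun r hr => ?_)
    have hr' : a ≤ r := le_of_lt hr
    have f0 := hf0 r hr'
    have w0 := hw0 r hr'
    rw [Real.norm_of_nonneg (by positivity)]
    have : f r ≤ M / a := (hfM r hr').trans (by gcongr)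
    show f r * w r ≤ M / a * w r
    gcongr
  -- first identity
  have id1 : (∫ r in Ioi a, (2 * (G r * ρ r * r) - G r ^ 2 / r ^ 2)) = 0 := by
    have lim1 := intervalIntegral_tendsto_integral_Ioi a ((hAi.const_mul 2).sub hEi') tendsto_id
    refine tendsto_nhds_unique lim1 ?_
    have lim2 : Tendsto (fun R : ℝ => G R ^ 2 / R) atTop (nhds 0) := by
      have h1 : Tendsto (fun r : ℝ => M ^ 2 / r) atTop (nhds 0) :=
        tendsto_const_nhds.div_atTop tendsto_id
      refine tendsto_of_tendsto_of_tendsto_of_le_of_le' tendsto_const_nhds h1 ?_ ?_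
      · filter_upwards [eventually_ge_atTop a] with r hr
        have := ha.trans_le hr
        positivity
      · filter_upwards [eventually_ge_atTop a] with r hr
        have := ha.trans_le hr
        have := hG0 r hr
        have := hGM r hr
        gcongr
    refine lim2.congr' ?_
    filter_upwards [eventually_ge_atTop a] with R hR
    have hc1 : ∀ x, a ≤ x → ContinuousOn (fun t : ℝ => 1 / t) (Icc a x) := fun x hx =>
      continuousOn_const.div continuousOn_id fun t ht => (ha.trans_le ht.1).ne'
    have hc2 : ∀ x, a ≤ x → ContinuousOn (fun t : ℝ => -(1 / t ^ 2)) (Icc a x) := fun x hx =>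
      (continuousOn_const.div (continuousOn_id.pow 2)
        fun t ht => (pow_pos (ha.trans_le ht.1) 2).ne').neg
    have hii : ∀ x, a ≤ x → IntervalIntegrable (fun t : ℝ => -(1 / t ^ 2)) volume a x :=
      fun x hx => by
        have := hc2 x hx
        rw [← uIcc_of_le hx] at this
        exact this.intervalIntegrable
    have hK : ∀ x, a ≤ x → (fun t : ℝ => 1 / t) x = (fun t : ℝ => 1 / t) a +
        ∫ t in a..x, -(1 / t ^ 2) := by
      intro x hx
      rw [intervalIntegral.integral_eq_sub_of_hasDerivAt (f := fun t : ℝ => 1 / t) ?_ (hii x hx)]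
      · ring
      · intro t ht
        rw [uIcc_of_le hx] at ht
        have := hasDerivAt_inv (ha.trans_le ht.1).ne'
        simpa [one_div] using this
    have s1 : ∀ x, a ≤ x → ∫ t in a..x, (w t * (1 / t) + G t * -(1 / t ^ 2)) =
        G x * (1 / x) - G a * (1 / a) := fun x hx =>
      byparts_aux hx (K := fun t => 1 / t) (hwi x hx) (hii x hx) (fun y _ => hGeq y)
        (fun y hy => hK y hy.1)
    have hDi : IntervalIntegrable (fun t => w t * (1 / t) + G t * -(1 / t ^ 2)) volume a R := by
      refine ((hwi R hR).mul_continuousOn ?_).add (((hii R hR)).continuousOn_mul ?_)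
      · rw [uIcc_of_le hR]; exact hc1 R hR
      · rw [uIcc_of_le hR]; exact hGc' R hR
    have s2 := byparts_aux hR (F := fun t => G t * (1 / t)) (K := G) hDi (hwi R hR)
      (fun x hx => by simp only [s1 x hx.1]; ring) (fun y _ => hGeq y)
    simp only [hGa] at s2
    have : G R ^ 2 / R = G R * (1 / R) * G R - 0 * (1 / a) * 0 := by ring
    rw [this, ← s2]
    apply intervalIntegral.integral_congr
    intro t ht
    rw [uIcc_of_le hR] at ht
    have ht0 := ha.trans_le ht.1
    simp only [hw, Pi.sub_apply]
    field_simp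
    ring
  have id2 : (∫ r in Ioi a, (f r * w r - q r ^ 2 * r ^ 2)) = 0 := by
    have lim1 := intervalIntegral_tendsto_integral_Ioi a (hBi.sub hEi) tendsto_id
    refine tendsto_nhds_unique lim1 ?_
    have lim2 : Tendsto (fun R : ℝ => f R * G R) atTop (nhds 0) := by
      have h1 : Tendsto (fun r : ℝ => f r * M) atTop (nhds 0) := by
        simpa using hflim.mul_const M
      refine tendsto_of_tendsto_of_tendsto_of_le_of_le' tendsto_const_nhds h1 ?_ ?_
      · filter_upwards [eventually_ge_atTop a] with r hr using mul_nonneg (hf0 r hr) (hG0 r hr)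
      · filter_upwards [eventually_ge_atTop a] with r hr
          using mul_le_mul_of_nonneg_left (hGM r hr) (hf0 r hr)
    refine lim2.congr' ?_
    filter_upwards [eventually_ge_atTop a] with R hR
    have s2 := byparts_aux hR (F := f) (K := G) (f := fun t => -q t)
      (hqc.neg.intervalIntegrable _ _) (hwi R hR)
      (fun x hx => by simp [hf]; ring) (fun y _ => hGeq y)
    rw [hGa, mul_zero, sub_zero] at s2
    rw [← s2]
    apply intervalIntegral.integral_congr
    intro t ht
    rw [uIcc_of_le hR] at ht
    have ht0 := ha.trans_le ht.1
    simp only [Pi.sub_apply, hqe t ht.1]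
    field_simp
    ring
  rw [integral_sub (hAi.const_mul 2) hEi', integral_const_mul] at id1
  rw [integral_sub hBi hEi] at id2
  have first : (∫ r in Ioi a, G r * ρ r * r) = 1/2 * ∫ r in Ioi a, G r ^ 2 / r ^ 2 := by linarith
  refine ⟨first, ?_⟩
  rw [first, ← setIntegral_congr_fun measurableSet_Ioi hEq]
  have hI0 : 0 ≤ ∫ r in Ioi a, ρ r ^ ((6:ℝ)/5) * r ^ 2 :=
    setIntegral_nonneg measurableSet_Ioi fun r hr =>
      mul_nonneg (Real.rpow_nonneg (hnn r (le_of_lt hr)) _) (by positivity)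
  by_cases hne : ∃ r, a ≤ r ∧ f r ≠ 0
  · refine final_const (integral_nonneg fun r => by positivity)
      (integral_nonneg fun r => by positivity) hI0
      (calib ha hqc hfd hf0 hfM hne hEi hJi) ?_
    have := holder_aux ha hfc hmeas hf0 hnn hJi h2
    have e : ∫ r in Ioi a, f r * (ρ r * r ^ 2) = ∫ r in Ioi a, f r * w r := rfl
    rw [e] at this
    linarith
  · push Not at hne
    have : ∫ r in Ioi a, f r * w r = 0 := by
      rw [setIntegral_congr_fun (g := fun _ => 0) measurableSet_Ioi]
      · simp
      · intro r hr
        simp [hne r (le_of_lt hr)]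
    have hE0 : ∫ r in Ioi a, q r ^ 2 * r ^ 2 = 0 := by linarith
    rw [hE0, mul_zero]
    have := Real.pi_pos
    positivity
end
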